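/- Let u ∈ C¹(Ω) be a weak solution of −div(A(x)∇u) = u in Ω (i.e. ∫_Ω ⟨A(x)∇u, ∇φ⟩ dx = ∫_Ω u φ dx for every φ ∈ C_c^∞(Ω)) with u ≢ 0 in Ω. Then for every δ ∈ (0,1) there exist R̄ > 1 (depending on u, n, λ, α, C, δ) and C₁ > 0 (depending on n, λ, α, C, δ) such that for all R ≥ R̄ one has ∫_{B_{2R} \ B_R} u² dx ≥ C₁ R^{1−δ}, where B_ρ = {x ∈ ℝⁿ : |x| < ρ}. -/

import Mathlib

open MeasureTheory Metric Filter

noncomputable section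

abbrev En (n : ℕ) := EuclideanSpace ℝ (Fin n)

/-- The exterior domain `Ω = {x ∈ ℝⁿ : |x| > 1}`. -/
def OmegaExt (n : ℕ) : Set (En n) := {x | 1 < ‖x‖}

/-- The quadratic/bilinear form `⟨M ξ, η⟩`. -/
def quadForm {n : ℕ} (M : Matrix (Fin n) (Fin n) ℝ) (ξ η : En n) : ℝ :=
  ∑ i, M.mulVec (fun j => ξ j) i * η i

/-- The conformal factor `μ(x) = ⟨A(x)∇r, ∇r⟩ = ⟨A(x)x, x⟩ / |x|²`. -/
def muA {n : ℕ} (A : En n → Matrix (Fin n) (Fin n) ℝ) (x : En n) : ℝ :=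
  quadForm (A x) x x / ‖x‖ ^ 2

/-- The vector field `Z(x) = r(x) A(x)∇r(x) / μ(x) = A(x)x / μ(x)`. -/
def Zvec {n : ℕ} (A : En n → Matrix (Fin n) (Fin n) ℝ) (x : En n) : En n :=
  (muA A x)⁻¹ • (WithLp.toLp 2 ((A x).mulVec (fun j => x j)) : En n)

/-- The derivative of `f` along `Z`: `Zf = ⟨Z, ∇f⟩`. -/
def Zd {n : ℕ} (A : En n → Matrix (Fin n) (Fin n) ℝ) (f : En n → ℝ) (x : En n) : ℝ :=
  ∑ i, Zvec A x i * gradient f x i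

/-- Surface integral over the sphere `{|x| = ρ}` w.r.t. the `(n-1)`-dimensional
Hausdorff measure. -/
def sphInt (n : ℕ) (ρ : ℝ) (f : En n → ℝ) : ℝ :=
  ∫ x in sphere (0 : En n) ρ, f x ∂(μH[(n : ℝ) - 1])

/-- Structural hypotheses on `A`: symmetry, `C¹` entries on `Ω`, uniform ellipticity
`λ|ξ|² ≤ ⟨A(x)ξ,ξ⟩ ≤ λ⁻¹|ξ|²`, and the decay `|x||∇B(x)| + |B(x)| ≤ C|x|^{-α}`
where `B = A - Iₙ` (entrywise). -/
def EllipticDecay {n : ℕ} (A : En n → Matrix (Fin n) (Fin n) ℝ) (lam α C : ℝ) : Prop :=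
  (∀ x ∈ OmegaExt n, (A x).IsSymm) ∧
  (∀ i j, ContDiffOn ℝ 1 (fun x => A x i j) (OmegaExt n)) ∧
  (∀ x ∈ OmegaExt n, ∀ ξ : En n,
      lam * ‖ξ‖ ^ 2 ≤ quadForm (A x) ξ ξ ∧ quadForm (A x) ξ ξ ≤ lam⁻¹ * ‖ξ‖ ^ 2) ∧
  (∀ x ∈ OmegaExt n, ∀ i j,
      ‖x‖ * ‖gradient (fun y => (A y - 1) i j) x‖ + |(A x - 1) i j| ≤ C * ‖x‖ ^ (-α))

/-- `u ∈ C¹(Ω)` is a weak solution of `-div(A∇u) = u` in `Ω`, i.e.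
`∫_Ω ⟨A∇u, ∇φ⟩ = ∫_Ω u φ` for every test function `φ ∈ C_c^∞(Ω)`. -/
def WeakSol {n : ℕ} (A : En n → Matrix (Fin n) (Fin n) ℝ) (u : En n → ℝ) : Prop :=
  ContDiffOn ℝ 1 u (OmegaExt n) ∧
  ∀ φ : En n → ℝ, ContDiff ℝ (⊤ : ℕ∞) φ → HasCompactSupport φ → tsupport φ ⊆ OmegaExt n →
    (∫ x in OmegaExt n, ∑ i, (A x).mulVec (fun j => gradient u x j) i * gradient φ x i) =
    ∫ x in OmegaExt n, u x * φ x

/-!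
Let `W (log |x|)` be a radial weight. A weighted Rellich–Pohozaev identity for the conjugated
operator gives a Carleman estimate for `div (A∇u) + u` in which `W` may grow arbitrarily fast on
any bounded range of `log |x|`, provided that it eventually behaves like `|x| ^ (δ - 1)`. Cut `u`
off near the unit sphere and on `R < |x| < 2R`, and normalise `W ≤ 1` near the sphere. The
commutator terms are then at most a fixed constant from the inner cutoff plus a multiple of
`R ^ (δ - 1) ∫ (|∇u|² + u²)` over the outer annulus. As `u` does not vanish identically, a weight
that is large enough where `u` lives beats the inner constant, so the outer term is bounded below;
there Caccioppoli's inequality bounds `|∇u|²` by `u²`. The Carleman and Caccioppoli inequalities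
are proved for `C²` functions and passed to the `C¹` solution `u` by mollification, with
Friedrichs' lemma controlling the commutator with `A`.
-/

namespace ExteriorElliptic

open scoped Topology Gradient RealInnerProductSpace ContDiff

section Divergence

variable {E : Type*} [NormedAddCommGroup E] [InnerProductSpace ℝ E]

/-- The divergence of a vector field, as the trace of its derivative. -/
def divergence (V : E → E) (x : E) : ℝ :=
  LinearMap.trace ℝ E (fderiv ℝ V x)

lemma divergence_congr {V U : E → E} {x : E} (h : V =ᶠ[𝓝 x] U) :
    divergence V x = divergence U x := by
  rw [divergence, divergence, h.fderiv_eq]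

lemma divergence_add {V U : E → E} {x : E} (hV : DifferentiableAt ℝ V x)
    (hU : DifferentiableAt ℝ U x) :
    divergence (fun y => V y + U y) x = divergence V x + divergence U x := by
  simp only [divergence, fderiv_fun_add hV hU, ContinuousLinearMap.toLinearMap_add, map_add]

lemma divergence_sub {V U : E → E} {x : E} (hV : DifferentiableAt ℝ V x)
    (hU : DifferentiableAt ℝ U x) :
    divergence (fun y => V y - U y) x = divergence V x - divergence U x := by
  simp only [divergence, fderiv_fun_sub hV hU, ContinuousLinearMap.toLinearMap_sub, map_sub]

lemma divergence_clm_apply {A : E → E →L[ℝ] E} {V : E → E} {x : E} (hA : DifferentiableAt ℝ A x)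
    (hV : DifferentiableAt ℝ V x) : divergence (fun y => A y (V y)) x =
      divergence (fun y => A y (V x)) x + divergence (fun y => A x (V y)) x := by
  simp only [divergence, fderiv_clm_apply hA hV, fderiv_clm_apply hA (differentiableAt_const _),
    fderiv_clm_apply (differentiableAt_const _) hV]
  simp [add_comm]

variable [FiniteDimensional ℝ E]

lemma divergence_smul {f : E → ℝ} {V : E → E} {x : E} (hf : DifferentiableAt ℝ f x)
    (hV : DifferentiableAt ℝ V x) :
    divergence (fun y => f y • V y) x = fderiv ℝ f x (V x) + f x * divergence V x := by
  simp only [divergence, fderiv_fun_smul hf hV, ContinuousLinearMap.toLinearMap_add,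
    ContinuousLinearMap.toLinearMap_smul, map_add, map_smul, smul_eq_mul]
  rw [add_comm]
  congr 1
  exact LinearMap.trace_smulRight _ _

lemma abs_trace_le (L : E →L[ℝ] E) :
    |LinearMap.trace ℝ E L| ≤ Module.finrank ℝ E * ‖L‖ := by
  set b := stdOrthonormalBasis ℝ E
  rw [LinearMap.trace_eq_sum_inner _ b]
  calc |∑ i, ⟪b i, L (b i)⟫| ≤ ∑ i, |⟪b i, L (b i)⟫| := Finset.abs_sum_le_sum_abs _ _
    _ ≤ ∑ _i : Fin (Module.finrank ℝ E), ‖L‖ := Finset.sum_le_sum fun i _ => by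
        simpa [b.orthonormal.1 i] using (abs_real_inner_le_norm (b i) (L (b i))).trans
          (mul_le_mul_of_nonneg_left (L.le_opNorm (b i)) (norm_nonneg _))
    _ = Module.finrank ℝ E * ‖L‖ := by simp

lemma abs_divergence_sub_finrank_le {V : E → E} {x : E} :
    |divergence V x - Module.finrank ℝ E| ≤
      Module.finrank ℝ E * ‖fderiv ℝ V x - ContinuousLinearMap.id ℝ E‖ := by
  simpa [divergence] using abs_trace_le (fderiv ℝ V x - ContinuousLinearMap.id ℝ E)

lemma continuous_trace : Continuous fun L : E →L[ℝ] E => LinearMap.trace ℝ E L :=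
  ((LinearMap.trace ℝ E).comp
    (ContinuousLinearMap.coeLM ℝ : (E →L[ℝ] E) →ₗ[ℝ] E →ₗ[ℝ] E)).continuous_of_finiteDimensional

lemma continuousOn_divergence {V : E → E} {s : Set E} (hs : IsOpen s) (hV : ContDiffOn ℝ 1 V s) :
    ContinuousOn (divergence V) s :=
  continuous_trace.comp_continuousOn (hV.continuousOn_fderiv_of_isOpen hs le_rfl)

variable [MeasurableSpace E] [BorelSpace E]

lemma integral_fderiv_apply_eq_zero {f : E → ℝ} (hf : ContDiff ℝ 1 f) (hc : HasCompactSupport f)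
    (v : E) : ∫ x, fderiv ℝ f x v = 0 := by
  have hi : Integrable fun x => fderiv ℝ f x v :=
    ((hf.continuous_fderiv one_ne_zero).clm_apply
      continuous_const).integrable_of_hasCompactSupport (hc.fderiv_apply ℝ v)
  simpa using integral_mul_fderiv_eq_neg_fderiv_mul_of_integrable (μ := volume)
    (f := fun _ : E => (1 : ℝ)) (g := f) (v := v) (by simp) (by simpa using hi)
    (by simpa using hf.continuous.integrable_of_hasCompactSupport hc)
    (fun x _ => differentiableAt_const _) fun x _ => hf.differentiable one_ne_zero x

lemma integral_divergence_eq_zero {V : E → E} (hV : ContDiff ℝ 1 V) (hc : HasCompactSupport V) :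
    ∫ x, divergence V x = 0 := by
  set b := stdOrthonormalBasis ℝ E
  have hVi (i) : ContDiff ℝ 1 fun y => ⟪b i, V y⟫ := contDiff_const.inner ℝ hV
  have hci (i) : HasCompactSupport fun y => ⟪b i, V y⟫ :=
    hc.comp_left (g := fun v : E => ⟪b i, v⟫) (inner_zero_right _)
  have hdiv (x) : divergence V x = ∑ i, fderiv ℝ (fun y => ⟪b i, V y⟫) x (b i) := by
    rw [divergence, LinearMap.trace_eq_sum_inner _ b]
    refine Finset.sum_congr rfl fun i _ => ?_
    rw [fderiv_inner_apply ℝ (differentiableAt_const _) (hV.differentiable one_ne_zero x)]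
    simp
  simp only [hdiv]
  rw [integral_finsetSum _ fun i _ => ((hVi i).continuous_fderiv one_ne_zero |>.clm_apply
    continuous_const).integrable_of_hasCompactSupport ((hci i).fderiv_apply ℝ (b i))]
  exact Finset.sum_eq_zero fun i _ => integral_fderiv_apply_eq_zero (hVi i) (hci i) _

end Divergence

section Gradient

variable {E : Type*} [NormedAddCommGroup E] [InnerProductSpace ℝ E] [CompleteSpace E]

lemma contDiffAt_gradient {f : E → ℝ} {x : E} {k m : WithTop ℕ∞} (hf : ContDiffAt ℝ k f x)
    (hm : m + 1 ≤ k) : ContDiffAt ℝ m (∇ f) x :=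
  (InnerProductSpace.toDual ℝ E).symm.contDiff.contDiffAt.comp x (hf.fderiv_right hm)

lemma contDiffOn_gradient {f : E → ℝ} {k m : WithTop ℕ∞} {s : Set E} (hs : IsOpen s)
    (hf : ContDiffOn ℝ k f s) (hm : m + 1 ≤ k) : ContDiffOn ℝ m (∇ f) s := fun _ hx =>
  (contDiffAt_gradient (hf.contDiffAt (hs.mem_nhds hx)) hm).contDiffWithinAt

lemma contDiff_gradient {f : E → ℝ} {k m : WithTop ℕ∞} (hf : ContDiff ℝ k f)
    (hm : m + 1 ≤ k) : ContDiff ℝ m (∇ f) :=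
  contDiff_iff_contDiffAt.2 fun _ => contDiffAt_gradient hf.contDiffAt hm

lemma differentiableAt_gradient {f : E → ℝ} {x : E} (hf : ContDiffAt ℝ 2 f x) :
    DifferentiableAt ℝ (∇ f) x :=
  (contDiffAt_gradient hf (m := 1) (by norm_num)).differentiableAt one_ne_zero

lemma norm_gradient (f : E → ℝ) (x : E) : ‖∇ f x‖ = ‖fderiv ℝ f x‖ :=
  (InnerProductSpace.toDual ℝ E).symm.norm_map _

lemma gradient_mul {f g : E → ℝ} {x : E} (hf : DifferentiableAt ℝ f x)
    (hg : DifferentiableAt ℝ g x) :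
    ∇ (fun y => f y * g y) x = f x • ∇ g x + g x • ∇ f x := by
  refine ext_inner_right ℝ fun v => ?_
  simp [inner_gradient_left, fderiv_fun_mul hf hg, inner_add_left, real_inner_smul_left]

lemma inner_fderiv_gradient {f : E → ℝ} {x : E} (hf : ContDiffAt ℝ 2 f x) (ξ η : E) :
    ⟪fderiv ℝ (∇ f) x ξ, η⟫ = fderiv ℝ (fderiv ℝ f) x ξ η := by
  have hd : DifferentiableAt ℝ (fderiv ℝ f) x :=
    (hf.fderiv_right (m := 1) (by norm_num)).differentiableAt one_ne_zero
  have h : (fun y => fderiv ℝ f y η) = fun y => ⟪∇ f y, η⟫ := funext fun y => by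
    rw [inner_gradient_left]
  have key := congrArg (fun g => fderiv ℝ g x ξ) h
  rw [fderiv_clm_apply hd (differentiableAt_const η),
    fderiv_inner_apply ℝ (differentiableAt_gradient hf) (differentiableAt_const η)] at key
  simpa using key.symm

lemma inner_fderiv_gradient_comm {f : E → ℝ} {x : E} (hf : ContDiffAt ℝ 2 f x) (ξ η : E) :
    ⟪fderiv ℝ (∇ f) x ξ, η⟫ = ⟪ξ, fderiv ℝ (∇ f) x η⟫ := by
  rw [inner_fderiv_gradient hf, real_inner_comm, inner_fderiv_gradient hf]
  exact (hf.isSymmSndFDerivAt (by simp)).eq ξ η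

end Gradient

section EllipticOperator

variable {E : Type*} [NormedAddCommGroup E] [InnerProductSpace ℝ E] [FiniteDimensional ℝ E]
  {A : E → E →L[ℝ] E} {x : E}

lemma divergence_apply_gradient_mul {f g : E → ℝ} (hA : DifferentiableAt ℝ A x)
    (hsym : ∀ ξ η, ⟪A x ξ, η⟫ = ⟪ξ, A x η⟫)
    (hf : ContDiffAt ℝ 2 f x) (hg : ContDiffAt ℝ 2 g x) :
    divergence (fun y => A y (∇ (fun z => f z * g z) y)) x =
      f x * divergence (fun y => A y (∇ g y)) x + 2 * ⟪A x (∇ f x), ∇ g x⟫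
        + g x * divergence (fun y => A y (∇ f y)) x := by
  have hdf : ∀ᶠ y in 𝓝 x, DifferentiableAt ℝ f y :=
    (hf.eventually (by simp)).mono fun y hy => hy.differentiableAt (by simp)
  have hdg : ∀ᶠ y in 𝓝 x, DifferentiableAt ℝ g y :=
    (hg.eventually (by simp)).mono fun y hy => hy.differentiableAt (by simp)
  have hprod : (fun y => A y (∇ (fun z => f z * g z) y)) =ᶠ[𝓝 x]
      fun y => f y • A y (∇ g y) + g y • A y (∇ f y) := by
    filter_upwards [hdf, hdg] with y h1 h2
    rw [gradient_mul h1 h2, map_add, map_smul, map_smul]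
  have hAf := hA.clm_apply (differentiableAt_gradient hf)
  have hAg := hA.clm_apply (differentiableAt_gradient hg)
  have hfx := hdf.self_of_nhds
  have hgx := hdg.self_of_nhds
  rw [divergence_congr hprod, divergence_add (hfx.fun_smul hAg) (hgx.fun_smul hAf),
    divergence_smul hfx hAg, divergence_smul hgx hAf, ← inner_gradient_left,
    ← inner_gradient_left, ← hsym (∇ f x), real_inner_comm (A x (∇ f x)) (∇ g x)]
  ring

/-- The vector field `⟨Z, ∇W⟩ A∇W - ½ ⟨A∇W, ∇W⟩ Z` of the Rellich–Pohozaev identity. -/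
def rellichField (A : E → E →L[ℝ] E) (Z : E → E) (W : E → ℝ) (y : E) : E :=
  ⟪Z y, ∇ W y⟫ • A y (∇ W y) - (1 / 2 * ⟪A y (∇ W y), ∇ W y⟫) • Z y

variable {Z : E → E} {W : E → ℝ}

lemma contDiffAt_rellichField (hA : ContDiffAt ℝ 1 A x) (hZ : ContDiffAt ℝ 1 Z x)
    (hW : ContDiffAt ℝ 2 W x) : ContDiffAt ℝ 1 (rellichField A Z W) x := by
  have hg := contDiffAt_gradient hW (m := 1) (by norm_num)
  have hAg := hA.clm_apply hg
  exact ((hZ.inner ℝ hg).smul hAg).sub ((contDiffAt_const.mul (hAg.inner ℝ hg)).smul hZ)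

/-- The second derivatives of `W` enter only through `div (A∇W)`, since `D²W` is symmetric. -/
lemma divergence_rellichField (hA : DifferentiableAt ℝ A x)
    (hsym : ∀ ξ η, ⟪A x ξ, η⟫ = ⟪ξ, A x η⟫) (hZ : DifferentiableAt ℝ Z x)
    (hW : ContDiffAt ℝ 2 W x) :
    divergence (rellichField A Z W) x =
      ⟪fderiv ℝ Z x (A x (∇ W x)), ∇ W x⟫
        + ⟪Z x, ∇ W x⟫ * divergence (fun y => A y (∇ W y)) x
        - 1 / 2 * ⟪fderiv ℝ A x (Z x) (∇ W x), ∇ W x⟫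
        - 1 / 2 * ⟪A x (∇ W x), ∇ W x⟫ * divergence Z x := by
  have hg := differentiableAt_gradient hW
  have hAg := hA.clm_apply hg
  have hT : DifferentiableAt ℝ (fun y => ⟪Z y, ∇ W y⟫) x := hZ.inner ℝ hg
  have hG : DifferentiableAt ℝ (fun y => 1 / 2 * ⟪A y (∇ W y), ∇ W y⟫) x :=
    (hAg.inner ℝ hg).const_mul _
  have hAZ : fderiv ℝ (fun y => A y (∇ W y)) x (Z x) =
      fderiv ℝ A x (Z x) (∇ W x) + A x (fderiv ℝ (∇ W) x (Z x)) := by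
    rw [fderiv_clm_apply hA hg]
    simp [add_comm]
  have hhess : ⟪Z x, fderiv ℝ (∇ W) x (A x (∇ W x))⟫ =
      ⟪A x (∇ W x), fderiv ℝ (∇ W) x (Z x)⟫ := by
    rw [← inner_fderiv_gradient_comm hW, real_inner_comm]
  unfold rellichField
  rw [divergence_sub (hT.fun_smul hAg) (hG.fun_smul hZ), divergence_smul hT hAg,
    divergence_smul hG hZ, fderiv_const_mul (hAg.inner ℝ hg), fderiv_inner_apply ℝ hZ hg]
  simp only [FunLike.coe_smul, Pi.smul_apply, smul_eq_mul]
  rw [fderiv_inner_apply ℝ hAg hg, hAZ, inner_add_left, hsym (fderiv ℝ (∇ W) x (Z x)), hhess,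
    real_inner_comm (A x (∇ W x)) (fderiv ℝ (∇ W) x (Z x))]
  ring

end EllipticOperator

section Radial

variable {E : Type*} [NormedAddCommGroup E] [InnerProductSpace ℝ E] {F : ℝ → ℝ} {F' : ℝ} {x : E}

lemma hasFDerivAt_log_norm (hx : x ≠ 0) :
    HasFDerivAt (fun y : E => Real.log ‖y‖) ((‖x‖ ^ 2)⁻¹ • innerSL ℝ x) x := by
  have hlog (y : E) : Real.log ‖y‖ = 1 / 2 * Real.log (‖y‖ ^ 2) := by
    rw [Real.log_pow]
    push_cast
    ring
  have h := ((hasStrictFDerivAt_norm_sq x).hasFDerivAt.log (by positivity)).const_mul (1 / 2 : ℝ)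
  simp only [hlog]
  refine h.congr_fderiv (ContinuousLinearMap.ext fun v => ?_)
  simp only [one_div, smul_apply, coe_innerSL_apply, nsmul_eq_mul, Nat.cast_ofNat, smul_eq_mul]
  ring

lemma hasFDerivAt_comp_log_norm (hx : x ≠ 0) (hF : HasDerivAt F F' (Real.log ‖x‖)) :
    HasFDerivAt (fun y : E => F (Real.log ‖y‖)) ((F' / ‖x‖ ^ 2) • innerSL ℝ x) x :=
  (hF.comp_hasFDerivAt x (hasFDerivAt_log_norm hx)).congr_fderiv <| by
    rw [smul_smul, div_eq_mul_inv]

lemma fderiv_comp_log_norm (hx : x ≠ 0) (hF : HasDerivAt F F' (Real.log ‖x‖)) (v : E) :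
    fderiv ℝ (fun y : E => F (Real.log ‖y‖)) x v = F' / ‖x‖ ^ 2 * ⟪x, v⟫ := by
  simp [(hasFDerivAt_comp_log_norm hx hF).fderiv]

lemma contDiffAt_comp_log_norm {k : WithTop ℕ∞} (hF : ContDiff ℝ k F) (hx : x ≠ 0) :
    ContDiffAt ℝ k (fun y : E => F (Real.log ‖y‖)) x :=
  hF.contDiffAt.comp x ((contDiffAt_norm ℝ hx).log (norm_ne_zero_iff.2 hx))

lemma exp_neg_two_mul_log {r : ℝ} (hr : 0 < r) : Real.exp (-2 * Real.log r) = (r ^ 2)⁻¹ := by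
  rw [show -2 * Real.log r = -Real.log (r ^ 2) by rw [Real.log_pow]; push_cast; ring,
    Real.exp_neg, Real.exp_log (by positivity)]

lemma gradient_comp_log_norm [CompleteSpace E] (hx : x ≠ 0)
    (hF : HasDerivAt F F' (Real.log ‖x‖)) :
    ∇ (fun y : E => F (Real.log ‖y‖)) x = (F' / ‖x‖ ^ 2) • x := by
  refine ext_inner_right ℝ fun v => ?_
  rw [inner_gradient_left, fderiv_comp_log_norm hx hF, real_inner_smul_left]

lemma divergence_apply_gradient_comp_log_norm [FiniteDimensional ℝ E] {A : E → E →L[ℝ] E}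
    {F F₁ : ℝ → ℝ} {F₂ : ℝ} (hx : x ≠ 0) (hA : DifferentiableAt ℝ A x)
    (hF : ∀ t, HasDerivAt F (F₁ t) t) (hF₁ : HasDerivAt F₁ F₂ (Real.log ‖x‖)) :
    divergence (fun y => A y (∇ (fun z : E => F (Real.log ‖z‖)) y)) x =
      (F₂ - 2 * F₁ (Real.log ‖x‖)) / ‖x‖ ^ 4 * ⟪A x x, x⟫ +
        F₁ (Real.log ‖x‖) / ‖x‖ ^ 2 * divergence (fun y => A y y) x := by
  have hr : 0 < ‖x‖ := norm_pos_iff.2 hx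
  have hgrad : (fun y => A y (∇ (fun z : E => F (Real.log ‖z‖)) y)) =ᶠ[𝓝 x]
      fun y => (F₁ (Real.log ‖y‖) * Real.exp (-2 * Real.log ‖y‖)) • A y y := by
    filter_upwards [isOpen_ne.mem_nhds hx] with y hy
    rw [gradient_comp_log_norm hy (hF _), exp_neg_two_mul_log (norm_pos_iff.2 hy), map_smul,
      div_eq_mul_inv]
  have hexp : HasDerivAt (fun t : ℝ => Real.exp (-2 * t)) (Real.exp (-2 * Real.log ‖x‖) * (-2))
      (Real.log ‖x‖) := by
    simpa using ((hasDerivAt_id (Real.log ‖x‖)).const_mul (-2)).exp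
  have hd := hasFDerivAt_comp_log_norm hx (hF₁.fun_mul hexp)
  rw [divergence_congr hgrad,
    divergence_smul hd.differentiableAt (hA.clm_apply differentiableAt_fun_id), hd.fderiv]
  simp only [exp_neg_two_mul_log hr, FunLike.coe_smul, Pi.smul_apply,
    innerSL_apply_apply, smul_eq_mul, real_inner_comm x (A x x)]
  field_simp
  ring

end Radial

section Weights

lemma exp_neg_mul_le_one {α t : ℝ} (hα : 0 ≤ α) (ht : 0 ≤ t) : Real.exp (-α * t) ≤ 1 :=
  Real.exp_le_one_iff.2 (by nlinarith)

lemma exp_neg_two_mul_le_sq {α t : ℝ} (hα : α ≤ 1) (ht : 0 ≤ t) :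
    Real.exp (-2 * t) ≤ Real.exp (-α * t) ^ 2 := by
  rw [← Real.exp_nat_mul, Real.exp_le_exp]
  push_cast
  nlinarith

/-- Radial weights for the Carleman estimate, as functions of `t = log |x|`: the phase `Ψ`, whose
slope is `b + P`, and the multiplier `H`. Between the regimes `σ ≈ 0` and `σ ≈ 1` the slope excess
`P` passes from being essentially constant to decaying like `exp (-2 t)`; the terms with
`γ exp (-α t)` pay for the errors coming from coefficients that differ from the identity by
`O(|x| ^ (-α))`. -/
structure CarlemanWeight (b γ δ α : ℝ) where
  P : ℝ → ℝ
  σ : ℝ → ℝ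
  Ψ : ℝ → ℝ
  H : ℝ → ℝ
  hasDerivAt_Ψ : ∀ t, HasDerivAt Ψ (b + P t) t
  hasDerivAt_P : ∀ t, HasDerivAt P (P t * (γ * Real.exp (-α * t) - 2 * σ t)) t
  hasDerivAt_H : ∀ t,
    HasDerivAt H ((1 - 2 * b - (γ * Real.exp (-α * t) + (2 - δ) * σ t)) * H t) t
  P_nonneg : ∀ t, 0 ≤ P t
  σ_nonneg : ∀ t, 0 ≤ σ t
  σ_le_one : ∀ t, σ t ≤ 1
  H_pos : ∀ t, 0 < H t
  contDiff_P : ContDiff ℝ 1 P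
  contDiff_H : ContDiff ℝ 1 H

namespace CarlemanWeight

variable {b γ δ α : ℝ} (w : CarlemanWeight b γ δ α)

/-- The derivative of the phase. -/
def slope (t : ℝ) : ℝ := b + w.P t

/-- The derivative of `CarlemanWeight.slope`. -/
def slopeDeriv (t : ℝ) : ℝ := w.P t * (γ * Real.exp (-α * t) - 2 * w.σ t)

/-- The part of `-H' / H` that provides coercivity. -/
def damping (t : ℝ) : ℝ := γ * Real.exp (-α * t) + (2 - δ) * w.σ t

/-- The quadratic form that the conjugated operator produces at a point with `log |x| = t`. Here `W`
is the value of the conjugated function, `T = ⟨A x, ∇W⟩`, `G = ⟨A ∇W, ∇W⟩`, `μ = ⟨A x, x⟩ / |x|²`,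
and the `Xᵢ`, which vanish or are of lower order when `A` is the identity, are errors. -/
def form (t μ T G W X₁ X₂ X₃ X₄ : ℝ) : ℝ :=
  T ^ 2 * Real.exp (-2 * t) * (2 * w.P t + 1 - w.damping t)
    + T * W * Real.exp (-2 * t) * X₄ + X₁ + 1 / 2 * w.damping t * μ * G
    + 1 / 2 * W ^ 2 * (2 + X₂ - w.damping t * μ)
    + 1 / 2 * W ^ 2 * Real.exp (-2 * t) *
      (μ ^ 2 * (2 * w.slope t * w.slopeDeriv t - w.damping t * w.slope t ^ 2)
        + w.slope t ^ 2 * X₃)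

/-- Quantitative conditions for positivity of the Carleman form on `t > 0`: where `σ` is not small
the slope is, and where the coefficients are not close to the identity the slope is large. -/
structure IsAdmissible (ε Λ y₁ : ℝ) : Prop where
  σ_mul_sq_le : ∀ t, 0 < t → w.σ t * w.P t ^ 2 * Real.exp (-2 * t) ≤ ε
  σ_le : ∀ t, 0 < t → w.σ t * Real.exp (-2 * t) ≤ ε
  small_or_large : ∀ t, 0 < t →
    Real.exp (-α * t) ≤ y₁ ∨ Λ ≤ w.P t ∧ Λ ≤ w.P t ^ 2 * Real.exp (-2 * t)

lemma contDiff_Ψ : ContDiff ℝ 2 w.Ψ := by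
  rw [show (2 : WithTop ℕ∞) = 1 + 1 by norm_num, contDiff_succ_iff_deriv]
  refine ⟨fun t => (w.hasDerivAt_Ψ t).differentiableAt, by simp, ?_⟩
  rw [funext fun t => (w.hasDerivAt_Ψ t).deriv]
  exact contDiff_const.add w.contDiff_P

lemma contDiff_slope : ContDiff ℝ 1 w.slope := contDiff_const.add w.contDiff_P

lemma hasDerivAt_slope (t : ℝ) : HasDerivAt w.slope (w.slopeDeriv t) t :=
  (w.hasDerivAt_P t).const_add b

lemma slope_nonneg (hb : 0 ≤ b) (t : ℝ) : 0 ≤ w.slope t := add_nonneg hb (w.P_nonneg t)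

lemma le_damping (hδ : δ ≤ 2) (t : ℝ) : γ * Real.exp (-α * t) ≤ w.damping t :=
  le_add_of_nonneg_right (mul_nonneg (by linarith) (w.σ_nonneg t))

lemma damping_le (hδ : δ ≤ 2) (t : ℝ) : w.damping t ≤ γ * Real.exp (-α * t) + (2 - δ) := by
  have := mul_le_mul_of_nonneg_left (w.σ_le_one t) (by linarith : 0 ≤ 2 - δ)
  rw [damping]
  linarith

lemma abs_slopeDeriv_le (hb : 0 ≤ b) (hγ : 0 ≤ γ) (hα : 0 ≤ α) {t : ℝ} (ht : 0 ≤ t) :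
    |w.slopeDeriv t| ≤ (2 + γ) * w.slope t := by
  have hpos : 0 ≤ γ * Real.exp (-α * t) := by positivity
  have hγle : γ * Real.exp (-α * t) ≤ γ :=
    mul_le_of_le_one_right hγ (exp_neg_mul_le_one hα ht)
  have hfactor : |γ * Real.exp (-α * t) - 2 * w.σ t| ≤ 2 + γ :=
    abs_le.2 ⟨by linarith [w.σ_le_one t], by linarith [w.σ_nonneg t]⟩
  rw [slopeDeriv, abs_mul, abs_of_nonneg (w.P_nonneg t), mul_comm (2 + γ)]
  exact mul_le_mul (le_add_of_nonneg_left hb) hfactor (abs_nonneg _) (w.slope_nonneg hb t)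

end CarlemanWeight

end Weights

section ScalarInequality

variable {b C γ lam δ ν D k ri y μ s p p' P σ T G W g X : ℝ}

lemma gradient_terms_lower_bound (hlam : 0 ≤ lam) (hδ : 0 ≤ δ) (hδ1 : δ ≤ 1)
    (hγ0 : 0 ≤ γ) (hγ : γ * δ * lam ^ 2 = 8 * C) (hy : 0 ≤ y) (hs : γ * y ≤ s) (hμ : lam ≤ μ)
    (hg : 0 ≤ g) (hG : lam * g ≤ G) (hT : T ^ 2 * ri ≤ μ * G) (hX : |X| ≤ C * y * g) :
    T ^ 2 * ri * ((1 / 2 - δ / 8) * s) ≤ X + 1 / 2 * s * μ * G := by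
  have hs0 : 0 ≤ s := le_trans (by positivity) hs
  have hμ0 : 0 ≤ μ := hlam.trans hμ
  have herr : C * y * g ≤ δ / 8 * (s * μ * G) := calc
    C * y * g = δ / 8 * (γ * y * lam * (lam * g)) := by linear_combination (-(1 / 8) * y * g) * hγ
    _ ≤ δ / 8 * (s * μ * G) := by gcongr
  have hmain : T ^ 2 * ri * ((1 / 2 - δ / 8) * s) ≤ μ * G * ((1 / 2 - δ / 8) * s) := by
    have : 0 ≤ 1 / 2 - δ / 8 := by linarith
    gcongr
  linarith [(abs_le.1 hX).1]

lemma mixed_term_lower_bound (hν : 0 < ν) (hri : 0 ≤ ri) (hp : 0 ≤ p) (hX : |X| ≤ D * p) :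
    -(ri * (p * (ν * T ^ 2 + D ^ 2 / (4 * ν) * W ^ 2))) ≤ T * W * ri * X := by
  have hamgm : |T * W| * D ≤ ν * T ^ 2 + D ^ 2 / (4 * ν) * W ^ 2 := by
    have hsq : ν * T ^ 2 + D ^ 2 / (4 * ν) * W ^ 2 - |T * W| * D =
        ν * (|T| - D / (2 * ν) * |W|) ^ 2 := by
      rw [abs_mul, ← sq_abs T, ← sq_abs W]
      field_simp
      ring
    have : 0 ≤ ν * (|T| - D / (2 * ν) * |W|) ^ 2 := by positivity
    linarith
  have habs : |T * W * X| ≤ p * (ν * T ^ 2 + D ^ 2 / (4 * ν) * W ^ 2) := calc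
    |T * W * X| ≤ |T * W| * (D * p) := by rw [abs_mul]; gcongr
    _ = p * (|T * W| * D) := by ring
    _ ≤ p * (ν * T ^ 2 + D ^ 2 / (4 * ν) * W ^ 2) := by gcongr
  linarith [mul_le_mul_of_nonneg_left (abs_le.1 habs).1 hri]

lemma radial_coeff_lower_bound (hb : 0 ≤ b) (hδ : 0 ≤ δ) (hδ1 : δ ≤ 1) (hν : 0 ≤ ν)
    (hνb : ν * (b + 1) = δ / 16) (hP : 0 ≤ P) (hγy : 0 ≤ γ * y) (hs : s ≤ γ * y + (2 - δ))
    (hsmall : γ * y ≤ δ / 16 ∨ γ * y ≤ P) :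
    δ / 8 ≤ 2 * P + 1 - s + (1 / 2 - δ / 8) * s - ν * (b + P) := by
  have hνb0 : 0 ≤ ν * b := by positivity
  have hνP : ν * P ≤ 1 * P := by
    gcongr
    linarith
  have hs' : (1 / 2 + δ / 8) * s ≤ (1 / 2 + δ / 8) * (γ * y + (2 - δ)) := by gcongr
  have hδy : 0 ≤ (1 - δ) * (γ * y) := mul_nonneg (by linarith) hγy
  rcases hsmall with h | h <;> linarith [sq_nonneg δ]

lemma zeroth_order_lower_bound (hC : 0 ≤ C) (hδ : 0 ≤ δ) (hδ2 : δ ≤ 2) (hγ : 0 ≤ γ) (hy : 0 ≤ y)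
    (hμ : μ ≤ C) (hμ1 : |μ - 1| ≤ C * y) (hσ : 0 ≤ σ) (hσ1 : σ ≤ 1) (hX : |X| ≤ C * y) :
    δ - (3 * C + γ * C) * y ≤ 2 + X - (γ * y + (2 - δ) * σ) * μ := by
  have : 0 ≤ 2 - δ := by linarith
  have hyμ : γ * y * μ ≤ γ * y * C := by gcongr
  have hσμ : (2 - δ) * σ * μ ≤ (2 - δ) * 1 * (1 + C * y) := calc
    (2 - δ) * σ * μ ≤ (2 - δ) * σ * (1 + C * y) := by
      gcongr
      linarith [(abs_le.1 hμ1).2]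
    _ ≤ (2 - δ) * 1 * (1 + C * y) := by gcongr
  have : 0 ≤ δ * (C * y) := by positivity
  linarith [(abs_le.1 hX).1]

lemma slope_terms_lower_bound (hlam : 0 ≤ lam) (hC : 0 ≤ C) (hδ : 0 ≤ δ)
    (hγ0 : 0 ≤ γ) (hγ : 4 * C ≤ γ * lam ^ 2) (hy : 0 ≤ y) (hμ1 : lam ≤ μ) (hμ2 : μ ≤ C)
    (hσ : 0 ≤ σ) (hX : |X| ≤ C * y) :
    1 / 2 * lam ^ 2 * γ * y * P ^ 2 - (C ^ 2 * γ * b ^ 2 + 2 * C * b ^ 2) * y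
        - 12 * C ^ 2 * σ * (b ^ 2 + P ^ 2) ≤
      μ ^ 2 * (2 * (b + P) * (P * (γ * y - 2 * σ)) - (γ * y + (2 - δ) * σ) * (b + P) ^ 2)
        + (b + P) ^ 2 * X := by
  have hμ0 : 0 ≤ μ := hlam.trans hμ1
  have hp2 : (b + P) ^ 2 ≤ 2 * b ^ 2 + 2 * P ^ 2 := by linarith [sq_nonneg (b - P)]
  have hexpand :
      2 * (b + P) * (P * (γ * y - 2 * σ)) - (γ * y + (2 - δ) * σ) * (b + P) ^ 2 =
        γ * y * P ^ 2 - γ * y * b ^ 2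
          - σ * (4 * (b + P) * P + (2 - δ) * (b + P) ^ 2) := by ring
  have hσ_terms : μ ^ 2 * (σ * (4 * (b + P) * P + (2 - δ) * (b + P) ^ 2)) ≤
      C ^ 2 * (σ * (12 * (b ^ 2 + P ^ 2))) := by
    have : 4 * (b + P) * P + (2 - δ) * (b + P) ^ 2 ≤ 12 * (b ^ 2 + P ^ 2) := by
      linarith [sq_nonneg (b - P), mul_nonneg hδ (sq_nonneg (b + P)), sq_nonneg b, sq_nonneg P]
    calc _ ≤ μ ^ 2 * (σ * (12 * (b ^ 2 + P ^ 2))) := by gcongr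
      _ ≤ _ := by gcongr
  have hX' : -(C * y * (2 * b ^ 2 + 2 * P ^ 2)) ≤ (b + P) ^ 2 * X := by
    have : (b + P) ^ 2 * (C * y) ≤ (2 * b ^ 2 + 2 * P ^ 2) * (C * y) := by gcongr
    linarith [mul_le_mul_of_nonneg_left (abs_le.1 hX).1 (sq_nonneg (b + P))]
  have hP2 : lam ^ 2 * (γ * y * P ^ 2) ≤ μ ^ 2 * (γ * y * P ^ 2) := by gcongr
  have hb2 : μ ^ 2 * (γ * y * b ^ 2) ≤ C ^ 2 * (γ * y * b ^ 2) := by gcongr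
  have habsorb : 4 * C * (y * P ^ 2) ≤ γ * lam ^ 2 * (y * P ^ 2) := by gcongr
  rw [hexpand]
  linarith

lemma slope_linear_le (hk : 0 < k) (hD : 0 ≤ D) (hb : 0 ≤ b) (hri : 0 ≤ ri) (hy : 0 < y)
    (hy1 : y ≤ 1) (hriy : ri ≤ y ^ 2) :
    D * (b + P) * ri ≤ (D * b + D ^ 2 / (4 * k)) * y + k * y * P ^ 2 * ri := by
  have hamgm : D * P ≤ k * y * P ^ 2 + D ^ 2 / (4 * k) * (1 / y) := by
    have hsq : k * y * P ^ 2 + D ^ 2 / (4 * k) * (1 / y) - D * P =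
        k * y * (P - D / (2 * k * y)) ^ 2 := by
      field_simp
      ring
    have : 0 ≤ k * y * (P - D / (2 * k * y)) ^ 2 := by positivity
    linarith
  have hriy' : 1 / y * ri ≤ y := by
    rw [one_div_mul_eq_div, div_le_iff₀ hy]
    linarith
  have hconst : D * b * ri ≤ D * b * y := by
    gcongr
    nlinarith
  have hquad : D ^ 2 / (4 * k) * (1 / y) * ri ≤ D ^ 2 / (4 * k) * y := by
    rw [mul_assoc]
    gcongr
  linarith [mul_le_mul_of_nonneg_right hamgm hri]

lemma exists_zeroth_coeff_lower_bound (hb : 0 ≤ b) (hC : 0 < C) (hlam : 0 < lam) (hδ : 0 < δ)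
    (hδ2 : δ ≤ 2) (hγ0 : 0 < γ) (hγ : 4 * C ≤ γ * lam ^ 2) (hD : 0 ≤ D) :
    ∃ ε > 0, ε ≤ 1 ∧ ∃ Λ, ∃ y₁ > 0, ∀ ri y μ P σ X X' : ℝ,
      0 ≤ ri → 0 < y → y ≤ 1 → ri ≤ y ^ 2 → lam ≤ μ → μ ≤ C → |μ - 1| ≤ C * y →
      0 ≤ σ → σ ≤ 1 → σ * P ^ 2 * ri ≤ ε → σ * ri ≤ ε → (y ≤ y₁ ∨ Λ ≤ P ^ 2 * ri) →
      |X| ≤ C * y → |X'| ≤ C * y →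
      D * (b + P) * ri + δ / 8 ≤ 1 / 2 * (2 + X - (γ * y + (2 - δ) * σ) * μ)
        + 1 / 2 * ri * (μ ^ 2 * (2 * (b + P) * (P * (γ * y - 2 * σ))
          - (γ * y + (2 - δ) * σ) * (b + P) ^ 2) + (b + P) ^ 2 * X') := by
  set k := lam ^ 2 * γ / 8 with hk
  set L := 1 / 2 * (3 * C + γ * C) + 1 / 2 * (C ^ 2 * γ * b ^ 2 + 2 * C * b ^ 2)
    + (D * b + D ^ 2 / (4 * k)) with hL
  set ε := min 1 (δ / (48 * C ^ 2 * (b ^ 2 + 1)))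
  have hk0 : 0 < k := by positivity
  have : 0 < L := by positivity
  refine ⟨ε, by positivity, min_le_left _ _, L / k, δ / (8 * L), by positivity, ?_⟩
  intro ri y μ P σ X X' hri hy hy1 hriy hμ1 hμ2 hμ3 hσ hσ1 hσP hσr hdich hX hX'
  have hzeroth := zeroth_order_lower_bound hC.le hδ.le hδ2 hγ0.le hy.le hμ2 hμ3 hσ hσ1 hX
  have hslope := mul_le_mul_of_nonneg_left (slope_terms_lower_bound (b := b) (P := P) hlam.le hC.le
    hδ.le hγ0.le hγ hy.le hμ1 hμ2 hσ hX') hri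
  have hlinear := slope_linear_le (P := P) hk0 hD hb hri hy hy1 hriy
  have hσε : 12 * C ^ 2 * σ * (b ^ 2 + P ^ 2) * ri ≤ δ / 4 := by
    have hb2 : 12 * C ^ 2 * b ^ 2 * (σ * ri) ≤ 12 * C ^ 2 * b ^ 2 * ε := by gcongr
    have hP2 : 12 * C ^ 2 * (σ * P ^ 2 * ri) ≤ 12 * C ^ 2 * ε := by gcongr
    have hle : ε * (48 * C ^ 2 * (b ^ 2 + 1)) ≤ δ :=
      (le_div_iff₀ (by positivity)).1 (min_le_right _ _)
    linarith
  have hb2 : (C ^ 2 * γ * b ^ 2 + 2 * C * b ^ 2) * y * ri ≤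
      (C ^ 2 * γ * b ^ 2 + 2 * C * b ^ 2) * y :=
    mul_le_of_le_one_right (by positivity) (by nlinarith)
  have hsmall : L * y ≤ δ / 8 + k * y * P ^ 2 * ri := by
    rcases hdich with h | h
    · rw [le_div_iff₀ (by positivity)] at h
      have : 0 ≤ k * y * P ^ 2 * ri := by positivity
      linarith
    · rw [div_le_iff₀ hk0] at h
      linarith [mul_le_mul_of_nonneg_left h hy.le]
  have hk4 : 1 / 2 * lam ^ 2 * γ = 4 * k := by
    rw [hk]
    ring
  rw [hk4] at hslope
  rw [hL] at hsmall
  linarith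

lemma exists_carleman_form_lower_bound {α : ℝ} (hb : 0 ≤ b) (hC : 0 < C) (hlam : 0 < lam)
    (hδ : 0 < δ) (hδ1 : δ ≤ 1) (hα : 0 < α) (hα1 : α ≤ 1) :
    ∃ γ > 0, ∃ ε > 0, ε ≤ 1 ∧ ∃ Λ, ∃ y₁ > 0, ∀ w : CarlemanWeight b γ δ α, w.IsAdmissible ε Λ y₁ →
      ∀ t, 0 < t → ∀ μ T G W g X₁ X₂ X₃ X₄ : ℝ,
        lam ≤ μ → μ ≤ C → |μ - 1| ≤ C * Real.exp (-α * t) →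
        0 ≤ g → lam * g ≤ G → T ^ 2 * Real.exp (-2 * t) ≤ μ * G →
        |X₁| ≤ C * Real.exp (-α * t) * g → |X₂| ≤ C * Real.exp (-α * t) →
        |X₃| ≤ C * Real.exp (-α * t) → |X₄| ≤ C * (|w.slopeDeriv t| + w.slope t) →
        δ / 8 * (T ^ 2 * Real.exp (-2 * t) + W ^ 2) ≤ w.form t μ T G W X₁ X₂ X₃ X₄ := by
  set γ := 8 * C / (δ * lam ^ 2) with hγ
  set ν := δ / (16 * (b + 1)) with hν
  have hγ0 : 0 < γ := by positivity
  have hγ1 : γ * δ * lam ^ 2 = 8 * C := by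
    rw [hγ]
    field_simp
  have hγ2 : 4 * C ≤ γ * lam ^ 2 := by nlinarith [mul_pos hγ0 (pow_pos hlam 2)]
  have hν0 : 0 < ν := by positivity
  have hνb : ν * (b + 1) = δ / 16 := by
    rw [hν]
    field_simp
  obtain ⟨ε, hε, hε1, Λ, y₁, hy₁, hzeroth⟩ := exists_zeroth_coeff_lower_bound hb hC hlam hδ
    (by linarith) hγ0 hγ2 (D := (C * (3 + γ)) ^ 2 / (4 * ν)) (by positivity)
  refine ⟨γ, hγ0, ε, hε, hε1, max γ Λ, min (δ / (16 * γ)) y₁, by positivity, ?_⟩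
  intro w hw t ht μ T G W g X₁ X₂ X₃ X₄ hμ1 hμ2 hμ3 hg hG hT hX₁ hX₂ hX₃ hX₄
  have hy1 : Real.exp (-α * t) ≤ 1 := exp_neg_mul_le_one hα.le ht.le
  have hγy : γ * Real.exp (-α * t) ≤ δ / 16 ∨ γ * Real.exp (-α * t) ≤ w.P t := by
    rcases hw.small_or_large t ht with h | ⟨h, -⟩
    · have := (le_div_iff₀ (by positivity)).1 (h.trans (min_le_left _ _))
      exact .inl (by linarith)
    · exact .inr ((mul_le_of_le_one_right hγ0.le hy1).trans ((le_max_left _ _).trans h))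
  have hmixed := mixed_term_lower_bound (T := T) (W := W) (X := X₄) (D := C * (3 + γ)) hν0
    (Real.exp_nonneg (-2 * t)) (w.slope_nonneg hb t) <| hX₄.trans <| by
      rw [mul_assoc]
      gcongr
      linarith [w.abs_slopeDeriv_le hb hγ0.le hα.le ht.le]
  have hgrad := gradient_terms_lower_bound hlam.le hδ.le hδ1 hγ0.le hγ1 (Real.exp_nonneg (-α * t))
    (w.le_damping (by linarith) t) hμ1 hg hG hT hX₁
  have hT2 := mul_le_mul_of_nonneg_left (radial_coeff_lower_bound hb hδ.le hδ1 hν0.le hνb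
    (w.P_nonneg t) (by positivity) (w.damping_le (by linarith) t) hγy)
    (by positivity : 0 ≤ T ^ 2 * Real.exp (-2 * t))
  have hW2 := mul_le_mul_of_nonneg_left (hzeroth _ _ μ (w.P t) (w.σ t) X₂ X₃ (Real.exp_nonneg _)
    (Real.exp_pos _) hy1 (exp_neg_two_mul_le_sq hα1 ht.le) hμ1 hμ2 hμ3 (w.σ_nonneg t)
    (w.σ_le_one t) (hw.σ_mul_sq_le t ht) (hw.σ_le t ht)
    ((hw.small_or_large t ht).imp (·.trans (min_le_right _ _))
      fun h => (le_max_right _ _).trans h.2) hX₂ hX₃) (sq_nonneg W)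
  simp only [CarlemanWeight.form, CarlemanWeight.slope, CarlemanWeight.slopeDeriv,
    CarlemanWeight.damping] at *
  linarith

end ScalarInequality

section Conjugation

variable {E : Type*} [NormedAddCommGroup E] [InnerProductSpace ℝ E] {A : E → E →L[ℝ] E} {x : E}

/-- The radial coefficient `⟨A(x) x, x⟩ / |x|²`. -/
def radialCoeff (A : E → E →L[ℝ] E) (x : E) : ℝ := ⟪A x x, x⟫ / ‖x‖ ^ 2

lemma inner_apply_self_eq_radialCoeff (hx : x ≠ 0) :
    ⟪A x x, x⟫ = radialCoeff A x * ‖x‖ ^ 2 := by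
  rw [radialCoeff, div_mul_cancel₀ _ (by positivity)]

lemma exp_neg_four_mul_log {r : ℝ} (hr : 0 < r) : Real.exp (-4 * Real.log r) = (r ^ 4)⁻¹ := by
  rw [show -4 * Real.log r = -2 * Real.log r + -2 * Real.log r by ring, Real.exp_add,
    exp_neg_two_mul_log hr]
  field_simp

namespace CarlemanWeight

variable {b γ δ α : ℝ} (w : CarlemanWeight b γ δ α) {v : E → ℝ}

/-- The conjugated function `exp (Ψ (log |x|)) v`. -/
def conj (v : E → ℝ) (x : E) : ℝ := Real.exp (w.Ψ (Real.log ‖x‖)) * v x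

/-- The zeroth-order coefficient `⟨A∇Ψ, ∇Ψ⟩ + 1` of the conjugated operator, where `Ψ` stands for
`Ψ (log |x|)`. -/
def potential (A : E → E →L[ℝ] E) (x : E) : ℝ :=
  w.slope (Real.log ‖x‖) ^ 2 * Real.exp (-4 * Real.log ‖x‖) * ⟪A x x, x⟫ + 1

lemma contDiffAt_conj (hx : x ≠ 0) {k : WithTop ℕ∞} (hk : k ≤ 2) (hv : ContDiffAt ℝ k v x) :
    ContDiffAt ℝ k (w.conj v) x :=
  (contDiffAt_comp_log_norm (F := fun t => Real.exp (w.Ψ t)) (w.contDiff_Ψ.exp.of_le hk) hx).mul hv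

lemma contDiffAt_potential (hx : x ≠ 0) (hA : ContDiffAt ℝ 1 A x) :
    ContDiffAt ℝ 1 (w.potential A) x :=
  ((contDiffAt_comp_log_norm (F := fun t => w.slope t ^ 2 * Real.exp (-4 * t))
    ((w.contDiff_slope.pow 2).mul (by fun_prop)) hx).mul
    ((hA.clm_apply contDiffAt_id).inner ℝ contDiffAt_id)).add contDiffAt_const

lemma fderiv_potential_apply (hx : x ≠ 0) (hA : DifferentiableAt ℝ A x) (ξ : E) :
    fderiv ℝ (w.potential A) x ξ =
      (2 * w.slope (Real.log ‖x‖) * w.slopeDeriv (Real.log ‖x‖)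
          - 4 * w.slope (Real.log ‖x‖) ^ 2) / ‖x‖ ^ 6 * ⟪x, ξ⟫ * ⟪A x x, x⟫
        + w.slope (Real.log ‖x‖) ^ 2 / ‖x‖ ^ 4 *
          (⟪A x x, ξ⟫ + ⟪fderiv ℝ (fun y => A y y) x ξ, x⟫) := by
  have hr : 0 < ‖x‖ := norm_pos_iff.2 hx
  have hexp : HasDerivAt (fun t : ℝ => Real.exp (-4 * t)) (Real.exp (-4 * Real.log ‖x‖) * (-4))
      (Real.log ‖x‖) := by
    simpa using ((hasDerivAt_id (Real.log ‖x‖)).const_mul (-4)).exp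
  have hradial := hasFDerivAt_comp_log_norm hx (((w.hasDerivAt_slope _).fun_pow 2).fun_mul hexp)
  have hquad : HasFDerivAt (fun y => ⟪A y y, y⟫) _ x :=
    (hA.clm_apply differentiableAt_fun_id).hasFDerivAt.inner ℝ (hasFDerivAt_id x)
  have hpot : HasFDerivAt (w.potential A) _ x := (hradial.fun_mul hquad).add_const 1
  rw [hpot.fderiv]
  simp only [exp_neg_four_mul_log hr, FunLike.coe_smul, FunLike.coe_add, Pi.add_apply,
    Pi.smul_apply, smul_eq_mul, innerSL_apply_apply, ContinuousLinearMap.comp_apply,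
    ContinuousLinearMap.prod_apply, fderivInnerCLM_apply, ContinuousLinearMap.id_apply]
  field_simp
  push_cast
  ring

end CarlemanWeight

variable [FiniteDimensional ℝ E]

/-- The operator `div (A∇v) + v`. -/
def helmholtz (A : E → E →L[ℝ] E) (v : E → ℝ) (x : E) : ℝ :=
  divergence (fun y => A y (∇ v y)) x + v x

/-- The error in the zeroth-order coefficient; it vanishes when `A` is the identity and `b` is
`(n - 1) / 2`. -/
def zerothError (A : E → E →L[ℝ] E) (b : ℝ) (x : E) : ℝ :=
  (1 - 2 * b) * radialCoeff A x + divergence (fun y => A y y) x - 2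

/-- The error in the terms that are quadratic in the gradient `g`. -/
def gradientError (A : E → E →L[ℝ] E) (b : ℝ) (x g : E) : ℝ :=
  ⟪fderiv ℝ (fun y => A y y) x (A x g), g⟫ - ⟪A x g, g⟫
    - 1 / 2 * ⟪fderiv ℝ A x (A x x) g, g⟫ - 1 / 2 * ⟪A x g, g⟫ * zerothError A b x

/-- The error in the coefficient of `|x|⁻² Ψ'² W²`. -/
def potentialError (A : E → E →L[ℝ] E) (b : ℝ) (x : E) : ℝ :=
  radialCoeff A x * zerothError A b x + 2 * radialCoeff A x - 4 * radialCoeff A x ^ 2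
    + (⟪fderiv ℝ (fun y => A y y) x (A x x), x⟫ + ⟪A x x, A x x⟫) / ‖x‖ ^ 2

/-- The coefficient of the mixed term `|x|⁻² ⟨A x, ∇W⟩ W`, for a phase of slope `p`. -/
def mixedError (A : E → E →L[ℝ] E) (p p' : ℝ) (x : E) : ℝ :=
  radialCoeff A x * (p' - 2 * p) + p * divergence (fun y => A y y) x

namespace CarlemanWeight

variable {b γ δ α : ℝ} (w : CarlemanWeight b γ δ α) {v : E → ℝ}

/-- The vector field whose divergence yields the Carleman estimate: the Rellich field of the
conjugated function in the direction `A x`, corrected by the potential and multiplied by `H`. -/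
def field (A : E → E →L[ℝ] E) (v : E → ℝ) (x : E) : E :=
  w.H (Real.log ‖x‖) • (rellichField A (fun y => A y y) (w.conj v) x
    + (1 / 2 * (w.potential A x * w.conj v x ^ 2)) • A x x)

lemma divergence_apply_gradient_conj (hx : x ≠ 0) (hA : DifferentiableAt ℝ A x)
    (hsym : ∀ ξ η, ⟪A x ξ, η⟫ = ⟪ξ, A x η⟫) (hv : ContDiffAt ℝ 2 v x) :
    divergence (fun y => A y (∇ (w.conj v) y)) x =
      Real.exp (w.Ψ (Real.log ‖x‖)) * divergence (fun y => A y (∇ v y)) x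
        + 2 * w.slope (Real.log ‖x‖) / ‖x‖ ^ 2 * ⟪A x x, ∇ (w.conj v) x⟫
        + w.conj v x / ‖x‖ ^ 2 *
          (mixedError A (w.slope (Real.log ‖x‖)) (w.slopeDeriv (Real.log ‖x‖)) x
            - radialCoeff A x * w.slope (Real.log ‖x‖) ^ 2) := by
  have : 0 < ‖x‖ := norm_pos_iff.2 hx
  have hF (t) : HasDerivAt (fun t => Real.exp (w.Ψ t)) (w.slope t * Real.exp (w.Ψ t)) t :=
    (w.hasDerivAt_Ψ t).exp.congr_deriv (mul_comm _ _)
  have hfs : ContDiffAt ℝ 2 (fun z : E => Real.exp (w.Ψ (Real.log ‖z‖))) x :=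
    contDiffAt_comp_log_norm w.contDiff_Ψ.exp hx
  unfold conj
  rw [divergence_apply_gradient_mul hA hsym hfs hv,
    divergence_apply_gradient_comp_log_norm hx hA hF ((w.hasDerivAt_slope _).fun_mul (hF _)),
    gradient_mul (hfs.differentiableAt (by simp)) (hv.differentiableAt (by simp)),
    gradient_comp_log_norm hx (hF _), map_smul]
  simp only [inner_add_right, real_inner_smul_left, real_inner_smul_right, mixedError, radialCoeff]
  field_simp
  ring

lemma contDiffAt_field (hx : x ≠ 0) (hA : ContDiffAt ℝ 1 A x) (hv : ContDiffAt ℝ 2 v x) :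
    ContDiffAt ℝ 1 (w.field A v) x := by
  have hZ : ContDiffAt ℝ 1 (fun y => A y y) x := hA.clm_apply contDiffAt_id
  exact (contDiffAt_comp_log_norm w.contDiff_H hx).smul <|
    (contDiffAt_rellichField hA hZ (w.contDiffAt_conj hx le_rfl hv)).add <|
    (contDiffAt_const.mul <| (w.contDiffAt_potential hx hA).mul <|
      (w.contDiffAt_conj hx one_le_two (hv.of_le one_le_two)).pow 2).smul hZ

lemma divergence_potential_smul (hx : x ≠ 0) (hA : ContDiffAt ℝ 1 A x)
    (hv : ContDiffAt ℝ 1 v x) :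
    divergence (fun y => (1 / 2 * (w.potential A y * w.conj v y ^ 2)) • A y y) x =
      1 / 2 * fderiv ℝ (w.potential A) x (A x x) * w.conj v x ^ 2
        + w.potential A x * w.conj v x * ⟪A x x, ∇ (w.conj v) x⟫
        + 1 / 2 * w.potential A x * w.conj v x ^ 2 * divergence (fun y => A y y) x := by
  have hq := (w.contDiffAt_potential hx hA).differentiableAt one_ne_zero
  have hW := (w.contDiffAt_conj hx one_le_two hv).differentiableAt one_ne_zero
  have hZ := (hA.differentiableAt one_ne_zero).clm_apply differentiableAt_fun_id
  rw [divergence_smul ((hq.fun_mul (hW.fun_pow 2)).const_mul _) hZ,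
    fderiv_const_mul (hq.fun_mul (hW.fun_pow 2)), fderiv_fun_mul hq (hW.fun_pow 2),
    fderiv_fun_pow 2 hW, real_inner_comm, inner_gradient_left]
  simp only [one_div, Nat.add_one_sub_one, pow_one, nsmul_eq_mul, Nat.cast_ofNat, smul_add,
    add_apply, smul_apply, smul_eq_mul]
  ring

lemma divergence_field (hx : x ≠ 0) (hA : ContDiffAt ℝ 1 A x)
    (hsym : ∀ ξ η, ⟪A x ξ, η⟫ = ⟪ξ, A x η⟫) (hv : ContDiffAt ℝ 2 v x) :
    divergence (w.field A v) x =
      w.H (Real.log ‖x‖) * (⟪A x x, ∇ (w.conj v) x⟫ *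
          (Real.exp (w.Ψ (Real.log ‖x‖)) * helmholtz A v x)
        + w.form (Real.log ‖x‖) (radialCoeff A x) ⟪A x x, ∇ (w.conj v) x⟫
          ⟪A x (∇ (w.conj v) x), ∇ (w.conj v) x⟫ (w.conj v x)
          (gradientError A b x (∇ (w.conj v) x)) (zerothError A b x) (potentialError A b x)
          (mixedError A (w.slope (Real.log ‖x‖)) (w.slopeDeriv (Real.log ‖x‖)) x)) := by
  have hr : 0 < ‖x‖ := norm_pos_iff.2 hx
  have hdA := hA.differentiableAt one_ne_zero
  have hW := w.contDiffAt_conj hx le_rfl hv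
  have hZ : ContDiffAt ℝ 1 (fun y => A y y) x := hA.clm_apply contDiffAt_id
  have hdZ := hZ.differentiableAt one_ne_zero
  have hH : HasFDerivAt (fun y : E => w.H (Real.log ‖y‖)) (((1 - 2 * b - w.damping (Real.log ‖x‖)) *
      w.H (Real.log ‖x‖) / ‖x‖ ^ 2) • innerSL ℝ x) x :=
    hasFDerivAt_comp_log_norm hx (w.hasDerivAt_H _)
  have hR := (contDiffAt_rellichField hA hZ hW).differentiableAt one_ne_zero
  have hq : DifferentiableAt ℝ
      (fun y => (1 / 2 * (w.potential A y * w.conj v y ^ 2)) • A y y) x :=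
    (((((w.contDiffAt_potential hx hA).differentiableAt one_ne_zero).fun_mul
      ((hW.differentiableAt two_ne_zero).fun_pow 2)).const_mul _).fun_smul hdZ)
  have hhelmholtz : Real.exp (w.Ψ (Real.log ‖x‖)) * helmholtz A v x =
      Real.exp (w.Ψ (Real.log ‖x‖)) * divergence (fun y => A y (∇ v y)) x + w.conj v x := by
    rw [helmholtz, mul_add, conj]
  unfold field
  rw [divergence_smul hH.differentiableAt (hR.fun_add hq), divergence_add hR hq,
    divergence_rellichField hdA hsym hdZ hW,
    w.divergence_potential_smul hx hA (hv.of_le one_le_two), hH.fderiv,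
    w.divergence_apply_gradient_conj hx hdA hsym hv, w.fderiv_potential_apply hx hdA, hhelmholtz]
  simp only [rellichField, FunLike.coe_smul, Pi.smul_apply, innerSL_apply_apply, smul_eq_mul,
    inner_add_right, inner_sub_right, real_inner_smul_right, ← hsym x, potential, form,
    gradientError, potentialError, mixedError, zerothError, slope, exp_neg_two_mul_log hr,
    exp_neg_four_mul_log hr, inner_apply_self_eq_radialCoeff hx]
  field_simp
  ring

end CarlemanWeight

end Conjugation

section Coefficients

variable {E : Type*} [NormedAddCommGroup E]

variable (E) in
/-- The exterior of the closed unit ball. -/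
def exteriorDomain : Set E := {x | 1 < ‖x‖}

lemma isOpen_exteriorDomain : IsOpen (exteriorDomain E) :=
  isOpen_lt continuous_const continuous_norm

lemma ne_zero_of_mem_exteriorDomain {x : E} (hx : x ∈ exteriorDomain E) : x ≠ 0 :=
  norm_pos_iff.1 (zero_lt_one.trans hx)

variable [InnerProductSpace ℝ E] {A : E → E →L[ℝ] E} {lam α K : ℝ} {x : E}

/-- Symmetric, uniformly elliptic `C¹` coefficients on the exterior domain that approach the
identity at the rate `|x| ^ (-α)`, together with their first derivatives at the rate
`|x| ^ (-α - 1)`. -/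
structure IsDecayingElliptic (A : E → E →L[ℝ] E) (lam α K : ℝ) : Prop where
  lam_pos : 0 < lam
  α_pos : 0 < α
  K_nonneg : 0 ≤ K
  symm : ∀ x ∈ exteriorDomain E, ∀ ξ η, ⟪A x ξ, η⟫ = ⟪ξ, A x η⟫
  contDiffOn : ContDiffOn ℝ 1 A (exteriorDomain E)
  coercive : ∀ x ∈ exteriorDomain E, ∀ ξ, lam * ‖ξ‖ ^ 2 ≤ ⟪A x ξ, ξ⟫
  norm_sub_id_le : ∀ x ∈ exteriorDomain E, ‖A x - ContinuousLinearMap.id ℝ E‖ ≤ K * ‖x‖ ^ (-α)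
  norm_mul_fderiv_le : ∀ x ∈ exteriorDomain E, ‖x‖ * ‖fderiv ℝ A x‖ ≤ K * ‖x‖ ^ (-α)

lemma abs_inner_le_mul_norm_sq {ξ η g : E} {p q : ℝ} (hξ : ‖ξ‖ ≤ p * ‖g‖) (hη : ‖η‖ ≤ q * ‖g‖) :
    |⟪ξ, η⟫| ≤ p * q * ‖g‖ ^ 2 := calc
  |⟪ξ, η⟫| ≤ ‖ξ‖ * ‖η‖ := abs_real_inner_le_norm _ _
  _ ≤ (p * ‖g‖) * (q * ‖g‖) := by
    have := (norm_nonneg ξ).trans hξ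
    gcongr
  _ = p * q * ‖g‖ ^ 2 := by ring

lemma neg_two_div_mul_sq_le_add {δ r : ℝ} (hδ : 0 < δ) (hr : 0 < r) (T F : ℝ) :
    -(2 / δ * r ^ 2 * F ^ 2) ≤ T * F + δ / 8 * (T ^ 2 / r ^ 2) := by
  have hsq : 0 ≤ δ / 8 / r ^ 2 * (T + 4 / δ * r ^ 2 * F) ^ 2 := by positivity
  have heq : δ / 8 / r ^ 2 * (T + 4 / δ * r ^ 2 * F) ^ 2 =
      T * F + δ / 8 * (T ^ 2 / r ^ 2) + 2 / δ * r ^ 2 * F ^ 2 := by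
    field_simp
    ring
  linarith

namespace IsDecayingElliptic

lemma mono (h : IsDecayingElliptic A lam α K) {β : ℝ} (hβ0 : 0 < β) (hβ : β ≤ α) :
    IsDecayingElliptic A lam β K where
  __ := h
  α_pos := hβ0
  norm_sub_id_le x hx := (h.norm_sub_id_le x hx).trans <| mul_le_mul_of_nonneg_left
    (Real.rpow_le_rpow_of_exponent_le hx.le (neg_le_neg hβ)) h.K_nonneg
  norm_mul_fderiv_le x hx := (h.norm_mul_fderiv_le x hx).trans <| mul_le_mul_of_nonneg_left
    (Real.rpow_le_rpow_of_exponent_le hx.le (neg_le_neg hβ)) h.K_nonneg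

variable (h : IsDecayingElliptic A lam α K) (hx : x ∈ exteriorDomain E)
include h hx

lemma contDiffAt : ContDiffAt ℝ 1 A x :=
  h.contDiffOn.contDiffAt (isOpen_exteriorDomain.mem_nhds hx)

lemma rpow_neg_le_one : ‖x‖ ^ (-α) ≤ 1 :=
  Real.rpow_le_one_of_one_le_of_nonpos hx.le (neg_nonpos.2 h.α_pos.le)

lemma norm_apply_sub_le (ξ : E) : ‖A x ξ - ξ‖ ≤ K * ‖x‖ ^ (-α) * ‖ξ‖ := by
  simpa using (A x - ContinuousLinearMap.id ℝ E).le_of_opNorm_le (h.norm_sub_id_le x hx) ξ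

lemma norm_apply_le (ξ : E) : ‖A x ξ‖ ≤ (1 + K) * ‖ξ‖ := by
  have hsub : ‖A x ξ - ξ‖ ≤ K * ‖ξ‖ := (h.norm_apply_sub_le hx ξ).trans <| by
    have := h.K_nonneg
    gcongr
    exact mul_le_of_le_one_right this (h.rpow_neg_le_one hx)
  linarith [norm_sub_norm_le (A x ξ) ξ]

lemma norm_fderiv_apply_self_apply_le (η : E) :
    ‖fderiv ℝ A x (A x x) η‖ ≤ K * (1 + K) * ‖x‖ ^ (-α) * ‖η‖ := calc
  ‖fderiv ℝ A x (A x x) η‖ ≤ ‖fderiv ℝ A x‖ * ‖A x x‖ * ‖η‖ := (fderiv ℝ A x).le_opNorm₂ _ _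
  _ ≤ ‖fderiv ℝ A x‖ * ((1 + K) * ‖x‖) * ‖η‖ := by
    gcongr
    exact h.norm_apply_le hx x
  _ = (1 + K) * (‖x‖ * ‖fderiv ℝ A x‖) * ‖η‖ := by ring
  _ ≤ (1 + K) * (K * ‖x‖ ^ (-α)) * ‖η‖ :=
    mul_le_mul_of_nonneg_right (mul_le_mul_of_nonneg_left (h.norm_mul_fderiv_le x hx)
      (by linarith [h.K_nonneg])) (norm_nonneg η)
  _ = K * (1 + K) * ‖x‖ ^ (-α) * ‖η‖ := by ring

lemma norm_fderiv_apply_self_sub_id_le :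
    ‖fderiv ℝ (fun y => A y y) x - ContinuousLinearMap.id ℝ E‖ ≤ 2 * K * ‖x‖ ^ (-α) := by
  have hd : fderiv ℝ (fun y => A y y) x - ContinuousLinearMap.id ℝ E =
      (A x - ContinuousLinearMap.id ℝ E) + (fderiv ℝ A x).flip x := by
    rw [fderiv_clm_apply ((h.contDiffAt hx).differentiableAt one_ne_zero)
      differentiableAt_fun_id, fderiv_fun_id, ContinuousLinearMap.comp_id]
    abel
  have hflip : ‖(fderiv ℝ A x).flip x‖ ≤ K * ‖x‖ ^ (-α) := calc
    ‖(fderiv ℝ A x).flip x‖ ≤ ‖fderiv ℝ A x‖ * ‖x‖ := by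
      simpa using (fderiv ℝ A x).flip.le_opNorm x
    _ ≤ K * ‖x‖ ^ (-α) := by
      rw [mul_comm]
      exact h.norm_mul_fderiv_le x hx
  rw [hd]
  linarith [norm_add_le (A x - ContinuousLinearMap.id ℝ E) ((fderiv ℝ A x).flip x),
    h.norm_sub_id_le x hx]

lemma norm_fderiv_apply_self_apply_sub_le (ξ : E) :
    ‖fderiv ℝ (fun y => A y y) x ξ - ξ‖ ≤ 2 * K * ‖x‖ ^ (-α) * ‖ξ‖ := by
  simpa using (fderiv ℝ (fun y => A y y) x - ContinuousLinearMap.id ℝ E).le_of_opNorm_le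
    (h.norm_fderiv_apply_self_sub_id_le hx) ξ

lemma abs_radialCoeff_sub_one_le : |radialCoeff A x - 1| ≤ K * ‖x‖ ^ (-α) := by
  have hx0 : 0 < ‖x‖ := norm_pos_iff.2 (ne_zero_of_mem_exteriorDomain hx)
  have hr : 0 < ‖x‖ ^ 2 := pow_pos hx0 2
  have heq : radialCoeff A x - 1 = ⟪A x x - x, x⟫ / ‖x‖ ^ 2 := by
    rw [inner_sub_left, real_inner_self_eq_norm_sq, radialCoeff]
    field_simp
  rw [heq, abs_div, abs_of_pos hr, div_le_iff₀ hr]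
  simpa using abs_inner_le_mul_norm_sq (h.norm_apply_sub_le hx x) (one_mul ‖x‖).ge

lemma le_radialCoeff : lam ≤ radialCoeff A x := by
  have hr : 0 < ‖x‖ ^ 2 := pow_pos (norm_pos_iff.2 (ne_zero_of_mem_exteriorDomain hx)) 2
  exact (le_div_iff₀ hr).2 (h.coercive x hx x)

lemma abs_radialCoeff_le : |radialCoeff A x| ≤ 1 + K := by
  have hμ := abs_le.1 <| (h.abs_radialCoeff_sub_one_le hx).trans <|
    mul_le_of_le_one_right h.K_nonneg (h.rpow_neg_le_one hx)
  exact abs_le.2 ⟨by linarith, by linarith⟩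

lemma inner_apply_self_nonneg (ξ : E) : 0 ≤ ⟪A x ξ, ξ⟫ :=
  (mul_nonneg h.lam_pos.le (sq_nonneg _)).trans (h.coercive x hx ξ)

lemma inner_apply_sq_le (ξ η : E) : ⟪A x ξ, η⟫ ^ 2 ≤ ⟪A x ξ, ξ⟫ * ⟪A x η, η⟫ :=
  LinearMap.BilinForm.apply_sq_le_of_symm ((innerₗ E).comp (A x).toLinearMap)
    (h.inner_apply_self_nonneg hx) ⟨fun ξ η => by simp [h.symm x hx ξ, real_inner_comm]⟩ ξ η

lemma abs_inner_apply_self_le (ξ : E) : |⟪A x ξ, ξ⟫| ≤ (1 + K) * ‖ξ‖ ^ 2 := by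
  simpa using abs_inner_le_mul_norm_sq (h.norm_apply_le hx ξ) (one_mul ‖ξ‖).ge

lemma abs_inner_fderiv_add_inner_div_sub_two_le :
    |(⟪fderiv ℝ (fun y => A y y) x (A x x), x⟫ + ⟪A x x, A x x⟫) / ‖x‖ ^ 2 - 2| ≤
      (5 + 3 * K) * K * ‖x‖ ^ (-α) := by
  set y := ‖x‖ ^ (-α)
  have hK := h.K_nonneg
  have hx0 : 0 < ‖x‖ := norm_pos_iff.2 (ne_zero_of_mem_exteriorDomain hx)
  have hr : 0 < ‖x‖ ^ 2 := pow_pos hx0 2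
  have hsub := h.norm_apply_sub_le hx x
  have hdecomp : (⟪fderiv ℝ (fun y => A y y) x (A x x), x⟫ + ⟪A x x, A x x⟫) / ‖x‖ ^ 2 - 2 =
      (⟪fderiv ℝ (fun y => A y y) x (A x x) - A x x, x⟫ + 2 * ⟪A x x - x, x⟫
        + ⟪A x x - x, A x x⟫) / ‖x‖ ^ 2 := by
    simp only [inner_sub_left, real_inner_comm x (A x x), real_inner_self_eq_norm_sq x]
    field_simp
    ring
  have hZ : |⟪fderiv ℝ (fun y => A y y) x (A x x) - A x x, x⟫| ≤
      2 * K * y * (1 + K) * 1 * ‖x‖ ^ 2 := by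
    refine abs_inner_le_mul_norm_sq ?_ (one_mul ‖x‖).ge
    calc _ ≤ 2 * K * y * ‖A x x‖ := h.norm_fderiv_apply_self_apply_sub_le hx _
      _ ≤ 2 * K * y * ((1 + K) * ‖x‖) := by
        gcongr
        exact h.norm_apply_le hx x
      _ = 2 * K * y * (1 + K) * ‖x‖ := by ring
  have hAx : |⟪A x x - x, x⟫| ≤ K * y * 1 * ‖x‖ ^ 2 :=
    abs_inner_le_mul_norm_sq hsub (one_mul ‖x‖).ge
  have hAA : |⟪A x x - x, A x x⟫| ≤ K * y * (1 + K) * ‖x‖ ^ 2 :=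
    abs_inner_le_mul_norm_sq hsub (h.norm_apply_le hx x)
  rw [hdecomp, abs_div, abs_of_pos hr, div_le_iff₀ hr]
  rw [abs_le] at hZ hAx hAA ⊢
  constructor <;> linarith

lemma inner_apply_self_sq_div_le (g : E) :
    ⟪A x x, g⟫ ^ 2 / ‖x‖ ^ 2 ≤ radialCoeff A x * ⟪A x g, g⟫ := by
  rw [radialCoeff, div_mul_eq_mul_div]
  gcongr
  exact h.inner_apply_sq_le hx x g

variable [FiniteDimensional ℝ E]

lemma abs_divergence_apply_self_sub_le :
    |divergence (fun y => A y y) x - Module.finrank ℝ E| ≤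
      Module.finrank ℝ E * (2 * K * ‖x‖ ^ (-α)) :=
  abs_divergence_sub_finrank_le.trans <|
    mul_le_mul_of_nonneg_left (h.norm_fderiv_apply_self_sub_id_le hx) (Nat.cast_nonneg _)

lemma abs_divergence_apply_self_le :
    |divergence (fun y => A y y) x| ≤ Module.finrank ℝ E * (1 + 2 * K) := by
  have hd := abs_le.1 (h.abs_divergence_apply_self_sub_le hx)
  have hy : Module.finrank ℝ E * (2 * K * ‖x‖ ^ (-α)) ≤ Module.finrank ℝ E * (2 * K) :=
    mul_le_mul_of_nonneg_left (mul_le_of_le_one_right (mul_nonneg two_pos.le h.K_nonneg)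
      (h.rpow_neg_le_one hx)) (Nat.cast_nonneg _)
  exact abs_le.2 ⟨by linarith [Nat.cast_nonneg (α := ℝ) (Module.finrank ℝ E)], by linarith⟩

lemma abs_zerothError_le :
    |zerothError A ((Module.finrank ℝ E - 1) / 2) x| ≤
      (3 * Module.finrank ℝ E + 2) * K * ‖x‖ ^ (-α) := by
  set N : ℝ := (Module.finrank ℝ E : ℝ)
  have hN : 0 ≤ N := Nat.cast_nonneg _
  have heq : zerothError A ((N - 1) / 2) x =
      (2 - N) * (radialCoeff A x - 1) + (divergence (fun y => A y y) x - N) := by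
    rw [zerothError]
    ring
  calc |zerothError A ((N - 1) / 2) x|
    _ ≤ |2 - N| * |radialCoeff A x - 1| + |divergence (fun y => A y y) x - N| := by
      rw [heq, ← abs_mul]
      exact abs_add_le _ _
    _ ≤ (N + 2) * (K * ‖x‖ ^ (-α)) + N * (2 * K * ‖x‖ ^ (-α)) := by
      have : |2 - N| ≤ N + 2 := abs_le.2 ⟨by linarith, by linarith⟩
      gcongr
      · exact h.abs_radialCoeff_sub_one_le hx
      · exact h.abs_divergence_apply_self_sub_le hx
    _ = (3 * N + 2) * K * ‖x‖ ^ (-α) := by ring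

lemma abs_gradientError_le (g : E) :
    |gradientError A ((Module.finrank ℝ E - 1) / 2) x g| ≤
      (3 * Module.finrank ℝ E + 7) / 2 * K * (1 + K) * ‖x‖ ^ (-α) * ‖g‖ ^ 2 := by
  set N : ℝ := (Module.finrank ℝ E : ℝ)
  set y := ‖x‖ ^ (-α)
  have hK := h.K_nonneg
  have hZ : |⟪fderiv ℝ (fun y => A y y) x (A x g) - A x g, g⟫| ≤
      2 * K * y * (1 + K) * 1 * ‖g‖ ^ 2 := by
    refine abs_inner_le_mul_norm_sq ?_ (one_mul ‖g‖).ge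
    calc _ ≤ 2 * K * y * ‖A x g‖ := h.norm_fderiv_apply_self_apply_sub_le hx _
      _ ≤ 2 * K * y * ((1 + K) * ‖g‖) := by
        gcongr
        exact h.norm_apply_le hx g
      _ = 2 * K * y * (1 + K) * ‖g‖ := by ring
  have hDA : |⟪fderiv ℝ A x (A x x) g, g⟫| ≤ K * (1 + K) * y * 1 * ‖g‖ ^ 2 :=
    abs_inner_le_mul_norm_sq (h.norm_fderiv_apply_self_apply_le hx g) (one_mul ‖g‖).ge
  have hzero : |⟪A x g, g⟫ * zerothError A ((N - 1) / 2) x| ≤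
      (1 + K) * ‖g‖ ^ 2 * ((3 * N + 2) * K * y) := by
    rw [abs_mul]
    exact mul_le_mul (h.abs_inner_apply_self_le hx g) (h.abs_zerothError_le hx)
      (abs_nonneg _) (by positivity)
  rw [inner_sub_left] at hZ
  rw [gradientError]
  rw [abs_le] at hZ hDA hzero ⊢
  constructor <;> linarith

lemma abs_potentialError_le :
    |potentialError A ((Module.finrank ℝ E - 1) / 2) x| ≤
      (3 * Module.finrank ℝ E + 13) * K * (1 + K) * ‖x‖ ^ (-α) := by
  set N : ℝ := (Module.finrank ℝ E : ℝ)
  set y := ‖x‖ ^ (-α)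
  have hK := h.K_nonneg
  have hμ := h.abs_radialCoeff_le hx
  have hzero : |radialCoeff A x * zerothError A ((N - 1) / 2) x| ≤
      (1 + K) * ((3 * N + 2) * K * y) := by
    rw [abs_mul]
    exact mul_le_mul hμ (h.abs_zerothError_le hx) (abs_nonneg _) (by positivity)
  have hquad : |(radialCoeff A x - 1) * (1 + 2 * radialCoeff A x)| ≤ K * y * (3 + 2 * K) := by
    have : |1 + 2 * radialCoeff A x| ≤ 3 + 2 * K := by
      rw [abs_le] at hμ ⊢
      constructor <;> linarith
    rw [abs_mul]
    exact mul_le_mul (h.abs_radialCoeff_sub_one_le hx) this (abs_nonneg _) (by positivity)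
  have hgrad := h.abs_inner_fderiv_add_inner_div_sub_two_le hx
  have : 0 ≤ K * (K * y) := by positivity
  rw [potentialError]
  rw [abs_le] at hzero hquad hgrad ⊢
  constructor <;> linarith

lemma abs_mixedError_le {p p' : ℝ} (hp : 0 ≤ p) :
    |mixedError A p p' x| ≤ (2 * Module.finrank ℝ E + 2) * (1 + K) * (|p'| + p) := by
  set N : ℝ := (Module.finrank ℝ E : ℝ)
  have : 0 ≤ N := Nat.cast_nonneg _
  have hK := h.K_nonneg
  calc |mixedError A p p' x|
    _ ≤ |radialCoeff A x| * |p' - 2 * p| + p * |divergence (fun y => A y y) x| := by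
      simpa only [mixedError, abs_mul, abs_of_nonneg hp] using
        abs_add_le (radialCoeff A x * (p' - 2 * p)) (p * divergence (fun y => A y y) x)
    _ ≤ (1 + K) * (|p'| + 2 * p) + p * (N * (1 + 2 * K)) := by
      have : |p' - 2 * p| ≤ |p'| + 2 * p := by
        simpa [abs_mul, abs_of_nonneg hp] using abs_sub p' (2 * p)
      gcongr
      · exact h.abs_radialCoeff_le hx
      · exact h.abs_divergence_apply_self_le hx
    _ ≤ (2 * N + 2) * (1 + K) * (|p'| + p) := by
      have : 0 ≤ (1 + K) * |p'| := by positivity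
      have : 0 ≤ N * ((1 + K) * |p'|) := by positivity
      have : 0 ≤ N * p := by positivity
      linarith

omit h hx in
lemma exists_form_lower_bound {δ : ℝ} (h : IsDecayingElliptic A lam α K)
    (hE : 1 ≤ Module.finrank ℝ E) (hα1 : α ≤ 1) (hδ : 0 < δ) (hδ1 : δ ≤ 1) :
    ∃ γ > 0, ∃ ε > 0, ε ≤ 1 ∧ ∃ Λ, ∃ y₁ > 0,
      ∀ w : CarlemanWeight ((Module.finrank ℝ E - 1) / 2) γ δ α, w.IsAdmissible ε Λ y₁ →
      ∀ x ∈ exteriorDomain E, ∀ (W : ℝ) (g : E),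
        δ / 8 * (⟪A x x, g⟫ ^ 2 / ‖x‖ ^ 2 + W ^ 2) ≤
          w.form (Real.log ‖x‖) (radialCoeff A x) ⟪A x x, g⟫ ⟪A x g, g⟫ W
            (gradientError A ((Module.finrank ℝ E - 1) / 2) x g)
            (zerothError A ((Module.finrank ℝ E - 1) / 2) x)
            (potentialError A ((Module.finrank ℝ E - 1) / 2) x)
            (mixedError A (w.slope (Real.log ‖x‖)) (w.slopeDeriv (Real.log ‖x‖)) x) := by
  set N : ℝ := (Module.finrank ℝ E : ℝ)
  have hN : 1 ≤ N := Nat.one_le_cast.2 hE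
  have hK := h.K_nonneg
  have hb : 0 ≤ (N - 1) / 2 := by linarith
  have hC : 0 < (3 * N + 13) * (1 + K) ^ 2 := by positivity
  have hle {c p y : ℝ} (hc : c ≤ 3 * N + 13) (hp : 0 ≤ p) (hpK : p ≤ (1 + K) ^ 2) (hy : 0 ≤ y) :
      c * p * y ≤ (3 * N + 13) * (1 + K) ^ 2 * y := by gcongr
  obtain ⟨γ, hγ, ε, hε, hε1, Λ, y₁, hy₁, hform⟩ :=
    exists_carleman_form_lower_bound hb hC h.lam_pos hδ hδ1 h.α_pos hα1
  refine ⟨γ, hγ, ε, hε, hε1, Λ, y₁, hy₁, fun w hw x hx W g => ?_⟩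
  have hr : 0 < ‖x‖ := norm_pos_iff.2 (ne_zero_of_mem_exteriorDomain hx)
  have hexp : Real.exp (-α * Real.log ‖x‖) = ‖x‖ ^ (-α) := by
    rw [Real.rpow_def_of_pos hr, mul_comm]
  have hy : 0 ≤ ‖x‖ ^ (-α) := by positivity
  have hμ := abs_le.1 (h.abs_radialCoeff_le hx)
  have hKy : 0 ≤ K * (1 + K) := by positivity
  have hKsq : K * (1 + K) ≤ (1 + K) ^ 2 := by nlinarith
  have hslope := w.slope_nonneg hb (Real.log ‖x‖)
  rw [div_eq_mul_inv (_ ^ 2), ← exp_neg_two_mul_log hr]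
  apply hform w hw (Real.log ‖x‖) (Real.log_pos hx) (g := ‖g‖ ^ 2)
  · exact h.le_radialCoeff hx
  · linarith [hle (c := 1) (by linarith) (by positivity) (by nlinarith : 1 + K ≤ _) zero_le_one]
  · rw [hexp]
    linarith [h.abs_radialCoeff_sub_one_le hx,
      hle (c := 1) (by linarith) hK (by nlinarith) hy]
  · positivity
  · exact h.coercive x hx g
  · rw [exp_neg_two_mul_log hr, ← div_eq_mul_inv]
    exact h.inner_apply_self_sq_div_le hx g
  · rw [hexp]
    refine (h.abs_gradientError_le hx g).trans (mul_le_mul_of_nonneg_right ?_ (sq_nonneg _))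
    linarith [hle (c := (3 * N + 7) / 2) (by linarith) hKy hKsq hy]
  · rw [hexp]
    exact (h.abs_zerothError_le hx).trans (hle (by linarith) hK (by nlinarith) hy)
  · rw [hexp]
    linarith [h.abs_potentialError_le hx, hle le_rfl hKy hKsq hy]
  · refine (h.abs_mixedError_le hx hslope).trans ?_
    exact hle (by linarith) (by linarith) (by nlinarith) (by positivity)

omit h hx in
lemma exists_le_divergence_field {δ : ℝ} (h : IsDecayingElliptic A lam α K)
    (hE : 1 ≤ Module.finrank ℝ E) (hα1 : α ≤ 1) (hδ : 0 < δ) (hδ1 : δ ≤ 1) :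
    ∃ γ > 0, ∃ ε > 0, ε ≤ 1 ∧ ∃ Λ, ∃ y₁ > 0,
      ∀ w : CarlemanWeight ((Module.finrank ℝ E - 1) / 2) γ δ α, w.IsAdmissible ε Λ y₁ →
      ∀ (v : E → ℝ), ∀ x ∈ exteriorDomain E, ContDiffAt ℝ 2 v x →
        δ / 8 * (w.H (Real.log ‖x‖) * w.conj v x ^ 2)
            - 2 / δ * (w.H (Real.log ‖x‖) * ‖x‖ ^ 2 *
              (Real.exp (w.Ψ (Real.log ‖x‖)) * helmholtz A v x) ^ 2) ≤
          divergence (w.field A v) x := by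
  obtain ⟨γ, hγ, ε, hε, hε1, Λ, y₁, hy₁, hform⟩ := h.exists_form_lower_bound hE hα1 hδ hδ1
  refine ⟨γ, hγ, ε, hε, hε1, Λ, y₁, hy₁, fun w hw v x hx hv => ?_⟩
  have hx0 := ne_zero_of_mem_exteriorDomain hx
  rw [w.divergence_field hx0 (h.contDiffAt hx) (h.symm x hx) hv]
  set T := ⟪A x x, ∇ (w.conj v) x⟫
  set F := Real.exp (w.Ψ (Real.log ‖x‖)) * helmholtz A v x
  calc _ = w.H (Real.log ‖x‖) * (-(2 / δ * ‖x‖ ^ 2 * F ^ 2) + δ / 8 * w.conj v x ^ 2) := by ring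
    _ ≤ _ := by
      refine mul_le_mul_of_nonneg_left ?_ (w.H_pos _).le
      linarith [neg_two_div_mul_sq_le_add hδ (norm_pos_iff.2 hx0) T F,
        hform w hw x hx (w.conj v x) (∇ (w.conj v) x)]

end IsDecayingElliptic

end Coefficients

section TestFunctions

variable {E F : Type*} [NormedAddCommGroup E] [NormedAddCommGroup F]

lemma integrable_of_continuousOn_of_support_subset [MeasurableSpace E] [BorelSpace E]
    {μ : Measure E} [IsFiniteMeasureOnCompacts μ] {f : E → F} {k : Set E} (hk : IsCompact k)
    (hf : ContinuousOn f k) (hfk : Function.support f ⊆ k) : Integrable f μ :=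
  (integrableOn_iff_integrable_of_support_subset hfk).1 (hf.integrableOn_compact hk)

lemma continuousOn_comp_log_norm {f : ℝ → F} (hf : Continuous f) :
    ContinuousOn (fun x : E => f (Real.log ‖x‖)) (exteriorDomain E) :=
  hf.comp_continuousOn <| continuous_norm.continuousOn.log fun _ hx =>
    norm_ne_zero_iff.2 (ne_zero_of_mem_exteriorDomain hx)

variable [NormedSpace ℝ E] [NormedSpace ℝ F]

lemma contDiff_of_tsupport {f : E → F} {k : WithTop ℕ∞}
    (hf : ∀ x ∈ tsupport f, ContDiffAt ℝ k f x) : ContDiff ℝ k f :=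
  contDiff_iff_contDiffAt.2 fun x => (em _).elim (hf x) fun hx =>
    contDiffAt_const.congr_of_eventuallyEq (notMem_tsupport_iff_eventuallyEq.1 hx)

/-- A function of class `C²` with compact support in the exterior domain. -/
structure IsTestFunction (v : E → ℝ) : Prop where
  contDiff : ContDiff ℝ 2 v
  hasCompactSupport : HasCompactSupport v
  tsupport_subset : tsupport v ⊆ exteriorDomain E

lemma IsTestFunction.mul {χ v : E → ℝ} (hχ : IsTestFunction χ) (hv : ContDiff ℝ 2 v) :
    IsTestFunction fun x => χ x * v x where
  contDiff := hχ.contDiff.mul hv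
  hasCompactSupport := hχ.hasCompactSupport.mul_right
  tsupport_subset := tsupport_mul_subset_left.trans hχ.tsupport_subset

end TestFunctions

section CarlemanEstimate

variable {E : Type*} [NormedAddCommGroup E] [InnerProductSpace ℝ E] {A : E → E →L[ℝ] E} {v : E → ℝ}
  {lam α K : ℝ}

lemma support_divergence_subset {V : E → E} : Function.support (divergence V) ⊆ tsupport V :=
  fun x hx => support_fderiv_subset ℝ fun h0 => hx (by simp [divergence, h0])

variable [FiniteDimensional ℝ E]

lemma support_gradient_subset : Function.support (∇ v) ⊆ tsupport v :=
  fun x hx => support_fderiv_subset ℝ fun h0 => hx (by simp [gradient, h0])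

lemma support_divergence_apply_gradient_subset :
    Function.support (divergence fun y => A y (∇ v y)) ⊆ tsupport v :=
  support_divergence_subset.trans <| closure_minimal
    (fun x hx => support_gradient_subset fun h0 => hx (by simp [h0])) (isClosed_tsupport v)

lemma support_helmholtz_subset : Function.support (helmholtz A v) ⊆ tsupport v := by
  refine (Function.support_add _ v).trans (Set.union_subset ?_ (subset_tsupport v))
  exact support_divergence_apply_gradient_subset

lemma CarlemanWeight.tsupport_field_subset {b γ δ : ℝ} (w : CarlemanWeight b γ δ α) :
    tsupport (w.field A v) ⊆ tsupport v := by
  have hconj : tsupport (w.conj v) ⊆ tsupport v := tsupport_mul_subset_right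
  refine closure_minimal (fun x hx => ?_) (isClosed_tsupport v)
  by_contra hxv
  have h0 : w.conj v x = 0 := image_eq_zero_of_notMem_tsupport fun h => hxv (hconj h)
  have hg0 : ∇ (w.conj v) x = 0 :=
    Function.notMem_support.1 fun h => hxv (hconj (support_gradient_subset h))
  exact hx (by simp [field, rellichField, h0, hg0])

lemma contDiffOn_apply_gradient {s : Set E} (hA : ContDiffOn ℝ 1 A s) (hv : ContDiff ℝ 2 v) :
    ContDiffOn ℝ 1 (fun y => A y (∇ v y)) s :=
  hA.clm_apply (contDiff_gradient hv (by norm_num)).contDiffOn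

lemma continuousOn_helmholtz {s : Set E} (hs : IsOpen s) (hA : ContDiffOn ℝ 1 A s)
    (hv : ContDiff ℝ 2 v) : ContinuousOn (helmholtz A v) s :=
  (continuousOn_divergence hs (contDiffOn_apply_gradient hA hv)).add hv.continuous.continuousOn

variable [MeasurableSpace E] [BorelSpace E]

lemma IsDecayingElliptic.exists_carleman_estimate (h : IsDecayingElliptic A lam α K) {δ : ℝ}
    (hE : 1 ≤ Module.finrank ℝ E) (hα1 : α ≤ 1) (hδ : 0 < δ)
    (hδ1 : δ ≤ 1) :
    ∃ γ > 0, ∃ ε > 0, ε ≤ 1 ∧ ∃ Λ, ∃ y₁ > 0,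
      ∀ w : CarlemanWeight ((Module.finrank ℝ E - 1) / 2) γ δ α, w.IsAdmissible ε Λ y₁ →
      ∀ v : E → ℝ, IsTestFunction v →
        0 ≤ ∫ x, w.H (Real.log ‖x‖) * (16 / δ ^ 2 * ‖x‖ ^ 2 *
          (Real.exp (w.Ψ (Real.log ‖x‖)) * helmholtz A v x) ^ 2 - w.conj v x ^ 2) := by
  obtain ⟨γ, hγ, ε, hε, hε1, Λ, y₁, hy₁, hdiv⟩ := h.exists_le_divergence_field hE hα1 hδ hδ1
  refine ⟨γ, hγ, ε, hε, hε1, Λ, y₁, hy₁, fun w hw v hv => ?_⟩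
  have hVc : ContDiff ℝ 1 (w.field A v) := contDiff_of_tsupport fun x hx => by
    have hxΩ := hv.tsupport_subset (w.tsupport_field_subset hx)
    exact w.contDiffAt_field (ne_zero_of_mem_exteriorDomain hxΩ) (h.contDiffAt hxΩ)
      hv.contDiff.contDiffAt
  have hVs : HasCompactSupport (w.field A v) :=
    hv.hasCompactSupport.mono' ((subset_tsupport _).trans w.tsupport_field_subset)
  have hV : Integrable (divergence (w.field A v)) :=
    integrable_of_continuousOn_of_support_subset hVs
      ((continuousOn_divergence isOpen_univ hVc.contDiffOn).mono (Set.subset_univ _))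
      support_divergence_subset
  have hzero {x : E} (hx : x ∉ tsupport v) : v x = 0 ∧ helmholtz A v x = 0 :=
    ⟨image_eq_zero_of_notMem_tsupport hx,
      Function.notMem_support.1 fun hs => hx (support_helmholtz_subset hs)⟩
  rw [← mul_zero (-(8 / δ)), ← integral_divergence_eq_zero hVc hVs, ← integral_const_mul]
  refine integral_mono (hV.const_mul _) (integrable_of_continuousOn_of_support_subset
    hv.hasCompactSupport ?_ fun x hx => ?_) fun x => ?_
  · have hexp : ContinuousOn (fun x : E => Real.exp (w.Ψ (Real.log ‖x‖))) (exteriorDomain E) :=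
      continuousOn_comp_log_norm (Real.continuous_exp.comp w.contDiff_Ψ.continuous)
    refine ContinuousOn.mono ?_ hv.tsupport_subset
    exact (continuousOn_comp_log_norm w.contDiff_H.continuous).mul <|
      ((by fun_prop : Continuous _).continuousOn.mul
        ((hexp.mul (continuousOn_helmholtz isOpen_exteriorDomain h.contDiffOn
          hv.contDiff)).pow 2)).sub
        ((hexp.mul hv.contDiff.continuous.continuousOn).pow 2)
  · by_contra hxv
    exact hx (by simp [hzero hxv, CarlemanWeight.conj])
  · by_cases hxv : x ∈ tsupport v
    · have := mul_le_mul_of_nonneg_left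
        (hdiv w hw v x (hv.tsupport_subset hxv) hv.contDiff.contDiffAt) (by positivity : 0 ≤ 8 / δ)
      calc _ ≤ _ := by simpa only [neg_mul] using neg_le_neg this
        _ = _ := by
          field_simp
          ring
    · have hVx : divergence (w.field A v) x = 0 := Function.notMem_support.1 fun hs =>
        hxv (w.tsupport_field_subset (support_divergence_subset hs))
      simp [hzero hxv, hVx, CarlemanWeight.conj]

end CarlemanEstimate

section Mollification

variable {E F : Type*} [NormedAddCommGroup E] [InnerProductSpace ℝ E] [FiniteDimensional ℝ E]
  [MeasurableSpace E] [BorelSpace E] [NormedAddCommGroup F] [NormedSpace ℝ F]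
  {φ ρ : E → ℝ} {ε : ℝ}

/-- The mollification `x ↦ ∫ φ t • g (x - t)` of `g` by the kernel `φ`. -/
def mollify (φ : E → ℝ) (g : E → F) : E → F :=
  convolution φ g (ContinuousLinearMap.lsmul ℝ ℝ) volume

lemma mollify_apply (φ : E → ℝ) (g : E → F) (x : E) : mollify φ g x = ∫ t, φ t • g (x - t) :=
  rfl

lemma contDiff_mollify {k : ℕ∞} (hφ : ContDiff ℝ k φ) (hc : HasCompactSupport φ) {g : E → F}
    (hg : Continuous g) : ContDiff ℝ k (mollify φ g) :=
  hc.contDiff_convolution_left _ hφ hg.locallyIntegrable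

lemma fderiv_mollify (hφ : ContDiff ℝ 1 φ) (hc : HasCompactSupport φ) {g : E → F}
    (hg : Continuous g) (x : E) :
    fderiv ℝ (mollify φ g) x = ∫ t, (fderiv ℝ φ t).smulRight (g (x - t)) :=
  (hc.hasFDerivAt_convolution_left _ hφ hg.locallyIntegrable x).fderiv

lemma divergence_mollify (hφ : ContDiff ℝ 1 φ) (hc : HasCompactSupport φ) {V : E → E}
    (hV : Continuous V) (x : E) :
    divergence (mollify φ V) x = ∫ t, fderiv ℝ φ t (V (x - t)) := by
  let trace : (E →L[ℝ] E) →L[ℝ] ℝ :=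
    ⟨(LinearMap.trace ℝ E).comp (ContinuousLinearMap.coeLM ℝ), continuous_trace⟩
  have hint : Integrable fun t => (fderiv ℝ φ t).smulRight (V (x - t)) := by
    refine Continuous.integrable_of_hasCompactSupport ?_ ((hc.fderiv ℝ).mono fun t ht h0 => ht ?_)
    · have := hφ.continuous_fderiv one_ne_zero
      fun_prop
    · simp [h0]
  calc divergence (mollify φ V) x = trace (fderiv ℝ (mollify φ V) x) := rfl
    _ = ∫ t, trace ((fderiv ℝ φ t).smulRight (V (x - t))) := by
        rw [fderiv_mollify hφ hc hV, trace.integral_comp_comm hint]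
    _ = ∫ t, fderiv ℝ φ t (V (x - t)) :=
        integral_congr_ae <| ae_of_all _ fun t => LinearMap.trace_smulRight _ _

lemma gradient_mollify (hφ : ContDiff ℝ 1 φ) (hc : HasCompactSupport φ) {g : E → ℝ}
    (hg : ContDiff ℝ 1 g) : ∇ (mollify φ g) = mollify φ (∇ g) := by
  have := hφ.continuous_fderiv one_ne_zero
  have := hg.continuous_fderiv one_ne_zero
  have hgrad : Continuous (∇ g) := (contDiff_gradient hg (m := 0) (by simp)).continuous
  ext1 x
  refine ext_inner_right ℝ fun v => ?_
  have hparts : ∫ t, fderiv ℝ (fun t => φ t * g (x - t)) t v = 0 :=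
    integral_fderiv_apply_eq_zero (hφ.mul (hg.comp (contDiff_const.sub contDiff_id)))
      hc.mul_right v
  have hprod (t : E) : fderiv ℝ (fun t => φ t * g (x - t)) t v =
      fderiv ℝ φ t v * g (x - t) - φ t * fderiv ℝ g (x - t) v := by
    have hrefl : HasFDerivAt (fun t => g (x - t)) _ t :=
      (hg.differentiable one_ne_zero (x - t)).hasFDerivAt.comp t ((hasFDerivAt_id t).const_sub x)
    rw [fderiv_fun_mul (hφ.differentiable one_ne_zero t) hrefl.differentiableAt, hrefl.fderiv]
    simp only [ContinuousLinearMap.comp_neg, ContinuousLinearMap.comp_id, smul_neg, add_apply,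
      neg_apply, smul_apply, smul_eq_mul]
    ring
  have hint₁ : Integrable fun t => fderiv ℝ φ t v * g (x - t) :=
    (by fun_prop : Continuous _).integrable_of_hasCompactSupport (hc.fderiv_apply ℝ v).mul_right
  have hint₂ : Integrable fun t => φ t * fderiv ℝ g (x - t) v :=
    (by fun_prop : Continuous _).integrable_of_hasCompactSupport hc.mul_right
  simp only [hprod, integral_sub hint₁ hint₂, sub_eq_zero] at hparts
  have hint₃ : Integrable fun t => φ t • ∇ g (x - t) :=
    (by fun_prop : Continuous _).integrable_of_hasCompactSupport hc.smul_right
  have hint₄ : Integrable fun t => (fderiv ℝ φ t).smulRight (g (x - t)) :=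
    Continuous.integrable_of_hasCompactSupport (by fun_prop) <|
      (hc.fderiv ℝ).mono fun t ht h0 => ht (by simp [h0])
  rw [inner_gradient_left, fderiv_mollify hφ hc hg.continuous,
    ContinuousLinearMap.integral_apply hint₄, mollify_apply, real_inner_comm,
    ← integral_inner hint₃]
  simpa [real_inner_smul_right, real_inner_comm v, inner_gradient_left] using hparts

lemma divergence_apply_mollify {A : E → E →L[ℝ] E} {G : E → E} {x : E}
    (hA : DifferentiableAt ℝ A x) (hφ : ContDiff ℝ 1 φ) (hc : HasCompactSupport φ)
    (hG : Continuous G) : divergence (fun y => A y (mollify φ G y)) x =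
      divergence (fun y => A y (mollify φ G x)) x + ∫ t, fderiv ℝ φ t (A x (G (x - t))) := by
  have hφc := hφ.continuous
  have hcomm : (fun y => A x (mollify φ G y)) = mollify φ fun y => A x (G y) := funext fun y => by
    have hint : Integrable fun t => φ t • G (y - t) :=
      (by fun_prop : Continuous _).integrable_of_hasCompactSupport hc.smul_right
    simpa [mollify_apply] using ((A x).integral_comp_comm hint).symm
  rw [divergence_clm_apply hA ((contDiff_mollify hφ hc hG).differentiable one_ne_zero x), hcomm,
    divergence_mollify hφ hc (by fun_prop)]

/-- A smooth function supported in the closed unit ball and of integral one. -/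
structure IsMollifier (ρ : E → ℝ) : Prop where
  contDiff : ContDiff ℝ ∞ ρ
  tsupport_subset : tsupport ρ ⊆ closedBall 0 1
  integral_eq_one : ∫ x, ρ x = 1

lemma exists_isMollifier : ∃ ρ : E → ℝ, IsMollifier ρ := by
  let φ : ContDiffBump (0 : E) := ⟨1 / 2, 1, by norm_num, by norm_num⟩
  exact ⟨φ.normed volume, φ.contDiff_normed, φ.tsupport_normed_eq.subset, φ.integral_normed⟩

/-- The kernel `ε⁻ⁿ ρ(·/ε)`, of the same integral as `ρ`. -/
def rescale (ρ : E → ℝ) (ε : ℝ) (x : E) : ℝ :=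
  (ε ^ Module.finrank ℝ E)⁻¹ * ρ (ε⁻¹ • x)

lemma integral_eq_smul_integral_comp_smul (hε : 0 < ε) (f : E → F) :
    ∫ x, f x = ε ^ Module.finrank ℝ E • ∫ z, f (ε • z) := by
  rw [Measure.integral_comp_smul, smul_smul, abs_of_pos (by positivity),
    mul_inv_cancel₀ (by positivity), one_smul]

lemma mollify_rescale (hε : 0 < ε) (g : E → F) (x : E) :
    mollify (rescale ρ ε) g x = ∫ z, ρ z • g (x - ε • z) := by
  rw [mollify_apply, integral_eq_smul_integral_comp_smul hε, ← integral_smul]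
  refine integral_congr_ae <| ae_of_all _ fun z => ?_
  simp only [rescale, smul_smul, inv_mul_cancel₀ hε.ne', one_smul]
  rw [← mul_assoc, mul_inv_cancel₀ (by positivity), one_mul]

namespace IsMollifier

variable (hρ : IsMollifier ρ)
include hρ

lemma contDiff_one : ContDiff ℝ 1 ρ := hρ.contDiff.of_le (by simp)

lemma hasCompactSupport : HasCompactSupport ρ :=
  (isCompact_closedBall 0 1).of_isClosed_subset (isClosed_tsupport ρ) hρ.tsupport_subset

lemma integrable : Integrable ρ :=
  hρ.contDiff.continuous.integrable_of_hasCompactSupport hρ.hasCompactSupport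

lemma integrable_norm_fderiv : Integrable fun z => ‖fderiv ℝ ρ z‖ :=
  ((hρ.contDiff_one.continuous_fderiv one_ne_zero).integrable_of_hasCompactSupport
    (hρ.hasCompactSupport.fderiv ℝ)).norm

lemma fderiv_eq_zero {z : E} (hz : 1 < ‖z‖) : fderiv ℝ ρ z = 0 :=
  fderiv_of_notMem_tsupport ℝ fun h => hz.not_ge (by simpa using hρ.tsupport_subset h)

lemma contDiff_rescale : ContDiff ℝ ∞ (rescale ρ ε) :=
  contDiff_const.mul (hρ.contDiff.comp (contDiff_const_smul _))

lemma tsupport_rescale_subset (hε : 0 < ε) : tsupport (rescale ρ ε) ⊆ closedBall 0 ε := by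
  refine closure_minimal (fun x hx => ?_) isClosed_closedBall
  have := hρ.tsupport_subset (subset_tsupport ρ (right_ne_zero_of_mul hx))
  simpa [norm_smul, abs_of_pos hε, inv_mul_le_iff₀ hε] using this

lemma hasCompactSupport_rescale (hε : 0 < ε) : HasCompactSupport (rescale ρ ε) :=
  (isCompact_closedBall 0 ε).of_isClosed_subset (isClosed_tsupport _)
    (hρ.tsupport_rescale_subset hε)

lemma integral_fderiv_rescale_apply (hε : 0 < ε) (W : E → E) :
    ∫ t, fderiv ℝ (rescale ρ ε) t (W t) = ∫ z, fderiv ℝ ρ z (ε⁻¹ • W (ε • z)) := by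
  rw [integral_eq_smul_integral_comp_smul hε, ← integral_smul]
  refine integral_congr_ae <| ae_of_all _ fun z => ?_
  have hd : HasFDerivAt ρ (fderiv ℝ ρ z) (ε⁻¹ • ε • z) := by
    rw [inv_smul_smul₀ hε.ne']
    exact (hρ.contDiff_one.differentiable one_ne_zero z).hasFDerivAt
  have hD : HasFDerivAt (rescale ρ ε) ((ε ^ Module.finrank ℝ E)⁻¹ • (fderiv ℝ ρ z).comp
      (ε⁻¹ • ContinuousLinearMap.id ℝ E)) (ε • z) :=
    (hd.comp (ε • z) ((hasFDerivAt_id (ε • z)).const_smul ε⁻¹)).const_mul _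
  simp only [hD.fderiv, FunLike.coe_smul, Pi.smul_apply, ContinuousLinearMap.comp_apply,
    ContinuousLinearMap.id_apply]
  rw [smul_inv_smul₀ (by positivity)]

lemma integral_fderiv_apply_clm (L : E →L[ℝ] E) :
    ∫ z, fderiv ℝ ρ z (L z) = -LinearMap.trace ℝ E L := by
  have hdiv (z : E) : divergence (fun y => ρ y • L y) z =
      fderiv ℝ ρ z (L z) + ρ z * LinearMap.trace ℝ E L := by
    rw [divergence_smul (hρ.contDiff_one.differentiable one_ne_zero z) L.differentiableAt]
    simp [divergence]
  have hint : Integrable fun z => fderiv ℝ ρ z (L z) := by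
    have := hρ.contDiff_one.continuous_fderiv one_ne_zero
    exact Continuous.integrable_of_hasCompactSupport (by fun_prop) <|
      (hρ.hasCompactSupport.fderiv ℝ).mono fun t ht h0 => ht (by simp [h0])
  have : ∫ z, divergence (fun y => ρ y • L y) z = 0 :=
    integral_divergence_eq_zero (hρ.contDiff_one.smul L.contDiff) hρ.hasCompactSupport.smul_right
  simp only [hdiv] at this
  rw [integral_add hint (hρ.integrable.mul_const _), integral_mul_const, hρ.integral_eq_one] at this
  linarith

lemma norm_mollify_rescale_le (hε : 0 < ε) {g : E → F} {B : ℝ} (hB : ∀ x, ‖g x‖ ≤ B) (x : E) :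
    ‖mollify (rescale ρ ε) g x‖ ≤ (∫ z, ‖ρ z‖) * B := by
  rw [mollify_rescale hε, ← integral_mul_const]
  refine norm_integral_le_of_norm_le (hρ.integrable.norm.mul_const B) (ae_of_all _ fun z => ?_)
  rw [norm_smul]
  exact mul_le_mul_of_nonneg_left (hB _) (norm_nonneg _)

lemma tendsto_mollify_rescale [CompleteSpace F] {g : E → F} (hg : Continuous g) {B : ℝ}
    (hB : ∀ x, ‖g x‖ ≤ B) (x : E) :
    Tendsto (fun ε => mollify (rescale ρ ε) g x) (𝓝[>] 0) (𝓝 (g x)) := by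
  have hlim : Tendsto (fun ε : ℝ => ∫ z, ρ z • g (x - ε • z)) (𝓝[>] 0) (𝓝 (∫ z, ρ z • g x)) := by
    refine tendsto_integral_filter_of_dominated_convergence (fun z => ‖ρ z‖ * B)
      (Eventually.of_forall fun ε => ?_) (Eventually.of_forall fun ε => ae_of_all _ fun z => ?_)
      (hρ.integrable.norm.mul_const B) (ae_of_all _ fun z => ?_)
    · exact (hρ.contDiff.continuous.smul (hg.comp (by fun_prop))).aestronglyMeasurable
    · rw [norm_smul]
      exact mul_le_mul_of_nonneg_left (hB _) (norm_nonneg _)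
    · have : Continuous fun ε : ℝ => ρ z • g (x - ε • z) := by fun_prop
      simpa using (this.tendsto 0).mono_left nhdsWithin_le_nhds
  rw [integral_smul_const, hρ.integral_eq_one, one_smul] at hlim
  exact hlim.congr' <| eventually_mem_nhdsWithin.mono fun ε hε => (mollify_rescale hε g x).symm

end IsMollifier

end Mollification

section WeakSolution

variable {E : Type*} [NormedAddCommGroup E] [InnerProductSpace ℝ E]
  {A : E → E →L[ℝ] E} {Ω k : Set E} {u v φ ρ : E → ℝ} {G : E → E} {x : E} {ε r B M : ℝ}

lemma sub_smul_mem_closedBall {z : E} (hε : 0 < ε) (hεr : ε ≤ r) (hz : ‖z‖ ≤ 1) :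
    x - ε • z ∈ closedBall x r := by
  rw [mem_closedBall, dist_eq_norm, sub_sub_cancel_left, norm_neg, norm_smul,
    Real.norm_of_nonneg hε.le]
  exact (mul_le_of_le_one_right hε.le hz).trans hεr

lemma norm_smul_sub_apply_le (hA : ∀ y ∈ closedBall x r, DifferentiableAt ℝ A y)
    (hM : ∀ y ∈ closedBall x r, ‖fderiv ℝ A y‖ ≤ M) (hB : ∀ y, ‖G y‖ ≤ B) (hε : 0 < ε)
    (hεr : ε ≤ r) {z : E} (hz : ‖z‖ ≤ 1) :
    ‖(ε⁻¹ • (A x - A (x - ε • z))) (G (x - ε • z))‖ ≤ M * B := by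
  have hxr : x ∈ closedBall x r := mem_closedBall_self (hε.le.trans hεr)
  have : 0 ≤ M := (norm_nonneg (fderiv ℝ A x)).trans (hM x hxr)
  have hdiff : ‖A x - A (x - ε • z)‖ ≤ M * ‖x - (x - ε • z)‖ :=
    (convex_closedBall x r).norm_image_sub_le_of_norm_fderiv_le hA hM
      (sub_smul_mem_closedBall hε hεr hz) hxr
  calc ‖(ε⁻¹ • (A x - A (x - ε • z))) (G (x - ε • z))‖
      ≤ ‖ε⁻¹ • (A x - A (x - ε • z))‖ * ‖G (x - ε • z)‖ := ContinuousLinearMap.le_opNorm _ _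
    _ ≤ (ε⁻¹ * (M * ε)) * B := by
        rw [norm_smul, norm_inv, Real.norm_of_nonneg hε.le]
        gcongr
        · refine hdiff.trans (mul_le_mul_of_nonneg_left ?_ this)
          rw [sub_sub_cancel, norm_smul, Real.norm_of_nonneg hε.le]
          exact mul_le_of_le_one_right hε.le hz
        · exact hB _
    _ = M * B := by field_simp

variable [FiniteDimensional ℝ E]

lemma exists_contDiff_eventuallyEq_nhdsSet {m : ℕ∞} (hΩ : IsOpen Ω) (hu : ContDiffOn ℝ m u Ω)
    (hk : IsCompact k) (hkΩ : k ⊆ Ω) :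
    ∃ v : E → ℝ, ContDiff ℝ m v ∧ HasCompactSupport v ∧ v =ᶠ[𝓝ˢ k] u := by
  obtain ⟨k', hk', hkk', hk'Ω⟩ := exists_compact_between hk hΩ hkΩ
  obtain ⟨ζ, hζ1, hζ0, -⟩ := exists_contMDiffMap_one_nhds_of_subset_interior
    (modelWithCornersSelf ℝ E) (n := m) hk.isClosed hkk'
  have hts : tsupport (fun x => ζ x * u x) ⊆ k' := closure_minimal
    (fun x hx => by_contra fun h => left_ne_zero_of_mul hx (hζ0 x h)) hk'.isClosed
  refine ⟨fun x => ζ x * u x, contDiff_of_tsupport fun x hx => ?_,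
    hk'.of_isClosed_subset (isClosed_tsupport _) hts, hζ1.mono fun x hx => by simp [hx]⟩
  exact ζ.contMDiff.contDiff.contDiffAt.mul (hu.contDiffAt (hΩ.mem_nhds (hk'Ω (hts hx))))

lemma abs_divergence_clm_apply_const_le (hA : DifferentiableAt ℝ A x) (ξ : E) :
    |divergence (fun y => A y ξ) x| ≤ Module.finrank ℝ E * (‖fderiv ℝ A x‖ * ‖ξ‖) := by
  have hflip : fderiv ℝ (fun y => A y ξ) x = (fderiv ℝ A x).flip ξ := by
    simp [fderiv_clm_apply hA (differentiableAt_const ξ)]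
  rw [divergence, hflip]
  refine (abs_trace_le _).trans (mul_le_mul_of_nonneg_left ?_ (Nat.cast_nonneg _))
  simpa using (fderiv ℝ A x).flip.le_opNorm ξ

lemma continuous_divergence_clm_apply_const (hA : DifferentiableAt ℝ A x) :
    Continuous fun ξ => divergence (fun y => A y ξ) x := by
  simp only [divergence, fderiv_clm_apply hA (differentiableAt_const _), fderiv_fun_const,
    Pi.zero_apply, ContinuousLinearMap.comp_zero, zero_add]
  exact continuous_trace.comp (fderiv ℝ A x).flip.continuous

variable [MeasurableSpace E] [BorelSpace E]

lemma integrable_comp_prodMk {F : Type*} [TopologicalSpace F] {G : E × F → ℝ} {f : E → F}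
    (hk : IsCompact k) (hkΩ : k ⊆ Ω) (hG : ContinuousOn G (Ω ×ˢ Set.univ))
    (hG0 : ∀ x ∉ k, ∀ p, G (x, p) = 0) (hf : ContinuousOn f Ω) :
    Integrable fun x => G (x, f x) :=
  integrable_of_continuousOn_of_support_subset hk
    ((hG.comp (continuousOn_id.prodMk hf) fun _ hx => ⟨hx, Set.mem_univ _⟩).mono hkΩ)
    fun x hx => by_contra fun hxk => hx (hG0 x hxk _)

/-- A `C¹` weak solution of `-div (A ∇u) = u` in `Ω`. -/
structure IsWeakSolution (A : E → E →L[ℝ] E) (Ω : Set E) (u : E → ℝ) : Prop where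
  contDiffOn : ContDiffOn ℝ 1 u Ω
  integral_eq : ∀ φ : E → ℝ, ContDiff ℝ ∞ φ → HasCompactSupport φ → tsupport φ ⊆ Ω →
    ∫ x in Ω, ⟪A x (∇ u x), ∇ φ x⟫ = ∫ x in Ω, u x * φ x

lemma IsWeakSolution.mollify_eq (hu : IsWeakSolution A Ω u) (hφ : ContDiff ℝ ∞ φ)
    (hc : HasCompactSupport φ) (hx : ∀ t ∈ tsupport φ, x - t ∈ Ω) :
    mollify φ u x = -∫ t, fderiv ℝ φ t (A (x - t) (∇ u (x - t))) := by
  set ψ : E → ℝ := fun y => φ (x - y)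
  have hψ : tsupport ψ = _ := tsupport_comp_eq_preimage φ (Homeomorph.subLeft x)
  have hψΩ : tsupport ψ ⊆ Ω := fun y hy => by
    rw [hψ] at hy
    simpa using hx (x - y) hy
  have hgrad (y w : E) : ⟪w, ∇ ψ y⟫ = -fderiv ℝ φ (x - y) w := by
    have : HasFDerivAt ψ _ y := (hφ.differentiable (by simp) (x - y)).hasFDerivAt.comp y
      ((hasFDerivAt_id y).const_sub x)
    rw [real_inner_comm, inner_gradient_left, this.fderiv]
    simp
  have hout {y : E} (hy : y ∉ Ω) : ψ y = 0 ∧ fderiv ℝ ψ y = 0 :=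
    ⟨image_eq_zero_of_notMem_tsupport fun h => hy (hψΩ h),
      fderiv_of_notMem_tsupport ℝ fun h => hy (hψΩ h)⟩
  have hweak := hu.integral_eq ψ (hφ.comp (contDiff_const.sub contDiff_id))
    (hc.comp_homeomorph (Homeomorph.subLeft x)) hψΩ
  rw [setIntegral_eq_integral_of_forall_compl_eq_zero fun y hy => by simp [gradient, hout hy],
    setIntegral_eq_integral_of_forall_compl_eq_zero fun y hy => by simp [hout hy],
    ← integral_sub_left_eq_self _ volume x,
    ← integral_sub_left_eq_self (fun y => u y * ψ y) volume x] at hweak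
  simpa [hgrad, integral_neg, mollify_apply, ψ, mul_comm] using hweak.symm

lemma IsWeakSolution.helmholtz_mollify (hu : IsWeakSolution A Ω u) (hA : ContDiffOn ℝ 1 A Ω)
    (hΩ : IsOpen Ω) (hxΩ : x ∈ Ω) (hφ : ContDiff ℝ ∞ φ) (hc : HasCompactSupport φ)
    (hv : ContDiff ℝ 1 v) (hx : ∀ t ∈ tsupport φ, x - t ∈ Ω ∧ v =ᶠ[𝓝 (x - t)] u) :
    helmholtz A (mollify φ v) x = divergence (fun y => A y (mollify φ (∇ v) x)) x +
      ∫ t, fderiv ℝ φ t ((A x - A (x - t)) (∇ v (x - t))) := by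
  have hφ1 : ContDiff ℝ 1 φ := hφ.of_le (by simp)
  have hDφ := hφ1.continuous_fderiv one_ne_zero
  have hgrad : Continuous (∇ v) := (contDiff_gradient hv (m := 0) (by simp)).continuous
  have hzero {t : E} (ht : t ∉ tsupport φ) : φ t = 0 ∧ fderiv ℝ φ t = 0 :=
    ⟨image_eq_zero_of_notMem_tsupport ht, fderiv_of_notMem_tsupport ℝ ht⟩
  have hmol : mollify φ v x = -∫ t, fderiv ℝ φ t (A (x - t) (∇ v (x - t))) := by
    have hvu : mollify φ v x = mollify φ u x := integral_congr_ae <| ae_of_all _ fun t => by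
      by_cases ht : t ∈ tsupport φ
      · simp [(hx t ht).2.self_of_nhds]
      · simp [hzero ht]
    rw [hvu, hu.mollify_eq hφ hc fun t ht => (hx t ht).1]
    refine congrArg _ <| integral_congr_ae <| ae_of_all _ fun t => ?_
    by_cases ht : t ∈ tsupport φ
    · simp [gradient, (hx t ht).2.fderiv_eq]
    · simp [hzero ht]
  have hint (L : E → E →L[ℝ] E) (hL : ContinuousOn L (tsupport φ)) :
      Integrable fun t => fderiv ℝ φ t (L t (∇ v (x - t))) :=
    integrable_of_continuousOn_of_support_subset hc
      (hDφ.continuousOn.clm_apply (hL.clm_apply (hgrad.comp (by fun_prop)).continuousOn))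
      fun t ht => by_contra fun hts => ht (by simp [hzero hts])
  have hAx : DifferentiableAt ℝ A x :=
    (hA.contDiffAt (hΩ.mem_nhds hxΩ)).differentiableAt one_ne_zero
  rw [helmholtz, gradient_mollify hφ1 hc hv, divergence_apply_mollify hAx hφ1 hc hgrad, hmol,
    add_assoc, ← sub_eq_add_neg, ← integral_sub (hint (fun _ => A x) continuousOn_const)
      (hint (fun t => A (x - t)) (hA.continuousOn.comp (by fun_prop) fun t ht => (hx t ht).1))]
  simp

/-- The commutator in Friedrichs' lemma, between mollification at scale `ε` and multiplication by
`A`, applied to the field `G` after taking the divergence. -/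
def friedrichsCommutator (ρ : E → ℝ) (A : E → E →L[ℝ] E) (G : E → E) (x : E) (ε : ℝ) : ℝ :=
  ∫ z, fderiv ℝ ρ z ((ε⁻¹ • (A x - A (x - ε • z))) (G (x - ε • z)))

namespace IsMollifier

variable (hρ : IsMollifier ρ)
include hρ

lemma norm_friedrichsCommutator_integrand_le (hA : ∀ y ∈ closedBall x r, DifferentiableAt ℝ A y)
    (hM : ∀ y ∈ closedBall x r, ‖fderiv ℝ A y‖ ≤ M) (hB : ∀ y, ‖G y‖ ≤ B) (hε : 0 < ε)
    (hεr : ε ≤ r) (z : E) :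
    ‖fderiv ℝ ρ z ((ε⁻¹ • (A x - A (x - ε • z))) (G (x - ε • z)))‖ ≤
      ‖fderiv ℝ ρ z‖ * (M * B) := by
  rcases le_or_gt ‖z‖ 1 with hz | hz
  · exact (ContinuousLinearMap.le_opNorm _ _).trans <| mul_le_mul_of_nonneg_left
      (norm_smul_sub_apply_le hA hM hB hε hεr hz) (norm_nonneg _)
  · simp [hρ.fderiv_eq_zero hz]

lemma norm_friedrichsCommutator_le (hA : ∀ y ∈ closedBall x r, DifferentiableAt ℝ A y)
    (hM : ∀ y ∈ closedBall x r, ‖fderiv ℝ A y‖ ≤ M) (hB : ∀ y, ‖G y‖ ≤ B) (hε : 0 < ε)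
    (hεr : ε ≤ r) :
    ‖friedrichsCommutator ρ A G x ε‖ ≤ (∫ z, ‖fderiv ℝ ρ z‖) * (M * B) := by
  rw [← integral_mul_const]
  exact norm_integral_le_of_norm_le (hρ.integrable_norm_fderiv.mul_const _) <|
    ae_of_all _ (hρ.norm_friedrichsCommutator_integrand_le hA hM hB hε hεr)

lemma integrable_friedrichsCommutator_integrand (hA : ContinuousOn A (closedBall x r))
    (hG : Continuous G) (hε : 0 < ε) (hεr : ε ≤ r) :
    Integrable fun z => fderiv ℝ ρ z ((ε⁻¹ • (A x - A (x - ε • z))) (G (x - ε • z))) := by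
  refine integrable_of_continuousOn_of_support_subset (isCompact_closedBall 0 1) ?_ fun z hz => ?_
  · have hAz : ContinuousOn (fun z => A (x - ε • z)) (closedBall 0 1) :=
      hA.comp (by fun_prop) fun z hz => sub_smul_mem_closedBall hε hεr (by simpa using hz)
    have hGz : Continuous fun z => G (x - ε • z) := hG.comp (by fun_prop)
    have hdiff : ContinuousOn (fun z => ε⁻¹ • (A x - A (x - ε • z))) (closedBall 0 1) :=
      (continuousOn_const.sub hAz).const_smul ε⁻¹
    have hDρ := (hρ.contDiff_one.continuous_fderiv one_ne_zero).continuousOn (s := closedBall 0 1)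
    exact hDρ.clm_apply (hdiff.clm_apply hGz.continuousOn)
  · by_contra hz1
    exact hz (by simp [hρ.fderiv_eq_zero (by simpa using hz1 : 1 < ‖z‖)])

/-- Friedrichs' lemma. -/
lemma tendsto_friedrichsCommutator (hr : 0 < r)
    (hA : ∀ y ∈ closedBall x r, DifferentiableAt ℝ A y)
    (hM : ∀ y ∈ closedBall x r, ‖fderiv ℝ A y‖ ≤ M) (hG : Continuous G) (hB : ∀ y, ‖G y‖ ≤ B) :
    Tendsto (friedrichsCommutator ρ A G x) (𝓝[>] 0)
      (𝓝 (-divergence (fun y => A y (G x)) x)) := by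
  have hAx : DifferentiableAt ℝ A x := hA x (mem_closedBall_self hr.le)
  have hsmall : ∀ᶠ ε in 𝓝[>] (0 : ℝ), 0 < ε ∧ ε ≤ r := Ioc_mem_nhdsGT hr
  have hflip : fderiv ℝ (fun y => A y (G x)) x = (fderiv ℝ A x).flip (G x) := by
    simp [fderiv_clm_apply hAx (differentiableAt_const _)]
  rw [divergence, hflip, ← hρ.integral_fderiv_apply_clm]
  refine tendsto_integral_filter_of_dominated_convergence _
    (hsmall.mono fun ε hε => (hρ.integrable_friedrichsCommutator_integrand (fun y hy =>
      (hA y hy).continuousAt.continuousWithinAt) hG hε.1 hε.2).aestronglyMeasurable)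
    (hsmall.mono fun ε hε => ae_of_all _
      (hρ.norm_friedrichsCommutator_integrand_le hA hM hB hε.1 hε.2))
    (hρ.integrable_norm_fderiv.mul_const _) (ae_of_all _ fun z => ?_)
  have hslope : Tendsto (fun ε : ℝ => ε⁻¹ • (A x - A (x - ε • z))) (𝓝[>] 0)
      (𝓝 (fderiv ℝ A x z)) := by
    have := (hAx.hasFDerivAt.hasLineDerivAt (-z)).tendsto_slope_zero_right.neg
    have hneg (ε : ℝ) : x + ε • -z = x - ε • z := by rw [smul_neg, sub_eq_add_neg]
    simpa only [hneg, map_neg, neg_neg, ← smul_neg, neg_sub] using this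
  have hGz : Tendsto (fun ε : ℝ => G (x - ε • z)) (𝓝[>] 0) (𝓝 (G x)) := by
    have : Continuous fun ε : ℝ => G (x - ε • z) := by fun_prop
    simpa using (this.tendsto 0).mono_left nhdsWithin_le_nhds
  have happly : Continuous fun p : (E →L[ℝ] E) × E => fderiv ℝ ρ z (p.1 p.2) := by fun_prop
  exact (happly.tendsto (fderiv ℝ A x z, G x)).comp (hslope.prodMk_nhds hGz)

lemma helmholtz_mollify_rescale (hu : IsWeakSolution A Ω u) (hA : ContDiffOn ℝ 1 A Ω)
    (hΩ : IsOpen Ω) (hε : 0 < ε) (hv : ContDiff ℝ 1 v) (hx : closedBall x ε ⊆ Ω)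
    (hvu : ∀ y ∈ closedBall x ε, v =ᶠ[𝓝 y] u) :
    helmholtz A (mollify (rescale ρ ε) v) x =
      divergence (fun y => A y (mollify (rescale ρ ε) (∇ v) x)) x +
        friedrichsCommutator ρ A (∇ v) x ε := by
  have hmem {t : E} (ht : t ∈ tsupport (rescale ρ ε)) : x - t ∈ closedBall x ε := by
    simpa using hρ.tsupport_rescale_subset hε ht
  rw [hu.helmholtz_mollify hA hΩ (hx (mem_closedBall_self hε.le)) hρ.contDiff_rescale
    (hρ.hasCompactSupport_rescale hε) hv fun t ht => ⟨hx (hmem ht), hvu _ (hmem ht)⟩,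
    hρ.integral_fderiv_rescale_apply hε fun t => (A x - A (x - t)) (∇ v (x - t))]
  simp [friedrichsCommutator]

lemma norm_helmholtz_mollify_rescale_le (hu : IsWeakSolution A Ω u) (hA : ContDiffOn ℝ 1 A Ω)
    (hΩ : IsOpen Ω) (hv : ContDiff ℝ 1 v) (hx : closedBall x r ⊆ Ω)
    (hvu : ∀ y ∈ closedBall x r, v =ᶠ[𝓝 y] u) (hM : ∀ y ∈ closedBall x r, ‖fderiv ℝ A y‖ ≤ M)
    (hB : ∀ y, ‖∇ v y‖ ≤ B) (hε : 0 < ε) (hεr : ε ≤ r) :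
    ‖helmholtz A (mollify (rescale ρ ε) v) x‖ ≤
      Module.finrank ℝ E * (M * ((∫ z, ‖ρ z‖) * B)) + (∫ z, ‖fderiv ℝ ρ z‖) * (M * B) := by
  have hxr : x ∈ closedBall x r := mem_closedBall_self (hε.le.trans hεr)
  have hsub : closedBall x ε ⊆ closedBall x r := closedBall_subset_closedBall hεr
  have hdiff : ∀ y ∈ closedBall x r, DifferentiableAt ℝ A y := fun y hy =>
    (hA.contDiffAt (hΩ.mem_nhds (hx hy))).differentiableAt one_ne_zero
  have : 0 ≤ M := (norm_nonneg (fderiv ℝ A x)).trans (hM x hxr)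
  rw [hρ.helmholtz_mollify_rescale hu hA hΩ hε hv (hsub.trans hx) fun y hy => hvu y (hsub hy)]
  refine (norm_add_le _ _).trans
    (add_le_add ?_ (hρ.norm_friedrichsCommutator_le hdiff hM hB hε hεr))
  refine (abs_divergence_clm_apply_const_le (hdiff x hxr) _).trans ?_
  gcongr
  · exact hM x hxr
  · exact hρ.norm_mollify_rescale_le hε hB x

lemma tendsto_helmholtz_mollify_rescale (hu : IsWeakSolution A Ω u) (hA : ContDiffOn ℝ 1 A Ω)
    (hΩ : IsOpen Ω) (hr : 0 < r) (hv : ContDiff ℝ 1 v) (hx : closedBall x r ⊆ Ω)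
    (hvu : ∀ y ∈ closedBall x r, v =ᶠ[𝓝 y] u) (hM : ∀ y ∈ closedBall x r, ‖fderiv ℝ A y‖ ≤ M)
    (hB : ∀ y, ‖∇ v y‖ ≤ B) :
    Tendsto (fun ε => helmholtz A (mollify (rescale ρ ε) v) x) (𝓝[>] 0) (𝓝 0) := by
  have hdiff : ∀ y ∈ closedBall x r, DifferentiableAt ℝ A y := fun y hy =>
    (hA.contDiffAt (hΩ.mem_nhds (hx hy))).differentiableAt one_ne_zero
  have hgrad : Continuous (∇ v) := (contDiff_gradient hv (m := 0) (by simp)).continuous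
  have hcont := continuous_divergence_clm_apply_const (hdiff x (mem_closedBall_self hr.le))
  have hlim := ((hcont.tendsto _).comp (hρ.tendsto_mollify_rescale hgrad hB x)).add
    (hρ.tendsto_friedrichsCommutator hr hdiff hM hgrad hB)
  rw [add_neg_cancel] at hlim
  refine hlim.congr' ?_
  filter_upwards [Ioc_mem_nhdsGT hr] with ε hε
  have hsub : closedBall x ε ⊆ closedBall x r := closedBall_subset_closedBall hε.2
  exact (hρ.helmholtz_mollify_rescale hu hA hΩ hε.1 hv (hsub.trans hx)
    fun y hy => hvu y (hsub hy)).symm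

end IsMollifier

namespace IsWeakSolution

variable (hu : IsWeakSolution A Ω u)
include hu

lemma exists_approx (hΩ : IsOpen Ω) (hA : ContDiffOn ℝ 1 A Ω) (hk : IsCompact k) (hkΩ : k ⊆ Ω) :
    ∃ (U : ℝ → E → ℝ) (B : ℝ), (∀ ε > 0, ContDiff ℝ 2 (U ε)) ∧
      (∀ᶠ ε in 𝓝[>] 0, ∀ x ∈ k, ‖(U ε x, ∇ (U ε) x, helmholtz A (U ε) x)‖ ≤ B) ∧
      ∀ x ∈ k, Tendsto (fun ε => (U ε x, ∇ (U ε) x, helmholtz A (U ε) x)) (𝓝[>] 0)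
        (𝓝 (u x, ∇ u x, 0)) := by
  obtain ⟨r, hr, hrΩ⟩ := hk.exists_cthickening_subset_open hΩ hkΩ
  have hkr : IsCompact (cthickening r k) := hk.cthickening
  have hball {x : E} (hx : x ∈ k) : closedBall x r ⊆ cthickening r k :=
    closedBall_subset_cthickening hx r
  obtain ⟨v, hv, hvc, hvu⟩ := exists_contDiff_eventuallyEq_nhdsSet hΩ hu.contDiffOn hkr hrΩ
  have hvu' : ∀ y ∈ cthickening r k, v =ᶠ[𝓝 y] u := eventually_nhdsSet_iff_forall.1 hvu
  obtain ⟨ρ, hρ⟩ := exists_isMollifier (E := E)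
  obtain ⟨M, hM⟩ := hkr.exists_bound_of_continuousOn
    ((hA.continuousOn_fderiv_of_isOpen hΩ le_rfl).mono hrΩ)
  have hgrad : Continuous (∇ v) := (contDiff_gradient hv (m := 0) (by simp)).continuous
  obtain ⟨B₀, hB₀⟩ := hv.continuous.bounded_above_of_compact_support hvc
  obtain ⟨B₁, hB₁⟩ := hgrad.bounded_above_of_compact_support (hvc.mono' support_gradient_subset)
  have hgradU {ε : ℝ} (hε : 0 < ε) :
      ∇ (mollify (rescale ρ ε) v) = mollify (rescale ρ ε) (∇ v) :=
    gradient_mollify (hρ.contDiff_rescale.of_le (by simp)) (hρ.hasCompactSupport_rescale hε) hv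
  refine ⟨fun ε => mollify (rescale ρ ε) v, max ((∫ z, ‖ρ z‖) * B₀) (max ((∫ z, ‖ρ z‖) * B₁)
    (Module.finrank ℝ E * (M * ((∫ z, ‖ρ z‖) * B₁)) + (∫ z, ‖fderiv ℝ ρ z‖) * (M * B₁))),
    fun ε hε => ?_, ?_, fun x hx => ?_⟩
  · exact contDiff_mollify (k := 2) (hρ.contDiff_rescale.of_le (mod_cast le_top))
      (hρ.hasCompactSupport_rescale hε) hv.continuous
  · filter_upwards [Ioc_mem_nhdsGT hr] with ε hε x hx
    refine max_le_max (hρ.norm_mollify_rescale_le hε.1 hB₀ x) (max_le_max ?_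
      (hρ.norm_helmholtz_mollify_rescale_le hu hA hΩ hv ((hball hx).trans hrΩ)
        (fun y hy => hvu' y (hball hx hy)) (fun y hy => hM y (hball hx hy)) hB₁ hε.1 hε.2))
    exact hgradU hε.1 ▸ hρ.norm_mollify_rescale_le hε.1 hB₁ x
  · have hux : v =ᶠ[𝓝 x] u := hvu' x (self_subset_cthickening k hx)
    have hgradx : ∇ v x = ∇ u x := by simp [gradient, hux.fderiv_eq]
    refine (hux.self_of_nhds ▸ hρ.tendsto_mollify_rescale hv.continuous hB₀ x).prodMk_nhds
      (Tendsto.prodMk_nhds ?_ (hρ.tendsto_helmholtz_mollify_rescale hu hA hΩ hr hv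
        ((hball hx).trans hrΩ) (fun y hy => hvu' y (hball hx hy))
        (fun y hy => hM y (hball hx hy)) hB₁))
    refine (hgradx ▸ hρ.tendsto_mollify_rescale hgrad hB₁ x).congr' ?_
    filter_upwards [self_mem_nhdsWithin] with ε hε
    rw [hgradU hε]

/-- Although `u` need not be twice differentiable, any integral inequality valid for all `C²`
functions `U` holds for `u` with `div (A ∇U) + U` replaced by `0`. -/
lemma integrable_and_integral_nonneg (hΩ : IsOpen Ω) (hA : ContDiffOn ℝ 1 A Ω) (hk : IsCompact k)
    (hkΩ : k ⊆ Ω) {G : E × ℝ × E × ℝ → ℝ} (hG : ContinuousOn G (Ω ×ˢ Set.univ))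
    (hG0 : ∀ x ∉ k, ∀ p, G (x, p) = 0)
    (hpos : ∀ U, ContDiff ℝ 2 U → 0 ≤ ∫ x, G (x, U x, ∇ U x, helmholtz A U x)) :
    Integrable (fun x => G (x, u x, ∇ u x, 0)) ∧ 0 ≤ ∫ x, G (x, u x, ∇ u x, 0) := by
  have hgradu : ContinuousOn (∇ u) Ω :=
    (contDiffOn_gradient hΩ hu.contDiffOn (m := 0) (by simp)).continuousOn
  refine ⟨integrable_comp_prodMk hk hkΩ hG hG0 <|
    hu.contDiffOn.continuousOn.prodMk (hgradu.prodMk continuousOn_const), ?_⟩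
  obtain ⟨U, B, hU, hUB, hlim⟩ := hu.exists_approx hΩ hA hk hkΩ
  obtain ⟨C, hC⟩ := (hk.prod (isCompact_closedBall (0 : ℝ × E × ℝ) B)).exists_bound_of_continuousOn
    (hG.mono (Set.prod_mono hkΩ (Set.subset_univ _)))
  have hpos_small : ∀ᶠ ε : ℝ in 𝓝[>] 0, 0 < ε := self_mem_nhdsWithin
  refine ge_of_tendsto (tendsto_integral_filter_of_dominated_convergence (k.indicator fun _ => C)
    (hpos_small.mono fun ε hε => ?_) (hUB.mono fun ε hε => ae_of_all _ fun x => ?_)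
    ((integrable_indicator_iff hk.measurableSet).2 (integrableOn_const hk.measure_lt_top.ne))
    (ae_of_all _ fun x => ?_)) (hpos_small.mono fun ε hε => hpos (U ε) (hU ε hε))
  · have hgradU : Continuous (∇ (U ε)) :=
      (contDiff_gradient (hU ε hε) (m := 0) (by norm_num)).continuous
    exact (integrable_comp_prodMk hk hkΩ hG hG0 <| (hU ε hε).continuous.continuousOn.prodMk <|
      hgradU.continuousOn.prodMk (continuousOn_helmholtz hΩ hA (hU ε hε))).aestronglyMeasurable
  · by_cases hx : x ∈ k
    · simpa [hx] using hC (x, _) ⟨hx, mem_closedBall_zero_iff.2 (hε x hx)⟩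
    · simp [hx, hG0 x hx]
  · by_cases hx : x ∈ k
    · have hGx : ContinuousAt G (x, u x, ∇ u x, 0) :=
        hG.continuousAt ((hΩ.prod isOpen_univ).mem_nhds ⟨hkΩ hx, Set.mem_univ _⟩)
      exact hGx.tendsto.comp (tendsto_const_nhds.prodMk_nhds (hlim x hx))
    · simp [hG0 x hx]

end IsWeakSolution

end WeakSolution

section StandardWeight

variable {b γ δ α a τ ε Λ y₁ s t t₁ T m : ℝ}

/-- The function `1 + a |x| ^ 2` of `t = log |x|`, which separates the regimes `σ ≈ 0` and `σ ≈ 1`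
of the weight. -/
def switch (a t : ℝ) : ℝ := 1 + a * Real.exp (2 * t)

/-- An increasing function tending to `1`, whose logarithmic derivative is `γ exp (-α t)`. -/
def tailFactor (γ α t : ℝ) : ℝ := Real.exp (-(γ / α) * Real.exp (-α * t))

lemma one_le_switch (ha : 0 ≤ a) : 1 ≤ switch a t :=
  le_add_of_nonneg_right (by positivity)

lemma switch_pos (ha : 0 ≤ a) : 0 < switch a t := one_pos.trans_le (one_le_switch ha)

lemma mul_exp_le_switch : a * Real.exp (2 * t) ≤ switch a t := le_add_of_nonneg_left zero_le_one

lemma tailFactor_pos : 0 < tailFactor γ α t := Real.exp_pos _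

lemma tailFactor_le_one (hγ : 0 ≤ γ) (hα : 0 ≤ α) : tailFactor γ α t ≤ 1 :=
  Real.exp_le_one_iff.2 (mul_nonpos_of_nonpos_of_nonneg (neg_nonpos.2 (by positivity))
    (Real.exp_pos _).le)

lemma exp_neg_div_le_tailFactor (hγ : 0 ≤ γ) (hα : 0 ≤ α) (ht : 0 ≤ t) :
    Real.exp (-(γ / α)) ≤ tailFactor γ α t := by
  have := mul_le_mul_of_nonneg_left (exp_neg_mul_le_one hα ht) (by positivity : 0 ≤ γ / α)
  exact Real.exp_le_exp.2 (by linarith)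

lemma hasDerivAt_exp_const_mul (c t : ℝ) :
    HasDerivAt (fun t => Real.exp (c * t)) (c * Real.exp (c * t)) t := by
  simpa [mul_comm] using ((hasDerivAt_id t).const_mul c).exp

lemma hasDerivAt_switch : HasDerivAt (switch a) (2 * (a * Real.exp (2 * t))) t :=
  (((hasDerivAt_exp_const_mul 2 t).const_mul a).const_add 1).congr_deriv (by ring)

lemma hasDerivAt_tailFactor (hα : α ≠ 0) :
    HasDerivAt (tailFactor γ α) (tailFactor γ α t * (γ * Real.exp (-α * t))) t := by
  refine (((hasDerivAt_exp_const_mul (-α) t).const_mul (-(γ / α))).exp).congr_deriv ?_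
  rw [tailFactor]
  field_simp

lemma contDiff_switch {k : WithTop ℕ∞} : ContDiff ℝ k (switch a) := by
  unfold switch
  fun_prop

lemma contDiff_slopeExcess {k : WithTop ℕ∞} (ha : 0 ≤ a) :
    ContDiff ℝ k fun t => τ * tailFactor γ α t / switch a t := by
  have : ContDiff ℝ k (tailFactor γ α) := by
    unfold tailFactor
    fun_prop
  exact (contDiff_const.mul this).div contDiff_switch fun t => (switch_pos ha).ne'

/-- The weight with slope excess `τ exp (-(γ / α) exp (-α t)) / (1 + a exp (2 t))`. -/
def standardWeight (b γ δ : ℝ) (hα : 0 < α) (ha : 0 ≤ a) (hτ : 0 ≤ τ) : CarlemanWeight b γ δ α where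
  P t := τ * tailFactor γ α t / switch a t
  σ t := a * Real.exp (2 * t) / switch a t
  Ψ t := b * t + ∫ s in (0 : ℝ)..t, τ * tailFactor γ α s / switch a s
  H t := Real.exp ((1 - 2 * b) * t + γ / α * Real.exp (-α * t)
    - (2 - δ) / 2 * Real.log (switch a t))
  hasDerivAt_Ψ t := by
    have hcont := (contDiff_slopeExcess (τ := τ) (γ := γ) (α := α) (k := 0) ha).continuous
    exact (((hasDerivAt_id t).const_mul b).add
      (hcont.integral_hasStrictDerivAt 0 t).hasDerivAt).congr_deriv (by simp)
  hasDerivAt_P t := by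
    have hS := (switch_pos (t := t) ha).ne'
    refine (((hasDerivAt_tailFactor hα.ne').const_mul τ).div hasDerivAt_switch hS).congr_deriv ?_
    field_simp
  hasDerivAt_H t := by
    have hS := (switch_pos (t := t) ha).ne'
    refine ((((hasDerivAt_id t).const_mul (1 - 2 * b)).add
      ((hasDerivAt_exp_const_mul (-α) t).const_mul (γ / α))).sub
      ((hasDerivAt_switch.log hS).const_mul ((2 - δ) / 2))).exp.congr_deriv ?_
    simp only [Pi.add_apply, Pi.sub_apply, id_eq]
    field_simp
    ring
  P_nonneg t := div_nonneg (mul_nonneg hτ tailFactor_pos.le) (switch_pos ha).le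
  σ_nonneg t := div_nonneg (by positivity) (switch_pos ha).le
  σ_le_one t := (div_le_one (switch_pos ha)).2 mul_exp_le_switch
  H_pos t := Real.exp_pos _
  contDiff_P := contDiff_slopeExcess ha
  contDiff_H := by
    have := (contDiff_switch (a := a) (k := 1)).log fun t => (switch_pos ha).ne'
    fun_prop

lemma CarlemanWeight.mul_sub_le_Ψ_sub (w : CarlemanWeight b γ δ α) (hb : 0 ≤ b)
    (hm : ∀ r ∈ Set.Icc s t, m ≤ w.P r) (hst : s ≤ t) : m * (t - s) ≤ w.Ψ t - w.Ψ s := by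
  refine (convex_Icc s t).mul_sub_le_image_sub_of_le_deriv w.contDiff_Ψ.continuous.continuousOn
    (w.contDiff_Ψ.differentiable two_ne_zero).differentiableOn (fun r hr => ?_)
    s (Set.left_mem_Icc.2 hst) t (Set.right_mem_Icc.2 hst) hst
  rw [(w.hasDerivAt_Ψ r).deriv]
  exact (hm r (interior_subset hr)).trans (le_add_of_nonneg_left hb)

lemma mul_exp_le_one_of_le (ha : 0 ≤ a) (ht : t ≤ t₁) (h : a * Real.exp (2 * t₁) ≤ 1) :
    a * Real.exp (2 * t) ≤ 1 :=
  h.trans' (by gcongr)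

namespace standardWeight

variable (hα : 0 < α) (ha : 0 < a) (hτ : 0 ≤ τ)

lemma P_le_div_switch (hγ : 0 ≤ γ) :
    (standardWeight b γ δ hα ha.le hτ).P t ≤ τ / switch a t :=
  div_le_div_of_nonneg_right (mul_le_of_le_one_right hτ (tailFactor_le_one hγ hα.le))
    (switch_pos ha.le).le

lemma P_le (hγ : 0 ≤ γ) : (standardWeight b γ δ hα ha.le hτ).P t ≤ τ :=
  (P_le_div_switch hα ha hτ hγ).trans (div_le_self hτ (one_le_switch ha.le))

lemma le_P (hγ : 0 ≤ γ) (ht : 0 ≤ t) (hat : a * Real.exp (2 * t) ≤ 1) :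
    τ * (Real.exp (-(γ / α)) / 2) ≤ (standardWeight b γ δ hα ha.le hτ).P t := by
  have hS : switch a t ≤ 2 := by
    rw [switch]
    linarith
  calc τ * (Real.exp (-(γ / α)) / 2) = τ * Real.exp (-(γ / α)) / 2 := by ring
    _ ≤ τ * tailFactor γ α t / switch a t := by
        have := exp_neg_div_le_tailFactor hγ hα.le ht
        have := switch_pos (t := t) ha.le
        have := tailFactor_pos (γ := γ) (α := α) (t := t)
        gcongr

lemma σ_mul_exp_le : (standardWeight b γ δ hα ha.le hτ).σ t * Real.exp (-2 * t) ≤ a := by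
  have hexp : Real.exp (2 * t) * Real.exp (-2 * t) = 1 := by rw [← Real.exp_add]; simp
  calc a * Real.exp (2 * t) / switch a t * Real.exp (-2 * t)
      = a / switch a t := by rw [div_mul_eq_mul_div, mul_assoc, hexp, mul_one]
    _ ≤ a := div_le_self ha.le (one_le_switch ha.le)

lemma isAdmissible (hγ : 0 ≤ γ) (haε : a ≤ ε) (hτε : a * τ ^ 2 ≤ ε)
    (hy : Real.exp (-α * t₁) ≤ y₁) (hat : a * Real.exp (2 * t₁) ≤ 1)
    (hΛ : Real.exp (2 * t₁) * (|Λ| + 1) ≤ τ * (Real.exp (-(γ / α)) / 2)) :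
    (standardWeight b γ δ hα ha.le hτ).IsAdmissible ε Λ y₁ where
  σ_mul_sq_le t _ := by
    set w := standardWeight b γ δ hα ha.le hτ
    calc w.σ t * w.P t ^ 2 * Real.exp (-2 * t) = w.σ t * Real.exp (-2 * t) * w.P t ^ 2 := by ring
      _ ≤ a * τ ^ 2 := by
          gcongr
          · exact σ_mul_exp_le hα ha hτ
          · exact w.P_nonneg t
          · exact P_le hα ha hτ hγ
      _ ≤ ε := hτε
  σ_le t _ := (σ_mul_exp_le hα ha hτ).trans haε
  small_or_large t ht := by
    set w := standardWeight b γ δ hα ha.le hτ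
    rcases le_total t₁ t with htt | htt
    · exact .inl (hy.trans' (Real.exp_le_exp.2 (by nlinarith)))
    · have hP : Real.exp (2 * t) * (|Λ| + 1) ≤ w.P t := calc
        _ ≤ Real.exp (2 * t₁) * (|Λ| + 1) := by gcongr
        _ ≤ _ := hΛ.trans (le_P hα ha hτ hγ ht.le (mul_exp_le_one_of_le ha.le htt hat))
      have hexp : 1 ≤ Real.exp (2 * t) := Real.one_le_exp (by positivity)
      have hΛP : |Λ| + 1 ≤ w.P t := hP.trans' (le_mul_of_one_le_left (by positivity) hexp)
      refine .inr ⟨by linarith [le_abs_self Λ], ?_⟩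
      calc Λ ≤ (|Λ| + 1) * 1 := by linarith [le_abs_self Λ]
        _ ≤ w.P t * (w.P t * Real.exp (-2 * t)) := by
            gcongr
            · linarith [abs_nonneg Λ]
            · rw [neg_mul, Real.exp_neg, ← div_eq_mul_inv, le_div_iff₀ (by positivity), one_mul]
              exact hP.trans' (le_mul_of_one_le_right (by positivity) (by simp))
        _ = w.P t ^ 2 * Real.exp (-2 * t) := by ring

lemma le_H (hγ : 0 ≤ γ) (hδ : 0 ≤ δ) (hb : 0 ≤ b) (ht : 0 ≤ t) (htT : t ≤ T)
    (hat : a * Real.exp (2 * t) ≤ 1) :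
    Real.exp (-(2 * b * T) - Real.log 2) ≤ (standardWeight b γ δ hα ha.le hτ).H t := by
  have hlog : Real.log (switch a t) ≤ Real.log 2 :=
    Real.log_le_log (switch_pos ha.le) (by rw [switch]; linarith)
  have hδlog : (2 - δ) / 2 * Real.log (switch a t) ≤ 1 * Real.log 2 :=
    mul_le_mul (by linarith) hlog (Real.log_nonneg (one_le_switch ha.le)) zero_le_one
  have : 2 * b * t ≤ 2 * b * T := by gcongr
  have : 0 ≤ γ / α * Real.exp (-α * t) := by positivity
  exact Real.exp_le_exp.2 (by linarith)

lemma H_le (hγ : 0 ≤ γ) (hδ2 : δ ≤ 2) (hb : 0 ≤ b) (ht : 0 ≤ t) (htT : t ≤ T) :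
    (standardWeight b γ δ hα ha.le hτ).H t ≤ Real.exp (T + γ / α) := by
  have hlog : 0 ≤ (2 - δ) / 2 * Real.log (switch a t) :=
    mul_nonneg (by linarith) (Real.log_nonneg (one_le_switch ha.le))
  have : γ / α * Real.exp (-α * t) ≤ γ / α :=
    mul_le_of_le_one_right (by positivity) (exp_neg_mul_le_one hα.le ht)
  have : 0 ≤ 2 * b * t := by positivity
  exact Real.exp_le_exp.2 (by linarith)

lemma Ψ_le (hγ : 0 ≤ γ) (ht : 0 ≤ t) :
    (standardWeight b γ δ hα ha.le hτ).Ψ t ≤ b * t + τ / (2 * a) := by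
  set w := standardWeight b γ δ hα ha.le hτ
  have hderiv (r : ℝ) : HasDerivAt (fun r => w.Ψ r - (b * r - τ / (2 * a) * Real.exp (-2 * r)))
      (w.P r - τ / a * Real.exp (-2 * r)) r := by
    refine ((w.hasDerivAt_Ψ r).sub (((hasDerivAt_id r).const_mul b).sub
      ((hasDerivAt_exp_const_mul (-2) r).const_mul (τ / (2 * a))))).congr_deriv ?_
    field_simp
    ring
  have hanti : Antitone fun r => w.Ψ r - (b * r - τ / (2 * a) * Real.exp (-2 * r)) := by
    refine antitone_of_deriv_nonpos (fun r => (hderiv r).differentiableAt) fun r => ?_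
    rw [(hderiv r).deriv, sub_nonpos]
    calc w.P r ≤ τ / (a * Real.exp (2 * r)) := (P_le_div_switch hα ha hτ hγ).trans
          (div_le_div_of_nonneg_left hτ (by positivity) mul_exp_le_switch)
      _ = τ / a * Real.exp (-2 * r) := by rw [neg_mul, Real.exp_neg]; field_simp
  have hzero : w.Ψ 0 = 0 := by simp [w, standardWeight]
  have : 0 ≤ τ / (2 * a) * Real.exp (-2 * t) := by positivity
  have := hanti ht
  simp only [hzero, mul_zero, Real.exp_zero] at this
  linarith

lemma H_mul_exp_Ψ_sq_le (hγ : 0 ≤ γ) (hδ2 : δ ≤ 2) (ht : 0 ≤ t) :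
    (standardWeight b γ δ hα ha.le hτ).H t *
        Real.exp ((standardWeight b γ δ hα ha.le hτ).Ψ t) ^ 2 ≤
      Real.exp (γ / α - (2 - δ) / 2 * Real.log a + τ / a) * Real.exp ((δ - 1) * t) := by
  have hlog : Real.log a + 2 * t ≤ Real.log (switch a t) := calc
    _ = Real.log (a * Real.exp (2 * t)) := by
        rw [Real.log_mul ha.ne' (Real.exp_pos _).ne', Real.log_exp]
    _ ≤ _ := Real.log_le_log (by positivity) mul_exp_le_switch
  have hδlog := mul_le_mul_of_nonneg_left hlog (by linarith : 0 ≤ (2 - δ) / 2)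
  have : γ / α * Real.exp (-α * t) ≤ γ / α :=
    mul_le_of_le_one_right (by positivity) (exp_neg_mul_le_one hα.le ht)
  have hΨ := Ψ_le (b := b) (δ := δ) hα ha hτ hγ ht
  have hhalf : τ / (2 * a) = τ / a / 2 := by field_simp
  have hH : (standardWeight b γ δ hα ha.le hτ).H t = Real.exp ((1 - 2 * b) * t
    + γ / α * Real.exp (-α * t) - (2 - δ) / 2 * Real.log (switch a t)) := rfl
  rw [hH, ← Real.exp_nat_mul, ← Real.exp_add, ← Real.exp_add, Real.exp_le_exp]
  push_cast
  linarith

end standardWeight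

lemma exists_isAdmissible (hb : 0 ≤ b) (hγ : 0 ≤ γ) (hδ : 0 ≤ δ) (hδ2 : δ ≤ 2) (hα : 0 < α)
    (hε : 0 < ε) (hε1 : ε ≤ 1) (Λ : ℝ) (hy₁ : 0 < y₁) (T : ℝ) :
    ∃ c > 0, ∃ h₀ > 0, ∃ h₁, ∀ᶠ τ in atTop, ∃ w : CarlemanWeight b γ δ α, w.IsAdmissible ε Λ y₁ ∧
      (∀ t ∈ Set.Icc 0 T, h₀ ≤ w.H t ∧ w.H t ≤ h₁) ∧
      (∀ s t, 0 ≤ s → s ≤ t → t ≤ T → c * τ * (t - s) ≤ w.Ψ t - w.Ψ s) ∧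
      ∃ C, ∀ t, 0 ≤ t → w.H t * Real.exp (w.Ψ t) ^ 2 ≤ C * Real.exp ((δ - 1) * t) := by
  have hc : 0 < Real.exp (-(γ / α)) / 2 := by positivity
  set t₁ := -Real.log y₁ / α
  refine ⟨_, hc, _, Real.exp_pos (-(2 * b * T) - Real.log 2), Real.exp (T + γ / α), ?_⟩
  filter_upwards [(tendsto_id.atTop_mul_const hc).eventually_ge_atTop
    (Real.exp (2 * t₁) * (|Λ| + 1)), eventually_ge_atTop 1, eventually_ge_atTop (Real.exp T),
    eventually_ge_atTop (Real.exp t₁)] with τ hτΛ hτ1 hτT hτt₁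
  have hτ : 0 < τ := by linarith
  have ha : 0 < (ε / τ) ^ 2 := by positivity
  have hε2 : ε ^ 2 ≤ ε := by nlinarith
  have hat {t : ℝ} (ht : Real.exp t ≤ τ) : (ε / τ) ^ 2 * Real.exp (2 * t) ≤ 1 := by
    rw [mul_comm 2 t, Real.exp_mul, Real.rpow_two, ← mul_pow, div_mul_eq_mul_div]
    refine pow_le_one₀ (by positivity) ((div_le_one hτ).2 ?_)
    exact (mul_le_of_le_one_left (Real.exp_pos t).le hε1).trans ht
  have hP {t : ℝ} (ht : t ≤ T) := mul_exp_le_one_of_le ha.le ht (hat hτT)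
  refine ⟨standardWeight b γ δ hα ha.le hτ.le, standardWeight.isAdmissible hα ha hτ.le hγ ?_ ?_ ?_
    (hat hτt₁) hτΛ, fun t ht => ⟨?_, ?_⟩, fun s t hs hst htT => ?_, _,
    fun t ht => standardWeight.H_mul_exp_Ψ_sq_le hα ha hτ.le hγ hδ2 ht⟩
  · rw [div_pow]
    exact (div_le_self (by positivity) (one_le_pow₀ hτ1)).trans hε2
  · rwa [div_pow, div_mul_cancel₀ _ (by positivity)]
  · rw [show -α * t₁ = Real.log y₁ by simp only [t₁]; field_simp, Real.exp_log hy₁]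
  · exact standardWeight.le_H hα ha hτ.le hγ hδ hb ht.1 ht.2 (hP ht.2)
  · exact standardWeight.H_le hα ha hτ.le hγ hδ2 hb ht.1 ht.2
  · refine CarlemanWeight.mul_sub_le_Ψ_sub _ hb (fun r hr => ?_) hst
    rw [mul_comm]
    exact standardWeight.le_P hα ha hτ.le hγ (hs.trans hr.1) (hP (hr.2.trans htT))

end StandardWeight

section WeakEstimates

variable {E : Type*} [NormedAddCommGroup E] [InnerProductSpace ℝ E]
  {A : E → E →L[ℝ] E} {χ ζ u U : E → ℝ} {x : E} {lam α K : ℝ}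

lemma continuousOn_carleman_integrand {W χ d : E → ℝ} {V : E → E} {s : Set E}
    (hW : ContinuousOn W s) (hχ : ContinuousOn χ s) (hV : ContinuousOn V s)
    (hd : ContinuousOn d s) (c : ℝ) :
    ContinuousOn (fun p : E × ℝ × E × ℝ => W p.1 * (c * ‖p.1‖ ^ 2 *
      (χ p.1 * p.2.2.2 + (2 * ⟪V p.1, p.2.2.1⟫ + p.2.1 * d p.1)) ^ 2
        - (χ p.1 * p.2.1) ^ 2)) (s ×ˢ Set.univ) := by
  have : Set.MapsTo (Prod.fst : E × ℝ × E × ℝ → E) (s ×ˢ Set.univ) s := fun p hp => hp.1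
  fun_prop (disch := assumption)

/-- The density of the weighted `L²` norms in the Carleman estimate, as a function of `log ‖x‖`. -/
def CarlemanWeight.density {b γ δ α : ℝ} (w : CarlemanWeight b γ δ α) (t : ℝ) : ℝ :=
  w.H t * Real.exp (w.Ψ t) ^ 2

lemma CarlemanWeight.continuous_density {b γ δ α : ℝ} (w : CarlemanWeight b γ δ α) :
    Continuous w.density :=
  w.contDiff_H.continuous.mul ((Real.continuous_exp.comp w.contDiff_Ψ.continuous).pow 2)

variable [FiniteDimensional ℝ E]

/-- The commutator of the operator `div (A ∇·)` with multiplication by `χ`, applied to `u`. -/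
def cutoffCommutator (A : E → E →L[ℝ] E) (χ u : E → ℝ) (x : E) : ℝ :=
  2 * ⟪A x (∇ χ x), ∇ u x⟫ + u x * divergence (fun y => A y (∇ χ y)) x

lemma helmholtz_mul (hA : DifferentiableAt ℝ A x) (hsym : ∀ ξ η, ⟪A x ξ, η⟫ = ⟪ξ, A x η⟫)
    (hχ : ContDiffAt ℝ 2 χ x) (hU : ContDiffAt ℝ 2 U x) :
    helmholtz A (fun y => χ y * U y) x = χ x * helmholtz A U x + cutoffCommutator A χ U x := by
  rw [helmholtz, divergence_apply_gradient_mul hA hsym hχ hU, helmholtz, cutoffCommutator]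
  ring

lemma eq_zero_of_notMem_tsupport (hx : x ∉ tsupport ζ) :
    ζ x = 0 ∧ ∇ ζ x = 0 ∧ divergence (fun y => A y (∇ ζ y)) x = 0 :=
  ⟨image_eq_zero_of_notMem_tsupport hx,
    Function.notMem_support.1 fun h => hx (support_gradient_subset h),
    Function.notMem_support.1 fun h => hx (support_divergence_apply_gradient_subset h)⟩

namespace IsDecayingElliptic

variable (h : IsDecayingElliptic A lam α K)
include h

/-- The pointwise form of Caccioppoli's inequality: after integration the divergence disappears. -/
lemma caccioppoli_pointwise (hζ : ContDiffAt ℝ 2 ζ x) (hU : ContDiffAt ℝ 2 U x)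
    (hx : x ∈ exteriorDomain E) :
    -divergence (fun y => (ζ y * (ζ y * U y)) • A y (∇ U y)) x ≤
      (ζ x ^ 2 + 2 * (1 + K) ^ 2 / lam * ‖∇ ζ x‖ ^ 2) * U x ^ 2
        - ζ x ^ 2 * (U x * helmholtz A U x) - lam / 2 * (ζ x ^ 2 * ‖∇ U x‖ ^ 2) := by
  have hlam := h.lam_pos
  have hdζ : DifferentiableAt ℝ ζ x := hζ.differentiableAt (by norm_num)
  have hdU : DifferentiableAt ℝ U x := hU.differentiableAt (by norm_num)
  have hdA : DifferentiableAt ℝ (fun y => A y (∇ U y)) x :=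
    ((h.contDiffAt hx).differentiableAt one_ne_zero).clm_apply
      (differentiableAt_gradient hU)
  have hdiv : divergence (fun y => (ζ y * (ζ y * U y)) • A y (∇ U y)) x =
      2 * (ζ x * U x * ⟪∇ ζ x, A x (∇ U x)⟫) + ζ x ^ 2 * ⟪∇ U x, A x (∇ U x)⟫
        + ζ x ^ 2 * (U x * (helmholtz A U x - U x)) := by
    rw [divergence_smul (hdζ.fun_mul (hdζ.fun_mul hdU)) hdA, ← inner_gradient_left,
      gradient_mul hdζ (hdζ.fun_mul hdU), gradient_mul hdζ hdU, helmholtz]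
    simp only [inner_add_left, real_inner_smul_left]
    ring
  have hcross : -(2 * (|ζ x| * ‖∇ U x‖ * (|U x| * (1 + K) * ‖∇ ζ x‖))) ≤
      2 * (ζ x * U x * ⟪∇ ζ x, A x (∇ U x)⟫) := by
    refine (neg_le_neg ?_).trans (neg_abs_le _)
    rw [abs_mul, abs_mul, abs_mul, abs_two]
    calc _ ≤ 2 * (|ζ x| * |U x| * (‖∇ ζ x‖ * ((1 + K) * ‖∇ U x‖))) := by
          gcongr
          exact (abs_real_inner_le_norm _ _).trans (by gcongr; exact h.norm_apply_le hx _)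
      _ = _ := by ring
  have hyoung : -(2 * (1 + K) ^ 2 / lam * ‖∇ ζ x‖ ^ 2 * U x ^ 2) ≤
      -(2 * (|ζ x| * ‖∇ U x‖ * (|U x| * (1 + K) * ‖∇ ζ x‖)))
        + lam / 2 * (ζ x ^ 2 * ‖∇ U x‖ ^ 2) := by
    convert neg_two_div_mul_sq_le_add (by positivity : 0 < 4 * lam) one_pos (|ζ x| * ‖∇ U x‖)
      (-(2 * (|U x| * (1 + K) * ‖∇ ζ x‖))) using 1
    · simp only [neg_sq, mul_pow, sq_abs]
      field_simp
      ring
    · simp only [mul_pow, sq_abs]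
      ring
  have hcoer : ζ x ^ 2 * (lam * ‖∇ U x‖ ^ 2) ≤ ζ x ^ 2 * ⟪∇ U x, A x (∇ U x)⟫ :=
    real_inner_comm (A x (∇ U x)) (∇ U x) ▸
      mul_le_mul_of_nonneg_left (h.coercive x hx (∇ U x)) (sq_nonneg (ζ x))
  rw [hdiv]
  linarith

end IsDecayingElliptic

variable [MeasurableSpace E] [BorelSpace E]

/-- Carleman's inequality for `u` with the weight `W (log ‖x‖)`: the weighted `L²` norm of a
truncation `χ u` is controlled by that of the commutator which the cutoff `χ` creates. Without the
integrability of the difference its integral would have the junk value `0`. -/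
def CarlemanInequality (A : E → E →L[ℝ] E) (κ : ℝ) (W : ℝ → ℝ) (u : E → ℝ) : Prop :=
  ∀ χ : E → ℝ, IsTestFunction χ →
    Integrable (fun x => W (Real.log ‖x‖) *
      (κ * ‖x‖ ^ 2 * cutoffCommutator A χ u x ^ 2 - (χ x * u x) ^ 2)) ∧
    0 ≤ ∫ x, W (Real.log ‖x‖) *
      (κ * ‖x‖ ^ 2 * cutoffCommutator A χ u x ^ 2 - (χ x * u x) ^ 2)

lemma CarlemanInequality.const_mul {κ : ℝ} {W : ℝ → ℝ} (hW : CarlemanInequality A κ W u) {c : ℝ}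
    (hc : 0 ≤ c) : CarlemanInequality A κ (fun t => c * W t) u := fun χ hχ => by
  simp only [mul_assoc c, integral_const_mul]
  exact ⟨(hW χ hχ).1.const_mul c, mul_nonneg hc (hW χ hχ).2⟩

namespace IsDecayingElliptic

variable (h : IsDecayingElliptic A lam α K)
include h

lemma caccioppoli_of_contDiff (hζ : IsTestFunction ζ) (hU : ContDiff ℝ 2 U) :
    0 ≤ ∫ x, ((ζ x ^ 2 + 2 * (1 + K) ^ 2 / lam * ‖∇ ζ x‖ ^ 2) * U x ^ 2
      - ζ x ^ 2 * (U x * helmholtz A U x) - lam / 2 * (ζ x ^ 2 * ‖∇ U x‖ ^ 2)) := by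
  set V : E → E := fun y => (ζ y * (ζ y * U y)) • A y (∇ U y)
  have hVζ : tsupport V ⊆ tsupport ζ :=
    closure_mono fun y hy => left_ne_zero_of_mul (left_ne_zero_of_smul hy)
  have hVc : ContDiff ℝ 1 V := contDiff_of_tsupport fun y hy => by
    have hyΩ := hζ.tsupport_subset (hVζ hy)
    have hζ1 := hζ.contDiff.of_le (m := 1) (by norm_num)
    exact (hζ1.mul (hζ1.mul (hU.of_le (by norm_num)))).contDiffAt.smul <|
      (h.contDiffAt hyΩ).clm_apply (contDiff_gradient hU (by norm_num)).contDiffAt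
  have hVs : HasCompactSupport V := hζ.hasCompactSupport.mono' ((subset_tsupport _).trans hVζ)
  have hV : Integrable (divergence V) :=
    integrable_of_continuousOn_of_support_subset hVs
      ((continuousOn_divergence isOpen_univ hVc.contDiffOn).mono (Set.subset_univ _))
      support_divergence_subset
  have hgrad {f : E → ℝ} (hf : ContDiff ℝ 2 f) : Continuous (∇ f) :=
    (contDiff_gradient hf (m := 0) (by norm_num)).continuous
  rw [← neg_zero, ← integral_divergence_eq_zero hVc hVs, ← integral_neg]
  refine integral_mono hV.neg (integrable_of_continuousOn_of_support_subset
    hζ.hasCompactSupport ?_ fun x hx => ?_) fun x => ?_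
  · have hcζ := hζ.contDiff.continuous
    have hcU := hU.continuous
    have hgζ := hgrad hζ.contDiff
    have hgU := hgrad hU
    have hcH := continuousOn_helmholtz isOpen_exteriorDomain h.contDiffOn hU
    exact ContinuousOn.mono (by fun_prop) hζ.tsupport_subset
  · by_contra hxζ
    obtain ⟨h0, hg0, -⟩ := eq_zero_of_notMem_tsupport (A := A) hxζ
    exact hx (by simp [h0, hg0])
  · by_cases hx : x ∈ tsupport ζ
    · exact h.caccioppoli_pointwise hζ.contDiff.contDiffAt hU.contDiffAt (hζ.tsupport_subset hx)
    · obtain ⟨h0, hg0, -⟩ := eq_zero_of_notMem_tsupport (A := A) hx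
      have hVx : divergence V x = 0 := Function.notMem_support.1 fun hs =>
        hx (hVζ (support_divergence_subset hs))
      simp [h0, hg0, hVx]

lemma caccioppoli (hu : IsWeakSolution A (exteriorDomain E) u) (hζ : IsTestFunction ζ) :
    Integrable (fun x => (ζ x ^ 2 + 2 * (1 + K) ^ 2 / lam * ‖∇ ζ x‖ ^ 2) * u x ^ 2
      - lam / 2 * (ζ x ^ 2 * ‖∇ u x‖ ^ 2)) ∧
    0 ≤ ∫ x, ((ζ x ^ 2 + 2 * (1 + K) ^ 2 / lam * ‖∇ ζ x‖ ^ 2) * u x ^ 2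
      - lam / 2 * (ζ x ^ 2 * ‖∇ u x‖ ^ 2)) := by
  have hcζ := hζ.contDiff.continuous
  have hgζ : Continuous (∇ ζ) := (contDiff_gradient hζ.contDiff (m := 0) (by norm_num)).continuous
  have key := hu.integrable_and_integral_nonneg isOpen_exteriorDomain h.contDiffOn
    hζ.hasCompactSupport hζ.tsupport_subset
    (G := fun p => (ζ p.1 ^ 2 + 2 * (1 + K) ^ 2 / lam * ‖∇ ζ p.1‖ ^ 2) * p.2.1 ^ 2
      - ζ p.1 ^ 2 * (p.2.1 * p.2.2.2) - lam / 2 * (ζ p.1 ^ 2 * ‖p.2.2.1‖ ^ 2))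
    (by fun_prop)
    (fun x hx p => by
      obtain ⟨h0, hg0, -⟩ := eq_zero_of_notMem_tsupport (A := A) hx
      simp [h0, hg0])
    fun U hU => h.caccioppoli_of_contDiff hζ hU
  simpa only [mul_zero, sub_zero] using key

lemma exists_weak_carleman_estimate {δ : ℝ} (hE : 1 ≤ Module.finrank ℝ E) (hα1 : α ≤ 1)
    (hδ : 0 < δ) (hδ1 : δ ≤ 1) :
    ∃ γ > 0, ∃ ε > 0, ε ≤ 1 ∧ ∃ Λ, ∃ y₁ > 0,
      ∀ w : CarlemanWeight ((Module.finrank ℝ E - 1) / 2) γ δ α, w.IsAdmissible ε Λ y₁ →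
      ∀ u, IsWeakSolution A (exteriorDomain E) u →
        CarlemanInequality A (16 / δ ^ 2) w.density u := by
  obtain ⟨γ, hγ, ε, hε, hε1, Λ, y₁, hy₁, hcarl⟩ := h.exists_carleman_estimate hE hα1 hδ hδ1
  refine ⟨γ, hγ, ε, hε, hε1, Λ, y₁, hy₁, fun w hw u hu χ hχ => ?_⟩
  have key := hu.integrable_and_integral_nonneg isOpen_exteriorDomain h.contDiffOn
    hχ.hasCompactSupport hχ.tsupport_subset
    (G := fun p => w.density (Real.log ‖p.1‖) * (16 / δ ^ 2 * ‖p.1‖ ^ 2 *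
      (χ p.1 * p.2.2.2 + (2 * ⟪A p.1 (∇ χ p.1), p.2.2.1⟫
        + p.2.1 * divergence (fun y => A y (∇ χ y)) p.1)) ^ 2
        - (χ p.1 * p.2.1) ^ 2)) ?_ (fun x hx p => ?_) fun U hU => ?_
  · simpa only [mul_zero, zero_add, cutoffCommutator] using key
  · have hAχ := contDiffOn_apply_gradient h.contDiffOn hχ.contDiff
    exact continuousOn_carleman_integrand (continuousOn_comp_log_norm w.continuous_density)
      hχ.contDiff.continuous.continuousOn hAχ.continuousOn
      (continuousOn_divergence isOpen_exteriorDomain hAχ) _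
  · obtain ⟨h0, hg0, hd0⟩ := eq_zero_of_notMem_tsupport (A := A) hx
    simp [h0, hg0, hd0]
  · refine (hcarl w hw _ (hχ.mul hU)).trans_eq (integral_congr_ae (ae_of_all _ fun x => ?_))
    by_cases hx : x ∈ tsupport χ
    · have hxΩ := hχ.tsupport_subset hx
      simp only [helmholtz_mul ((h.contDiffAt hxΩ).differentiableAt one_ne_zero) (h.symm x hxΩ)
        hχ.contDiff.contDiffAt hU.contDiffAt, cutoffCommutator, CarlemanWeight.conj,
        CarlemanWeight.density]
      ring
    · obtain ⟨h0, hg0, hd0⟩ := eq_zero_of_notMem_tsupport (A := A) hx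
      have hhelm : helmholtz A (fun y => χ y * U y) x = 0 := Function.notMem_support.1 fun hs =>
        hx (tsupport_mul_subset_left (support_helmholtz_subset hs))
      simp [h0, hg0, hd0, hhelm, CarlemanWeight.conj]

end IsDecayingElliptic

end WeakEstimates

section Cutoffs

/-- `F` is a cutoff function of class `C²`, supported in `[a, d]` and equal to `1` at distance at
least `r` from the endpoints, whose first two derivatives are controlled by `D`. -/
structure IsCutoff (F : ℝ → ℝ) (a d r D : ℝ) : Prop where
  contDiff : ContDiff ℝ 2 F
  nonneg : ∀ t, 0 ≤ F t
  le_one : ∀ t, F t ≤ 1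
  eq_zero : ∀ t ∉ Set.Icc a d, F t = 0
  eq_one : ∀ t ∈ Set.Icc (a + r) (d - r), F t = 1
  abs_deriv_add_le : ∀ t, |deriv F t| + |deriv (deriv F) t| ≤ D

lemma exists_contDiff_transition {r : ℝ} (hr : 0 < r) :
    ∃ (S : ℝ → ℝ) (B : ℝ), ContDiff ℝ ∞ S ∧ (∀ t, 0 ≤ S t) ∧ (∀ t, S t ≤ 1) ∧
      (∀ t ≤ 0, S t = 0) ∧ (∀ t, r ≤ t → S t = 1) ∧
      (∀ t, |deriv S t| ≤ B) ∧ ∀ t, |deriv (deriv S) t| ≤ B := by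
  set S : ℝ → ℝ := fun t => Real.smoothTransition (t / r)
  have hS : ContDiff ℝ ∞ S := Real.smoothTransition.contDiff.comp (contDiff_id.div_const r)
  have hS' : ContDiff ℝ ∞ (deriv S) := (contDiff_infty_iff_deriv.1 hS).2
  have hS'' : Continuous (deriv (deriv S)) := (contDiff_infty_iff_deriv.1 hS').2.continuous
  have hzero : ∀ t ≤ 0, S t = 0 := fun t ht =>
    Real.smoothTransition.zero_of_nonpos (div_nonpos_of_nonpos_of_nonneg ht hr.le)
  have hone : ∀ t, r ≤ t → S t = 1 := fun t ht =>
    Real.smoothTransition.one_of_one_le ((one_le_div hr).2 ht)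
  have hsupp : HasCompactSupport (deriv S) := HasCompactSupport.intro isCompact_Icc fun t ht => by
    rcases lt_or_ge t 0 with h0 | h0
    · have : S =ᶠ[𝓝 t] fun _ => 0 := mem_of_superset (Iio_mem_nhds h0) fun s hs => hzero s hs.le
      rw [this.deriv_eq, deriv_const]
    · have htr : r < t := not_le.1 fun htr => ht ⟨h0, htr⟩
      have : S =ᶠ[𝓝 t] fun _ => 1 := mem_of_superset (Ioi_mem_nhds htr) fun s hs => hone s hs.le
      rw [this.deriv_eq, deriv_const]
  obtain ⟨B₁, hB₁⟩ := hS'.continuous.bounded_above_of_compact_support hsupp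
  obtain ⟨B₂, hB₂⟩ := hS''.bounded_above_of_compact_support hsupp.deriv
  exact ⟨S, max B₁ B₂, hS, fun t => Real.smoothTransition.nonneg _,
    fun t => Real.smoothTransition.le_one _, hzero, hone,
    fun t => (hB₁ t).trans (le_max_left _ _), fun t => (hB₂ t).trans (le_max_right _ _)⟩

lemma exists_isCutoff {r : ℝ} (hr : 0 < r) :
    ∃ D, ∀ a d, a + 2 * r ≤ d → ∃ F, IsCutoff F a d r D := by
  obtain ⟨S, B, hS, hS0, hS1, hzero, hone, hB, hB'⟩ := exists_contDiff_transition hr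
  refine ⟨4 * B, fun a d had => ⟨fun t => S (t - a) + S (d - t) - 1, ?_⟩⟩
  have hdS : Differentiable ℝ S := hS.differentiable (by simp)
  have hdS' : Differentiable ℝ (deriv S) :=
    (contDiff_infty_iff_deriv.1 hS).2.differentiable (by simp)
  have hderiv : deriv (fun t => S (t - a) + S (d - t) - 1) =
      fun t => deriv S (t - a) - deriv S (d - t) := funext fun t => by
    simpa [sub_eq_add_neg] using (((hdS (t - a)).hasDerivAt.comp_sub_const t a).add
      ((hdS (d - t)).hasDerivAt.comp_const_sub d t)).sub_const 1 |>.deriv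
  have hderiv2 (t : ℝ) : deriv (fun t => deriv S (t - a) - deriv S (d - t)) t =
      deriv (deriv S) (t - a) + deriv (deriv S) (d - t) := by
    simpa using (((hdS' (t - a)).hasDerivAt.comp_sub_const t a).fun_sub
      ((hdS' (d - t)).hasDerivAt.comp_const_sub d t)).deriv
  have hvalue (t : ℝ) : S (t - a) + S (d - t) - 1 = S (t - a) ∨
      S (t - a) + S (d - t) - 1 = S (d - t) := by
    rcases le_total t (d - r) with ht | ht
    · exact .inl (by rw [hone (d - t) (by linarith)]; ring)
    · exact .inr (by rw [hone (t - a) (by linarith)]; ring)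
  have : ContDiff ℝ 2 S := hS.of_le (by norm_cast)
  refine ⟨by fun_prop, fun t => ?_, fun t => ?_, fun t ht => ?_, fun t ht => ?_, fun t => ?_⟩
  · rcases hvalue t with h | h <;> simp only [h, hS0]
  · rcases hvalue t with h | h <;> simp only [h, hS1]
  · rcases lt_or_ge t a with hta | hta
    · simp only [hzero (t - a) (by linarith), hone (d - t) (by linarith)]
      ring
    · have htd : d < t := not_le.1 fun htd => ht ⟨hta, htd⟩
      simp only [hzero (d - t) (by linarith), hone (t - a) (by linarith)]
      ring
  · simp only [hone (t - a) (by linarith [ht.1]), hone (d - t) (by linarith [ht.2])]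
    ring
  · rw [hderiv, hderiv2]
    linarith [abs_sub (deriv S (t - a)) (deriv S (d - t)), hB (t - a), hB (d - t),
      abs_add_le (deriv (deriv S) (t - a)) (deriv (deriv S) (d - t)), hB' (t - a), hB' (d - t)]

lemma IsCutoff.deriv_eq_zero {F : ℝ → ℝ} {a d r D t : ℝ} (hF : IsCutoff F a d r D)
    (ht₁ : t ∉ Set.Icc a (a + r)) (ht₂ : t ∉ Set.Icc (d - r) d) :
    deriv F t = 0 ∧ deriv (deriv F) t = 0 := by
  have hconst {c : ℝ} (h : F =ᶠ[𝓝 t] fun _ => c) : deriv F t = 0 ∧ deriv (deriv F) t = 0 := by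
    constructor
    · rw [h.deriv_eq, deriv_const]
    · rw [h.deriv.deriv_eq, deriv_const', deriv_const]
  rw [Set.mem_Icc, not_and_or, not_le, not_le] at ht₁ ht₂
  rcases ht₁ with hta | hta
  · refine hconst (c := 0) (mem_of_superset (Iio_mem_nhds hta) fun s hs => ?_)
    exact hF.eq_zero s fun h => hs.not_ge h.1
  rcases ht₂ with htd | htd
  · exact hconst (mem_of_superset (Ioo_mem_nhds hta htd) fun s hs => hF.eq_one s ⟨hs.1.le, hs.2.le⟩)
  · refine hconst (c := 0) (mem_of_superset (Ioi_mem_nhds htd) fun s hs => ?_)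
    exact hF.eq_zero s fun h => hs.not_ge h.2

end Cutoffs

section Annuli

variable {E : Type*} [NormedAddCommGroup E] {a b c d : ℝ} {x : E}

/-- The closed annulus `a ≤ log ‖x‖ ≤ b`. -/
def annulus (E : Type*) [NormedAddCommGroup E] (a b : ℝ) : Set E :=
  norm ⁻¹' Set.Icc (Real.exp a) (Real.exp b)

lemma isClosed_annulus : IsClosed (annulus E a b) := isClosed_Icc.preimage continuous_norm

lemma isCompact_annulus [ProperSpace E] : IsCompact (annulus E a b) :=
  (isCompact_closedBall 0 (Real.exp b)).of_isClosed_subset isClosed_annulus fun x hx => by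
    simpa using hx.2

lemma annulus_subset_exteriorDomain (ha : 0 < a) :
    annulus E a b ⊆ exteriorDomain E := fun _ hx =>
  (Real.one_lt_exp_iff.2 ha).trans_le hx.1

lemma annulus_subset_annulus (hac : a ≤ c) (hdb : d ≤ b) : annulus E c d ⊆ annulus E a b :=
  fun _ hx => ⟨(Real.exp_le_exp.2 hac).trans hx.1, hx.2.trans (Real.exp_le_exp.2 hdb)⟩

/-- Since `0 < a`, the junk value `Real.log 0 = 0` causes no harm. -/
lemma mem_annulus_iff (ha : 0 < a) : x ∈ annulus E a b ↔ Real.log ‖x‖ ∈ Set.Icc a b := by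
  rcases eq_or_ne x 0 with rfl | hx
  · simp [annulus, Real.exp_pos a, ha.not_ge]
  · have := norm_pos_iff.2 hx
    simp only [annulus, Set.mem_preimage, Set.mem_Icc, Real.le_log_iff_exp_le this,
      Real.log_le_iff_le_exp this]

lemma IsCutoff.comp_log_norm_eq_zero {F : ℝ → ℝ} {r D : ℝ} (ha : 0 < a)
    (hF : IsCutoff F a d r D) (hx : x ∉ annulus E a d) :
    F (Real.log ‖x‖) = 0 :=
  hF.eq_zero _ fun ht => hx ((mem_annulus_iff ha).2 ht)

lemma IsCutoff.tsupport_subset {F : ℝ → ℝ} {r D : ℝ} (ha : 0 < a) (hF : IsCutoff F a d r D) :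
    tsupport (fun x : E => F (Real.log ‖x‖)) ⊆ annulus E a d :=
  closure_minimal (fun _ hx => by_contra fun h => hx (hF.comp_log_norm_eq_zero ha h))
    isClosed_annulus

lemma disjoint_annulus (hbc : b < c) : Disjoint (annulus E a b) (annulus E c d) :=
  Set.disjoint_left.2 fun _ hx hy => (hx.2.trans_lt (Real.exp_lt_exp.2 hbc)).not_ge hy.1

lemma annulus_log_subset_ball_diff_ball {R : ℝ} (hR : 0 < R) (ha : 0 ≤ a) (hb : b < Real.log 2) :
    annulus E (Real.log R + a) (Real.log R + b) ⊆ ball 0 (2 * R) \ ball 0 R := by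
  intro x hx
  rw [annulus, Set.mem_preimage, Real.exp_add, Real.exp_add, Real.exp_log hR] at hx
  have hb2 : Real.exp b < 2 := (Real.lt_log_iff_exp_lt two_pos).1 hb
  refine ⟨mem_ball_zero_iff.2 ?_, fun h => (mem_ball_zero_iff.1 h).not_ge ?_⟩
  · exact hx.2.trans_lt (by rw [mul_comm]; gcongr)
  · exact (le_mul_of_one_le_right hR.le (Real.one_le_exp ha)).trans hx.1

lemma ball_diff_ball_subset_annulus {R : ℝ} (hR : 0 < R) :
    ball 0 (2 * R) \ ball 0 R ⊆ annulus E (Real.log R) (Real.log (2 * R)) := by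
  intro x hx
  rw [annulus, Set.mem_preimage, Real.exp_log hR, Real.exp_log (by positivity)]
  exact ⟨not_lt.1 fun h => hx.2 (mem_ball_zero_iff.2 h), (mem_ball_zero_iff.1 hx.1).le⟩

end Annuli

section RadialCutoffs

variable {E : Type*} [NormedAddCommGroup E] [InnerProductSpace ℝ E]
  {A : E → E →L[ℝ] E} {u : E → ℝ} {F : ℝ → ℝ} {x : E} {lam α K a d r D : ℝ}

lemma IsDecayingElliptic.abs_inner_apply_self_div_norm_le (h : IsDecayingElliptic A lam α K)
    (hx : x ∈ exteriorDomain E) (v : E) :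
    |⟪A x x, v⟫ / ‖x‖| ≤ (1 + K) * ‖v‖ := by
  rw [abs_div, abs_norm, div_le_iff₀ (norm_pos_iff.2 (ne_zero_of_mem_exteriorDomain hx))]
  calc
    _ ≤ ‖A x x‖ * ‖v‖ := abs_real_inner_le_norm _ _
    _ ≤ (1 + K) * ‖x‖ * ‖v‖ := by
      gcongr
      exact h.norm_apply_le hx x
    _ = _ := by ring

variable [FiniteDimensional ℝ E]

lemma IsCutoff.isTestFunction (ha : 0 < a) (hF : IsCutoff F a d r D) :
    IsTestFunction fun x : E => F (Real.log ‖x‖) where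
  contDiff := contDiff_of_tsupport fun _ hx => contDiffAt_comp_log_norm hF.contDiff <|
    ne_zero_of_mem_exteriorDomain (annulus_subset_exteriorDomain ha (hF.tsupport_subset ha hx))
  hasCompactSupport := isCompact_annulus.of_isClosed_subset (isClosed_tsupport _)
    (hF.tsupport_subset ha)
  tsupport_subset := (hF.tsupport_subset ha).trans (annulus_subset_exteriorDomain ha)

lemma IsCutoff.norm_gradient_le (hF : IsCutoff F a d r D) (hx : x ∈ exteriorDomain E) :
    ‖∇ (fun y => F (Real.log ‖y‖)) x‖ ≤ D := by
  have hx1 : 1 < ‖x‖ := hx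
  have hderiv : HasDerivAt F _ (Real.log ‖x‖) :=
    (hF.contDiff.differentiable (by norm_num) _).hasDerivAt
  rw [gradient_comp_log_norm (ne_zero_of_mem_exteriorDomain hx) hderiv, norm_smul, norm_div,
    norm_pow, norm_norm, Real.norm_eq_abs, div_mul_eq_mul_div, sq,
    mul_div_mul_right _ _ (by positivity)]
  refine (div_le_self (abs_nonneg _) hx1.le).trans ?_
  linarith [hF.abs_deriv_add_le (Real.log ‖x‖), abs_nonneg (deriv (deriv F) (Real.log ‖x‖))]

/-- The density `|∇u|² + u²`. -/
def energyDensity (u : E → ℝ) (x : E) : ℝ := ‖∇ u x‖ ^ 2 + u x ^ 2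

lemma energyDensity_nonneg (u : E → ℝ) (x : E) : 0 ≤ energyDensity u x := by
  unfold energyDensity
  positivity

lemma continuousOn_energyDensity (hu : ContDiffOn ℝ 1 u (exteriorDomain E)) :
    ContinuousOn (energyDensity u) (exteriorDomain E) := by
  have : ContinuousOn (∇ u) (exteriorDomain E) :=
    (contDiffOn_gradient isOpen_exteriorDomain hu (m := 0) (by simp)).continuousOn
  have := hu.continuousOn
  unfold energyDensity
  fun_prop

lemma norm_mul_cutoffCommutator_comp_log_norm (hx : x ≠ 0) (hA : DifferentiableAt ℝ A x)
    (hF : ContDiff ℝ 2 F) :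
    ‖x‖ * cutoffCommutator A (fun y => F (Real.log ‖y‖)) u x =
      2 * (deriv F (Real.log ‖x‖) * (⟪A x x, ∇ u x⟫ / ‖x‖)) +
        u x * (‖x‖⁻¹ * ((deriv (deriv F) (Real.log ‖x‖) - 2 * deriv F (Real.log ‖x‖)) *
          radialCoeff A x + deriv F (Real.log ‖x‖) * divergence (fun y => A y y) x)) := by
  have : ‖x‖ ≠ 0 := norm_ne_zero_iff.2 hx
  have hF' (t : ℝ) : HasDerivAt F (deriv F t) t :=
    (hF.differentiable (by norm_num) t).hasDerivAt
  have hF'' := (hF.differentiable_deriv_two (Real.log ‖x‖)).hasDerivAt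
  rw [cutoffCommutator, gradient_comp_log_norm hx (hF' _),
    divergence_apply_gradient_comp_log_norm hx hA hF' hF'', map_smul, real_inner_smul_left,
    radialCoeff]
  field_simp

namespace IsDecayingElliptic

variable (h : IsDecayingElliptic A lam α K)
include h

lemma norm_mul_abs_cutoffCommutator_le (hF : ContDiff ℝ 2 F) (hx : x ∈ exteriorDomain E) :
    ‖x‖ * |cutoffCommutator A (fun y => F (Real.log ‖y‖)) u x| ≤
      (2 * (1 + K) + Module.finrank ℝ E * (1 + 2 * K)) *
        (|deriv F (Real.log ‖x‖)| + |deriv (deriv F) (Real.log ‖x‖)|) * (‖∇ u x‖ + |u x|) := by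
  have hx0 := ne_zero_of_mem_exteriorDomain hx
  have hx1 : 1 < ‖x‖ := hx
  have hK := h.K_nonneg
  rw [← abs_of_pos (zero_lt_one.trans hx1), ← abs_mul, abs_norm,
    norm_mul_cutoffCommutator_comp_log_norm hx0
      ((h.contDiffAt hx).differentiableAt one_ne_zero) hF]
  set f₁ := deriv F (Real.log ‖x‖)
  set f₂ := deriv (deriv F) (Real.log ‖x‖)
  set q := divergence (fun y => A y y) x
  set n : ℝ := (Module.finrank ℝ E : ℝ)
  have hfirst : |f₁ * (⟪A x x, ∇ u x⟫ / ‖x‖)| ≤ |f₁| * ((1 + K) * ‖∇ u x‖) := by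
    rw [abs_mul]
    gcongr
    exact h.abs_inner_apply_self_div_norm_le hx _
  have hsecond : |(f₂ - 2 * f₁) * radialCoeff A x + f₁ * q| ≤
      (2 * (1 + K) + n * (1 + 2 * K)) * (|f₁| + |f₂|) := calc
    _ ≤ |f₂ - 2 * f₁| * |radialCoeff A x| + |f₁| * |q| := by
      simpa only [abs_mul] using abs_add_le ((f₂ - 2 * f₁) * radialCoeff A x) (f₁ * q)
    _ ≤ (|f₂| + 2 * |f₁|) * (1 + K) + |f₁| * (n * (1 + 2 * K)) := by
      gcongr
      · simpa [abs_mul] using abs_sub f₂ (2 * f₁)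
      · exact h.abs_radialCoeff_le hx
      · exact h.abs_divergence_apply_self_le hx
    _ ≤ _ := by
      have : 0 ≤ (1 + K + n * (1 + 2 * K)) * |f₂| := by positivity
      linarith
  calc
    _ ≤ 2 * |f₁ * (⟪A x x, ∇ u x⟫ / ‖x‖)| +
        |u x| * (‖x‖⁻¹ * |(f₂ - 2 * f₁) * radialCoeff A x + f₁ * q|) := by
      refine (abs_add_le _ _).trans_eq ?_
      simp only [abs_mul, abs_inv, abs_norm, abs_two]
    _ ≤ 2 * (|f₁| * ((1 + K) * ‖∇ u x‖)) +
        |u x| * (1 * ((2 * (1 + K) + n * (1 + 2 * K)) * (|f₁| + |f₂|))) := by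
      gcongr
      exact inv_le_one_of_one_le₀ hx1.le
    _ ≤ _ := by
      have : 0 ≤ (n * (1 + 2 * K) * |f₁| + (2 * (1 + K) + n * (1 + 2 * K)) * |f₂|) *
        ‖∇ u x‖ := by positivity
      linarith

lemma norm_sq_mul_cutoffCommutator_sq_le (hF : ContDiff ℝ 2 F) (hx : x ∈ exteriorDomain E) :
    ‖x‖ ^ 2 * cutoffCommutator A (fun y => F (Real.log ‖y‖)) u x ^ 2 ≤
      2 * (2 * (1 + K) + Module.finrank ℝ E * (1 + 2 * K)) ^ 2 *
        (|deriv F (Real.log ‖x‖)| + |deriv (deriv F) (Real.log ‖x‖)|) ^ 2 * energyDensity u x := by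
  have hsq := pow_le_pow_left₀ (by positivity)
    (h.norm_mul_abs_cutoffCommutator_le (u := u) hF hx) 2
  simp only [mul_pow, sq_abs] at hsq
  refine hsq.trans ?_
  rw [mul_assoc 2, mul_assoc 2, mul_left_comm, energyDensity, ← sq_abs (u x)]
  gcongr
  exact add_sq_le

end IsDecayingElliptic

end RadialCutoffs

section AnnulusEstimates

lemma setIntegral_le_setIntegral_of_le_indicator_sub {X : Type*} [MeasurableSpace X]
    {μ : Measure X} {f g k : X → ℝ} {s t : Set X} (hf : Integrable f μ) (hf0 : 0 ≤ ∫ x, f x ∂μ)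
    (hs : MeasurableSet s) (ht : MeasurableSet t) (hg : IntegrableOn g s μ)
    (hk : IntegrableOn k t μ) (hle : ∀ x, f x ≤ s.indicator g x - t.indicator k x) :
    ∫ x in t, k x ∂μ ≤ ∫ x in s, g x ∂μ := by
  have hg' := hg.integrable_indicator hs
  have hk' := hk.integrable_indicator ht
  rw [← integral_indicator ht, ← integral_indicator hs, ← sub_nonneg, ← integral_sub hg' hk']
  exact hf0.trans (integral_mono hf (hg'.sub hk') hle)

variable {E : Type*} [NormedAddCommGroup E] [InnerProductSpace ℝ E] [FiniteDimensional ℝ E]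
  {A : E → E →L[ℝ] E} {u f : E → ℝ} {F W : ℝ → ℝ} {x : E} {lam α K a b d r D κ M : ℝ}

lemma IsDecayingElliptic.norm_sq_mul_cutoffCommutator_sq_le_indicator
    (h : IsDecayingElliptic A lam α K) (ha : 0 < a) (hr : 0 ≤ r) (had : a + 2 * r < d)
    (hF : IsCutoff F a d r D) :
    ‖x‖ ^ 2 * cutoffCommutator A (fun y => F (Real.log ‖y‖)) u x ^ 2 ≤
      (annulus E a (a + r) ∪ annulus E (d - r) d).indicator (fun y =>
        2 * (2 * (1 + K) + Module.finrank ℝ E * (1 + 2 * K)) ^ 2 * D ^ 2 * energyDensity u y)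
        x := by
  by_cases hxΩ : x ∈ exteriorDomain E
  · refine (h.norm_sq_mul_cutoffCommutator_sq_le hF.contDiff hxΩ).trans ?_
    by_cases hx : x ∈ annulus E a (a + r) ∪ annulus E (d - r) d
    · rw [Set.indicator_of_mem hx]
      have := energyDensity_nonneg u x
      have := hF.abs_deriv_add_le (Real.log ‖x‖)
      gcongr
    · rw [Set.mem_union, not_or, mem_annulus_iff ha, mem_annulus_iff (by linarith)] at hx
      obtain ⟨h₁, h₂⟩ := hF.deriv_eq_zero hx.1 hx.2
      rw [h₁, h₂]
      simpa using Set.indicator_nonneg (fun y _ => by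
        have := energyDensity_nonneg u y
        positivity) x
  · obtain ⟨-, hg, hdiv⟩ := eq_zero_of_notMem_tsupport (A := A)
      fun hx => hxΩ ((hF.isTestFunction ha).tsupport_subset hx)
    simpa [cutoffCommutator, hg, hdiv] using Set.indicator_nonneg (fun y _ => by
      have := energyDensity_nonneg u y
      positivity) x

variable [MeasurableSpace E] [BorelSpace E]

lemma integrableOn_annulus (ha : 0 < a) (hf : ContinuousOn f (exteriorDomain E)) :
    IntegrableOn f (annulus E a b) :=
  (hf.mono (annulus_subset_exteriorDomain ha)).integrableOn_compact isCompact_annulus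

lemma integral_annulus_comp_log_norm_mul_le (ha : 0 < a) (hW : Continuous W)
    (hf : ContinuousOn f (exteriorDomain E)) (hf0 : ∀ x, 0 ≤ f x)
    (hM : ∀ t ∈ Set.Icc a b, W t ≤ M) :
    ∫ x in annulus E a b, W (Real.log ‖x‖) * f x ≤ M * ∫ x in annulus E a b, f x := by
  rw [← integral_const_mul]
  refine setIntegral_mono_on
    (integrableOn_annulus ha ((continuousOn_comp_log_norm hW).mul hf))
    ((integrableOn_annulus ha hf).const_mul _) isClosed_annulus.measurableSet fun x hx => ?_
  exact mul_le_mul_of_nonneg_right (hM _ ((mem_annulus_iff ha).1 hx)) (hf0 x)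

lemma mul_integral_annulus_le (ha : 0 < a) (hW : Continuous W)
    (hf : ContinuousOn f (exteriorDomain E)) (hf0 : ∀ x, 0 ≤ f x)
    (hM : ∀ t ∈ Set.Icc a b, M ≤ W t) :
    M * ∫ x in annulus E a b, f x ≤ ∫ x in annulus E a b, W (Real.log ‖x‖) * f x := by
  have := integral_annulus_comp_log_norm_mul_le (W := fun t => -W t) (M := -M) (b := b) ha hW.neg
    hf hf0 fun t ht => neg_le_neg (hM t ht)
  simpa only [neg_mul, integral_neg, neg_le_neg_iff] using this

lemma integral_annulus_sq_pos (ha : 0 < a) (hu : ContinuousOn u (exteriorDomain E))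
    (hx : Real.log ‖x‖ ∈ Set.Ioo a b) (hux : u x ≠ 0) : 0 < ∫ y in annulus E a b, u y ^ 2 := by
  rw [setIntegral_pos_iff_support_of_nonneg_ae (ae_of_all _ fun y => sq_nonneg (u y))
    (integrableOn_annulus ha (hu.pow 2))]
  have hxΩ : x ∈ exteriorDomain E := annulus_subset_exteriorDomain ha <|
    (mem_annulus_iff ha).2 (Set.Ioo_subset_Icc_self hx)
  have hΩ := isOpen_exteriorDomain.mem_nhds hxΩ
  have hlog : Filter.Tendsto (fun y : E => Real.log ‖y‖) (𝓝 x) (𝓝 (Real.log ‖x‖)) :=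
    ((continuousOn_comp_log_norm continuous_id).continuousAt hΩ).tendsto
  refine Measure.measure_pos_of_mem_nhds volume (x := x) ?_
  filter_upwards [hlog (Ioo_mem_nhds hx.1 hx.2), (hu.continuousAt hΩ).eventually_ne hux]
    with y hy huy
  exact ⟨pow_ne_zero 2 huy, (mem_annulus_iff ha).2 (Set.Ioo_subset_Icc_self hy)⟩

namespace IsDecayingElliptic

variable (h : IsDecayingElliptic A lam α K)
include h

lemma mul_integral_energyDensity_le (hu : IsWeakSolution A (exteriorDomain E) u) (ha : 0 < a)
    (hr : 0 ≤ r) (hF : IsCutoff F a d r D) :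
    lam / 2 * ∫ x in annulus E (a + r) (d - r), energyDensity u x ≤
      (1 + 2 * (1 + K) ^ 2 / lam * D ^ 2 + lam / 2) * ∫ x in annulus E a d, u x ^ 2 := by
  have hlam := h.lam_pos
  obtain ⟨hint, hnonneg⟩ := h.caccioppoli hu (hF.isTestFunction ha)
  rw [← integral_const_mul, ← integral_const_mul]
  refine setIntegral_le_setIntegral_of_le_indicator_sub hint hnonneg
    isClosed_annulus.measurableSet isClosed_annulus.measurableSet
    ((integrableOn_annulus ha (hu.contDiffOn.continuousOn.pow 2)).const_mul _)
    ((integrableOn_annulus (by linarith) (continuousOn_energyDensity hu.contDiffOn)).const_mul _)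
    fun x => ?_
  by_cases hx : x ∈ annulus E a d
  · have hgrad := hF.norm_gradient_le (annulus_subset_exteriorDomain ha hx)
    rw [Set.indicator_of_mem hx]
    by_cases hx' : x ∈ annulus E (a + r) (d - r)
    · rw [Set.indicator_of_mem hx', hF.eq_one _ ((mem_annulus_iff (by linarith)).1 hx'),
        energyDensity]
      have : 2 * (1 + K) ^ 2 / lam * ‖∇ (fun y => F (Real.log ‖y‖)) x‖ ^ 2 * u x ^ 2 ≤
        2 * (1 + K) ^ 2 / lam * D ^ 2 * u x ^ 2 := by gcongr
      linarith
    · rw [Set.indicator_of_notMem hx', sub_zero]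
      have : 0 ≤ lam / 2 * (F (Real.log ‖x‖) ^ 2 * ‖∇ u x‖ ^ 2) := by positivity
      refine (sub_le_self _ this).trans ?_
      have hF1 := pow_le_one₀ (n := 2) (hF.nonneg (Real.log ‖x‖)) (hF.le_one _)
      have : 0 ≤ lam / 2 := by positivity
      refine mul_le_mul_of_nonneg_right ?_ (sq_nonneg _)
      refine (add_le_add hF1 ?_).trans (le_add_of_nonneg_right this)
      gcongr
  · obtain ⟨h0, hg0, -⟩ := eq_zero_of_notMem_tsupport (A := A)
      fun hxs => hx (hF.tsupport_subset ha hxs)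
    have hx' : x ∉ annulus E (a + r) (d - r) :=
      fun hx' => hx (annulus_subset_annulus (by linarith) (by linarith) hx')
    simp [hx, hx', h0, hg0]

lemma integral_weight_mul_sq_le (hu : ContDiffOn ℝ 1 u (exteriorDomain E)) (ha : 0 < a)
    (hr : 0 ≤ r) (had : a + 2 * r < d) (hF : IsCutoff F a d r D) (hW : Continuous W)
    (hW0 : ∀ t, 0 ≤ W t) (hκ : 0 ≤ κ) (hC : CarlemanInequality A κ W u) :
    ∫ x in annulus E (a + r) (d - r), W (Real.log ‖x‖) * u x ^ 2 ≤
      κ * (2 * (2 * (1 + K) + Module.finrank ℝ E * (1 + 2 * K)) ^ 2 * D ^ 2) *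
        ((∫ x in annulus E a (a + r), W (Real.log ‖x‖) * energyDensity u x) +
          ∫ x in annulus E (d - r) d, W (Real.log ‖x‖) * energyDensity u x) := by
  obtain ⟨hint, hnonneg⟩ := hC _ (hF.isTestFunction ha)
  set Q := 2 * (2 * (1 + K) + Module.finrank ℝ E * (1 + 2 * K)) ^ 2 * D ^ 2
  have hWe : ContinuousOn (fun x : E => W (Real.log ‖x‖) * energyDensity u x)
      (exteriorDomain E) :=
    (continuousOn_comp_log_norm hW).mul (continuousOn_energyDensity hu)
  have hin : IntegrableOn _ (annulus E a (a + r)) := integrableOn_annulus ha hWe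
  have hout : IntegrableOn _ (annulus E (d - r) d) := integrableOn_annulus (by linarith) hWe
  rw [← setIntegral_union (disjoint_annulus (by linarith)) isClosed_annulus.measurableSet hin hout,
    ← integral_const_mul]
  refine setIntegral_le_setIntegral_of_le_indicator_sub hint hnonneg
    (isClosed_annulus.union isClosed_annulus).measurableSet isClosed_annulus.measurableSet
    ((hin.union hout).const_mul _) (integrableOn_annulus (by linarith)
      ((continuousOn_comp_log_norm hW).mul (hu.continuousOn.pow 2))) fun x => ?_
  rw [mul_sub]
  refine sub_le_sub ?_ ?_
  · calc
      _ = κ * W (Real.log ‖x‖) *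
          (‖x‖ ^ 2 * cutoffCommutator A (fun y => F (Real.log ‖y‖)) u x ^ 2) := by ring
      _ ≤ κ * W (Real.log ‖x‖) * (annulus E a (a + r) ∪ annulus E (d - r) d).indicator
          (fun y => Q * energyDensity u y) x := by
        have := hW0 (Real.log ‖x‖)
        gcongr
        exact h.norm_sq_mul_cutoffCommutator_sq_le_indicator ha hr had hF
      _ = _ := by
        by_cases hx : x ∈ annulus E a (a + r) ∪ annulus E (d - r) d
        · rw [Set.indicator_of_mem hx, Set.indicator_of_mem hx]
          ring
        · simp only [Set.indicator_of_notMem hx, mul_zero]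
  · refine Set.indicator_apply_le' (fun hx => ?_) fun _ => mul_nonneg (hW0 _) (sq_nonneg _)
    rw [hF.eq_one _ ((mem_annulus_iff (by linarith)).1 hx), one_mul]

end IsDecayingElliptic

end AnnulusEstimates

section Growth

lemma exists_isAdmissible_of_ratio {b γ δ α ε y₁ s t T : ℝ} (hb : 0 ≤ b) (hγ : 0 ≤ γ)
    (hδ : 0 ≤ δ) (hδ2 : δ ≤ 2) (hα : 0 < α) (hε : 0 < ε) (hε1 : ε ≤ 1) (Λ : ℝ) (hy₁ : 0 < y₁)
    (hs : 0 ≤ s) (hst : s < t) (htT : t ≤ T) (M : ℝ) :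
    ∃ w : CarlemanWeight b γ δ α, w.IsAdmissible ε Λ y₁ ∧
      ∃ S > 0, (∀ x ∈ Set.Icc 0 s, w.density x ≤ S) ∧ (∀ x ∈ Set.Icc t T, S * M ≤ w.density x) ∧
        ∃ C, ∀ x, 0 ≤ x → w.density x ≤ C * Real.exp ((δ - 1) * x) := by
  obtain ⟨c, hc, h₀, hh₀, h₁, hev⟩ := exists_isAdmissible hb hγ hδ hδ2 hα hε hε1 Λ hy₁ T
  have hcst : 0 < c * (t - s) := mul_pos hc (sub_pos.2 hst)
  obtain ⟨τ, ⟨w, hw, hH, hΨ, hC⟩, hτ0, hτM⟩ := (hev.and ((eventually_ge_atTop 0).and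
    (eventually_ge_atTop (M * h₁ / h₀ / (c * (t - s)))))).exists
  have hh₁ : 0 < h₁ :=
    let hHs := hH s ⟨hs, hst.le.trans htT⟩
    hh₀.trans_le (hHs.1.trans hHs.2)
  have hgrowth : M * h₁ ≤ h₀ * Real.exp (c * τ * (t - s)) ^ 2 := by
    rw [div_le_iff₀ hcst, div_le_iff₀' hh₀] at hτM
    refine hτM.trans (mul_le_mul_of_nonneg_left ?_ hh₀.le)
    rw [← Real.exp_nat_mul, Nat.cast_ofNat]
    linarith [Real.add_one_le_exp (2 * (c * τ * (t - s))), mul_nonneg hτ0 hcst.le]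
  refine ⟨w, hw, h₁ * Real.exp (w.Ψ s) ^ 2, by positivity, fun x hx => ?_, fun x hx => ?_, hC⟩
  · have hHx := hH x ⟨hx.1, hx.2.trans (hst.le.trans htT)⟩
    have hΨx := hΨ x s hx.1 hx.2 (hst.le.trans htT)
    have : 0 ≤ c * τ * (s - x) := mul_nonneg (by positivity) (sub_nonneg.2 hx.2)
    unfold CarlemanWeight.density
    gcongr
    · exact hHx.2
    · linarith
  · have hHx := hH x ⟨hs.trans (hst.le.trans hx.1), hx.2⟩
    have hΨx : c * τ * (t - s) + w.Ψ s ≤ w.Ψ x := by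
      have := hΨ s x hs (hst.le.trans hx.1) hx.2
      have : c * τ * (t - s) ≤ c * τ * (x - s) := by
        gcongr
        exact hx.1
      linarith
    calc
      _ = M * h₁ * Real.exp (w.Ψ s) ^ 2 := by ring
      _ ≤ h₀ * Real.exp (c * τ * (t - s)) ^ 2 * Real.exp (w.Ψ s) ^ 2 := by gcongr
      _ = h₀ * Real.exp (c * τ * (t - s) + w.Ψ s) ^ 2 := by rw [Real.exp_add]; ring
      _ ≤ w.H x * Real.exp (w.Ψ x) ^ 2 := by
        refine mul_le_mul hHx.1 ?_ (by positivity) (w.H_pos x).le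
        gcongr

lemma rpow_le_of_one_le_mul_exp {R δ J : ℝ} (hR : 0 < R)
    (h : 1 ≤ J * Real.exp ((δ - 1) * Real.log R)) : R ^ (1 - δ) ≤ J := by
  rwa [mul_comm (δ - 1), ← Real.rpow_def_of_pos hR, ← neg_sub 1 δ, Real.rpow_neg hR.le,
    ← div_eq_mul_inv, le_div_iff₀ (Real.rpow_pos_of_pos hR _), one_mul] at h

variable {E : Type*} [NormedAddCommGroup E] [InnerProductSpace ℝ E] [FiniteDimensional ℝ E]
  [MeasurableSpace E] [BorelSpace E] {A : E → E →L[ℝ] E} {u : E → ℝ} {lam α K δ : ℝ}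

namespace IsDecayingElliptic

variable (h : IsDecayingElliptic A lam α K)
include h

lemma exists_weight (hE : 1 ≤ Module.finrank ℝ E) (hδ : 0 < δ) (hδ1 : δ ≤ 1) {s t T : ℝ}
    (hs : 0 ≤ s) (hst : s < t) (htT : t ≤ T) (M : ℝ) :
    ∃ W : ℝ → ℝ, Continuous W ∧ (∀ x, 0 ≤ W x) ∧ (∀ x ∈ Set.Icc 0 s, W x ≤ 1) ∧
      (∀ x ∈ Set.Icc t T, M ≤ W x) ∧ (∃ C, ∀ x, 0 ≤ x → W x ≤ C * Real.exp ((δ - 1) * x)) ∧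
      ∀ u, IsWeakSolution A (exteriorDomain E) u → CarlemanInequality A (16 / δ ^ 2) W u := by
  have h' := h.mono (lt_min h.α_pos one_pos) (min_le_left α 1)
  obtain ⟨γ, hγ, ε, hε, hε1, Λ, y₁, hy₁, hcarl⟩ :=
    h'.exists_weak_carleman_estimate hE (min_le_right α 1) hδ hδ1
  have hb : (0 : ℝ) ≤ (Module.finrank ℝ E - 1) / 2 := by
    have : (1 : ℝ) ≤ Module.finrank ℝ E := by exact_mod_cast hE
    linarith
  obtain ⟨w, hw, S, hS, hle, hge, C, hC⟩ := exists_isAdmissible_of_ratio hb hγ.le hδ.le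
    (by linarith) h'.α_pos hε hε1 Λ hy₁ hs hst htT M
  have hS' := inv_nonneg.2 hS.le
  exact ⟨fun x => S⁻¹ * w.density x, w.continuous_density.const_mul _,
    fun x => mul_nonneg hS' (mul_nonneg (w.H_pos x).le (sq_nonneg _)),
    fun x hx => inv_mul_le_one_of_le₀ (hle x hx) hS.le,
    fun x hx => (le_inv_mul_iff₀ hS).2 (hge x hx),
    ⟨S⁻¹ * C, fun x hx => by
      rw [mul_assoc]
      exact mul_le_mul_of_nonneg_left (hC x hx) hS'⟩,
    fun u hu => (hcarl w hw u hu).const_mul hS'⟩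

lemma exists_integral_energyDensity_le (hu : IsWeakSolution A (exteriorDomain E) u) {r : ℝ}
    (hr : 0 < r) (hr2 : 4 * r < Real.log 2) :
    ∃ C, ∀ R > 1, ∫ x in annulus E (Real.log R + 2 * r) (Real.log R + 3 * r), energyDensity u x ≤
      C * ∫ x in ball 0 (2 * R) \ ball 0 R, u x ^ 2 := by
  have hlam := h.lam_pos
  obtain ⟨D, hD⟩ := exists_isCutoff hr
  refine ⟨2 / lam * (1 + 2 * (1 + K) ^ 2 / lam * D ^ 2 + lam / 2), fun R hR => ?_⟩
  have hR0 : 0 < R := one_pos.trans hR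
  have hlog : 0 < Real.log R := Real.log_pos hR
  obtain ⟨F, hF⟩ := hD (Real.log R + r) (Real.log R + 4 * r) (by linarith)
  have hcacc := h.mul_integral_energyDensity_le hu (by linarith) hr.le hF
  have hsubset : annulus E (Real.log R + r) (Real.log R + 4 * r) ⊆ ball 0 (2 * R) \ ball 0 R :=
    annulus_log_subset_ball_diff_ball hR0 hr.le hr2
  have hint : IntegrableOn (fun x => u x ^ 2) (ball 0 (2 * R) \ ball 0 R) :=
    (integrableOn_annulus hlog (hu.contDiffOn.continuousOn.pow 2)).mono_set
      (ball_diff_ball_subset_annulus hR0)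
  have hmono := setIntegral_mono_set hint (ae_of_all _ fun x => sq_nonneg (u x))
    hsubset.eventuallyLE
  rw [show Real.log R + r + r = Real.log R + 2 * r by ring,
    show Real.log R + 4 * r - r = Real.log R + 3 * r by ring] at hcacc
  rw [mul_assoc, div_mul_eq_mul_div, le_div_iff₀ hlam]
  have : (1 + 2 * (1 + K) ^ 2 / lam * D ^ 2 + lam / 2) *
      (∫ x in annulus E (Real.log R + r) (Real.log R + 4 * r), u x ^ 2) ≤
    (1 + 2 * (1 + K) ^ 2 / lam * D ^ 2 + lam / 2) *
      ∫ x in ball 0 (2 * R) \ ball 0 R, u x ^ 2 := by gcongr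
  linarith

lemma mul_integral_sq_le_of_weight (hu : ContDiffOn ℝ 1 u (exteriorDomain E)) {F W : ℝ → ℝ}
    {r T ρ D κ M B : ℝ} (hr : 0 < r) (hTρ : T ≤ ρ) (hρ : 0 < ρ)
    (hF : IsCutoff F r (ρ + 3 * r) r D) (hW : Continuous W) (hW0 : ∀ t, 0 ≤ W t) (hκ : 0 ≤ κ)
    (hC : CarlemanInequality A κ W u) (hin : ∀ t ∈ Set.Icc r (2 * r), W t ≤ 1)
    (hmid : ∀ t ∈ Set.Icc (3 * r) T, M ≤ W t)
    (hout : ∀ t ∈ Set.Icc (ρ + 2 * r) (ρ + 3 * r), W t ≤ B) :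
    M * ∫ x in annulus E (3 * r) T, u x ^ 2 ≤
      κ * (2 * (2 * (1 + K) + Module.finrank ℝ E * (1 + 2 * K)) ^ 2 * D ^ 2) *
        ((∫ x in annulus E r (2 * r), energyDensity u x) +
          B * ∫ x in annulus E (ρ + 2 * r) (ρ + 3 * r), energyDensity u x) := by
  have hu2 := hu.continuousOn.pow 2
  have he := continuousOn_energyDensity hu
  have hcarl := h.integral_weight_mul_sq_le hu hr hr.le (by linarith) hF hW hW0 hκ hC
  rw [show r + r = 2 * r by ring, show ρ + 3 * r - r = ρ + 2 * r by ring] at hcarl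
  have hinner := integral_annulus_comp_log_norm_mul_le hr hW he (energyDensity_nonneg u) hin
  have houter := integral_annulus_comp_log_norm_mul_le (by linarith) hW he
    (energyDensity_nonneg u) hout
  rw [one_mul] at hinner
  calc
    _ ≤ ∫ x in annulus E (3 * r) T, W (Real.log ‖x‖) * u x ^ 2 :=
      mul_integral_annulus_le (by linarith) hW hu2 (fun x => sq_nonneg (u x)) hmid
    _ ≤ ∫ x in annulus E (2 * r) (ρ + 2 * r), W (Real.log ‖x‖) * u x ^ 2 :=
      setIntegral_mono_set
        (integrableOn_annulus (by linarith) ((continuousOn_comp_log_norm hW).mul hu2))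
        (ae_of_all _ fun x => mul_nonneg (hW0 _) (sq_nonneg _))
        (annulus_subset_annulus (by linarith) (by linarith)).eventuallyLE
    _ ≤ _ := hcarl.trans (by gcongr)

lemma exists_rpow_le_mul_integral (hu : IsWeakSolution A (exteriorDomain E) u)
    (hne : ∃ x ∈ exteriorDomain E, u x ≠ 0) (hδ : 0 < δ) (hδ1 : δ ≤ 1) :
    ∃ R₀ > 1, ∃ C, ∀ R ≥ R₀,
      R ^ (1 - δ) ≤ C * ∫ x in ball (0 : E) (2 * R) \ ball 0 R, u x ^ 2 := by
  obtain ⟨x₀, hx₀, hux₀⟩ := hne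
  set L := Real.log ‖x₀‖
  have hL : 0 < L := Real.log_pos hx₀
  have : Nontrivial E := ⟨x₀, 0, ne_zero_of_mem_exteriorDomain hx₀⟩
  obtain ⟨r, hr, hrL, hr2⟩ : ∃ r > 0, 3 * r < L ∧ 4 * r < Real.log 2 :=
    ⟨min (L / 4) (1 / 8), by positivity, by linarith [min_le_left (L / 4) (1 / 8)],
      by linarith [min_le_right (L / 4) (1 / 8), Real.log_two_gt_d9]⟩
  obtain ⟨D, hD⟩ := exists_isCutoff hr
  obtain ⟨Cₒ, hCₒ⟩ := h.exists_integral_energyDensity_le hu hr hr2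
  set Q := 16 / δ ^ 2 * (2 * (2 * (1 + K) + Module.finrank ℝ E * (1 + 2 * K)) ^ 2 * D ^ 2)
  set N := ∫ x in annulus E r (2 * r), energyDensity u x
  have hI : 0 < ∫ x in annulus E (3 * r) (L + 1), u x ^ 2 :=
    integral_annulus_sq_pos (by linarith) hu.contDiffOn.continuousOn ⟨hrL, lt_add_one L⟩ hux₀
  obtain ⟨W, hW, hW0, hin, hmid, ⟨C, hC⟩, hcarl⟩ := h.exists_weight Module.finrank_pos hδ hδ1
    (by positivity : 0 ≤ 2 * r) (by linarith : 2 * r < 3 * r) (by linarith : 3 * r ≤ L + 1)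
    ((Q * N + 1) / ∫ x in annulus E (3 * r) (L + 1), u x ^ 2)
  refine ⟨Real.exp (L + 1), Real.one_lt_exp_iff.2 (by linarith), Q * (C * Cₒ), fun R hR => ?_⟩
  have hR1 : 1 < R := (Real.one_lt_exp_iff.2 (by linarith)).trans_le hR
  have hR0 : 0 < R := one_pos.trans hR1
  have hρ : L + 1 ≤ Real.log R := (Real.le_log_iff_exp_le hR0).2 hR
  have hC0 : 0 ≤ C := by simpa using (hW0 0).trans (hC 0 le_rfl)
  obtain ⟨F, hF⟩ := hD r (Real.log R + 3 * r) (by linarith)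
  have hkey := h.mul_integral_sq_le_of_weight hu.contDiffOn hr hρ (by linarith) hF hW hW0
    (by positivity) (hcarl u hu) (fun t ht => hin t ⟨hr.le.trans ht.1, ht.2⟩) hmid
    (B := C * Real.exp ((δ - 1) * Real.log R)) fun t ht => (hC t (by linarith [ht.1])).trans <| by
      gcongr C * Real.exp ?_
      exact mul_le_mul_of_nonpos_left (by linarith [ht.1]) (by linarith)
  rw [div_mul_cancel₀ _ hI.ne', mul_add, add_le_add_iff_left] at hkey
  refine rpow_le_of_one_le_mul_exp hR0 (hkey.trans ?_)
  calc
    _ ≤ Q * (C * Real.exp ((δ - 1) * Real.log R) *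
        (Cₒ * ∫ x in ball (0 : E) (2 * R) \ ball 0 R, u x ^ 2)) := by
      gcongr
      exact hCₒ R hR1
    _ = _ := by ring

end IsDecayingElliptic

end Growth

section Matrix

variable {n : ℕ} {A : En n → Matrix (Fin n) (Fin n) ℝ} {lam α C : ℝ} {u : En n → ℝ}

/-- The field of operators on Euclidean space represented by a field of coefficient matrices. -/
def coeffOperator (A : En n → Matrix (Fin n) (Fin n) ℝ) (x : En n) : En n →L[ℝ] En n :=
  Matrix.toEuclideanCLM (n := Fin n) (𝕜 := ℝ) (A x)

/-- The operator `x ↦ xⱼ eᵢ`, where `p = (i, j)`. -/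
def unitOperator (p : Fin n × Fin n) : En n →L[ℝ] En n :=
  Matrix.toEuclideanCLM (n := Fin n) (𝕜 := ℝ) (Matrix.single p.1 p.2 1)

lemma inner_coeffOperator (A : En n → Matrix (Fin n) (Fin n) ℝ) (x ξ η : En n) :
    ⟪coeffOperator A x ξ, η⟫ = quadForm (A x) ξ η := by
  rw [PiLp.inner_apply]
  exact Finset.sum_congr rfl fun i _ => real_inner_comm _ _

lemma toEuclideanCLM_eq_sum (M : Matrix (Fin n) (Fin n) ℝ) :
    Matrix.toEuclideanCLM (n := Fin n) (𝕜 := ℝ) M =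
      ∑ p : Fin n × Fin n, M p.1 p.2 • unitOperator p := by
  conv_lhs => rw [Matrix.matrix_eq_sum_single M]
  simp only [unitOperator, ← map_smul, ← map_sum, Fintype.sum_prod_type, Matrix.smul_single,
    smul_eq_mul, mul_one]

lemma coeffOperator_eq_id_add_sum (A : En n → Matrix (Fin n) (Fin n) ℝ) :
    coeffOperator A = fun x => ContinuousLinearMap.id ℝ (En n) +
      ∑ p : Fin n × Fin n, (A x - 1) p.1 p.2 • unitOperator p := by
  funext x
  rw [← toEuclideanCLM_eq_sum, map_sub, map_one, ContinuousLinearMap.one_def]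
  exact (add_sub_cancel _ _).symm

lemma norm_fderiv_const_add_sum_smul_le {ι V W : Type*} [Fintype ι] [NormedAddCommGroup V]
    [NormedSpace ℝ V] [NormedAddCommGroup W] [NormedSpace ℝ W] {b : ι → V → ℝ} (e : ι → W) (w : W)
    {x : V} (hb : ∀ i, DifferentiableAt ℝ (b i) x) :
    ‖fderiv ℝ (fun y => w + ∑ i, b i y • e i) x‖ ≤ ∑ i, ‖fderiv ℝ (b i) x‖ * ‖e i‖ := by
  have : HasFDerivAt (fun y => w + ∑ i, b i y • e i) _ x :=
    .const_add _ (.fun_sum fun i _ => (hb i).hasFDerivAt.smul_const (e i))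
  rw [this.fderiv]
  exact (norm_sum_le _ _).trans_eq
    (Finset.sum_congr rfl fun i _ => ContinuousLinearMap.norm_smulRight_apply _ _)

lemma coeffOperator_symm {x : En n} (hA : (A x).IsSymm) (ξ η : En n) :
    ⟪coeffOperator A x ξ, η⟫ = ⟪ξ, coeffOperator A x η⟫ := by
  rw [real_inner_comm _ ξ, inner_coeffOperator, inner_coeffOperator]
  change (A x).mulVec ξ.ofLp ⬝ᵥ η.ofLp = (A x).mulVec η.ofLp ⬝ᵥ ξ.ofLp
  rw [dotProduct_comm, Matrix.dotProduct_mulVec, ← Matrix.mulVec_transpose, hA]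

lemma exists_isDecayingElliptic_coeffOperator (hlam : 0 < lam) (hα : 0 < α) (hC : 0 ≤ C)
    (hA : EllipticDecay A lam α C) : ∃ K, IsDecayingElliptic (coeffOperator A) lam α K := by
  obtain ⟨hsymm, hsmooth, hell, hdecay⟩ := hA
  have hB (p : Fin n × Fin n) :
      ContDiffOn ℝ 1 (fun x => (A x - 1) p.1 p.2) (exteriorDomain (En n)) :=
    (hsmooth p.1 p.2).sub contDiffOn_const
  refine ⟨(∑ p : Fin n × Fin n, ‖unitOperator p‖) * C, hlam, hα, by positivity,
    fun x hx => coeffOperator_symm (hsymm x hx), ?_, fun x hx ξ => ?_, fun x hx => ?_,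
    fun x hx => ?_⟩
  · rw [coeffOperator_eq_id_add_sum]
    exact contDiffOn_const.add (ContDiffOn.sum fun p _ => (hB p).smul contDiffOn_const)
  · rw [inner_coeffOperator]
    exact (hell x hx ξ).1
  · rw [coeffOperator_eq_id_add_sum, add_sub_cancel_left, mul_assoc, Finset.sum_mul]
    refine norm_sum_le_of_le _ fun p _ => ?_
    rw [norm_smul, mul_comm, Real.norm_eq_abs]
    gcongr
    exact (le_add_of_nonneg_left (by positivity)).trans (hdecay x hx p.1 p.2)
  · have hfderiv := norm_fderiv_const_add_sum_smul_le unitOperator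
      (ContinuousLinearMap.id ℝ (En n)) fun p =>
        ((hB p).contDiffAt (isOpen_exteriorDomain.mem_nhds hx)).differentiableAt one_ne_zero
    rw [← coeffOperator_eq_id_add_sum] at hfderiv
    refine (mul_le_mul_of_nonneg_left hfderiv (norm_nonneg x)).trans ?_
    rw [Finset.mul_sum, mul_assoc, Finset.sum_mul]
    refine Finset.sum_le_sum fun p _ => ?_
    rw [← norm_gradient, ← mul_assoc, mul_comm]
    refine mul_le_mul_of_nonneg_left ?_ (norm_nonneg _)
    exact (le_add_of_nonneg_right (abs_nonneg _)).trans (hdecay x hx p.1 p.2)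

lemma isWeakSolution_coeffOperator (hu : WeakSol A u) :
    IsWeakSolution (coeffOperator A) (exteriorDomain (En n)) u := by
  refine ⟨hu.1, fun φ hφ hc hsupp => ?_⟩
  simp_rw [inner_coeffOperator]
  exact hu.2 φ hφ hc hsupp

end Matrix

end ExteriorElliptic

open ExteriorElliptic

theorem annular_lower_bound_general {E : Type*} [NormedAddCommGroup E] [InnerProductSpace ℝ E]
    [FiniteDimensional ℝ E] [MeasurableSpace E] [BorelSpace E] {A : E → E →L[ℝ] E} {u : E → ℝ}
    {lam α K δ : ℝ} (hA : IsDecayingElliptic A lam α K)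
    (hu : IsWeakSolution A (exteriorDomain E) u) (hne : ∃ x ∈ exteriorDomain E, u x ≠ 0)
    (hδ : 0 < δ) :
    ∃ Rbar > 1, ∀ R ≥ Rbar, R ^ (1 - δ) ≤ ∫ x in ball (0 : E) (2 * R) \ ball 0 R, u x ^ 2 := by
  set η := min δ 1 / 2
  have hηδ : η < δ := (half_lt_self (by positivity)).trans_le (min_le_left δ 1)
  have hη1 : η ≤ 1 := (half_le_self (by positivity)).trans (min_le_right δ 1)
  obtain ⟨R₀, hR₀, C, hC⟩ :=
    hA.exists_rpow_le_mul_integral hu hne (by positivity : 0 < η) hη1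
  obtain ⟨R₁, hR₁⟩ := eventually_atTop.1
    ((tendsto_rpow_atTop (sub_pos.2 hηδ)).eventually_ge_atTop C)
  refine ⟨max R₀ R₁, hR₀.trans_le (le_max_left _ _), fun R hR => ?_⟩
  have hR0 : 0 < R := one_pos.trans (hR₀.trans_le ((le_max_left _ _).trans hR))
  have hI : 0 ≤ ∫ x in ball (0 : E) (2 * R) \ ball 0 R, u x ^ 2 :=
    integral_nonneg fun x => sq_nonneg (u x)
  refine le_of_mul_le_mul_left ?_ (Real.rpow_pos_of_pos hR0 (δ - η))
  calc
    R ^ (δ - η) * R ^ (1 - δ) = R ^ (1 - η) := by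
      rw [← Real.rpow_add hR0, add_comm, sub_add_sub_cancel]
    _ ≤ C * ∫ x in ball (0 : E) (2 * R) \ ball 0 R, u x ^ 2 :=
      hC R ((le_max_left _ _).trans hR)
    _ ≤ R ^ (δ - η) * ∫ x in ball (0 : E) (2 * R) \ ball 0 R, u x ^ 2 :=
      mul_le_mul_of_nonneg_right
        (hR₁ R ((le_max_right _ _).trans hR)) hI

/-- If `u ∈ C¹(Ω)` is a nontrivial weak solution of `-div(A∇u) = u`
in `Ω`, then for every `δ ∈ (0,1)` there exist `R̄ > 1` and `C₁ > 0` such that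
`∫_{B_{2R} \ B_R} u² ≥ C₁ R^{1-δ}` for all `R ≥ R̄`. -/
theorem annular_lower_bound
    (n : ℕ) (hn : 2 ≤ n)
    (A : En n → Matrix (Fin n) (Fin n) ℝ) (lam α C : ℝ)
    (hlam0 : 0 < lam) (hlam1 : lam < 1) (hα : 0 < α) (hC : 0 < C)
    (hA : EllipticDecay A lam α C)
    (u : En n → ℝ) (hu : WeakSol A u)
    (hne : ∃ x ∈ OmegaExt n, u x ≠ 0) :
    ∀ δ : ℝ, δ ∈ Set.Ioo (0 : ℝ) 1 →
      ∃ Rbar > (1 : ℝ), ∃ C₁ > (0 : ℝ), ∀ R ≥ Rbar,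
        C₁ * R ^ (1 - δ) ≤ ∫ x in ball (0 : En n) (2 * R) \ ball (0 : En n) R, (u x) ^ 2 := by
  intro δ hδ
  obtain ⟨K, hK⟩ := exists_isDecayingElliptic_coeffOperator hlam0 hα hC.le hA
  obtain ⟨Rbar, hRbar, hbound⟩ :=
    annular_lower_bound_general hK (isWeakSolution_coeffOperator hu) hne hδ.1
  exact ⟨Rbar, hRbar, 1, one_pos, by simpa only [one_mul] using hbound⟩

end
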